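/- There exists a decidable small theory T in the language of graphs, all of whose types are decidable, such that the prime model of T is not decidable; consequently, the saturated model of T is not decidable either. -/

import Mathlib

open FirstOrder FirstOrder.Language

namespace PaperAL

variable {L : FirstOrder.Language.{0, 0}}

/-- Bundled countable-universe models of `T`. -/
abbrev Mdl (T : L.Theory) := Theory.ModelType.{0, 0, 0} T

/-- The complete type of a finite tuple `a` in a structure `M`:
the set of formulas in `n` free variables realized by `a`. -/
def typeOf (M : Type) [L.Structure M] {n : ℕ} (a : Fin n → M) :
    Set (L.Formula (Fin n)) :=
  {φ : L.Formula (Fin n) | φ.Realize a}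

/-- `p` is an (n-)type of the theory `T`: i.e. `p` is realized in some model of `T`. -/
def IsTypeOf (T : L.Theory) {n : ℕ} (p : Set (L.Formula (Fin n))) : Prop :=
  ∃ M : Mdl T, Countable M ∧ ∃ a : Fin n → M, typeOf M a = p

/-- `M` realizes the type `p`. -/
def Realizes (M : Type) [L.Structure M] {n : ℕ} (p : Set (L.Formula (Fin n))) : Prop :=
  ∃ a : Fin n → M, typeOf M a = p

/-- A theory is small if, for each `n`, its set of `n`-types is countable. -/
def IsSmall (T : L.Theory) : Prop :=
  ∀ n : ℕ, {p : Set (L.Formula (Fin n)) | IsTypeOf T p}.Countable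

/-- Two tuples (possibly in different structures) have the same complete type. -/
def SameType {M N : Type} [L.Structure M] [L.Structure N] {n : ℕ}
    (a : Fin n → M) (b : Fin n → N) : Prop :=
  ∀ φ : L.Formula (Fin n), φ.Realize a ↔ φ.Realize b

/-- `M` with the distinguished tuple `a` is a prime model of `Th(M, a)`:
it elementarily embeds, respecting the tuple, into every model of `T` with a
tuple of the same complete type. -/
def IsPrimeOver (T : L.Theory) (M : Type) [L.Structure M] {n : ℕ} (a : Fin n → M) : Prop :=
  M ⊨ T ∧ ∀ N : Mdl T, Countable N → ∀ b : Fin n → N, SameType (L := L) a b →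
    ∃ f : M ↪ₑ[L] N, f ∘ a = b

/-- `M` is a `p`-prime model of `T`. -/
def IsPPrime (T : L.Theory) {n : ℕ} (p : Set (L.Formula (Fin n)))
    (M : Type) [L.Structure M] : Prop :=
  ∃ a : Fin n → M, typeOf M a = p ∧ IsPrimeOver T M a

/-- `M` is an almost prime model of `T`, i.e. `p`-prime for some type `p`. -/
def AlmostPrime (T : L.Theory) (M : Type) [L.Structure M] : Prop :=
  ∃ (n : ℕ) (a : Fin n → M), IsPrimeOver T M a

/-- `M` is a prime model of `T`. -/
def IsPrimeModel (T : L.Theory) (M : Type) [L.Structure M] : Prop :=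
  M ⊨ T ∧ ∀ N : Mdl T, Countable N → Nonempty (M ↪ₑ[L] N)

/-- `S` is an elementary chain of elementary substructures of `M` whose union is `M`. -/
def IsElemChainUnion (M : Type) [L.Structure M]
    (S : ℕ → L.ElementarySubstructure M) : Prop :=
  Monotone S ∧ ∀ x : M, ∃ i, x ∈ S i

/-- `M` is a limit model of `T`: the union of an elementary chain of pairwise isomorphic
almost prime models, but not itself almost prime. -/
def IsLimit (T : L.Theory) (M : Type) [L.Structure M] : Prop :=
  (∃ S : ℕ → L.ElementarySubstructure M, IsElemChainUnion M S ∧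
      (∀ i, AlmostPrime T (S i)) ∧ ∀ i j, Nonempty ((S i) ≃[L] (S j))) ∧
    ¬ AlmostPrime T M

/-- `M` is a `p`-limit model of `T`: the union of an elementary chain of `p`-prime models,
but not itself `p`-prime. -/
def IsPLimit (T : L.Theory) {n : ℕ} (p : Set (L.Formula (Fin n)))
    (M : Type) [L.Structure M] : Prop :=
  (∃ S : ℕ → L.ElementarySubstructure M, IsElemChainUnion M S ∧
      ∀ i, IsPPrime T p (S i)) ∧
    ¬ IsPPrime T p M

/-- `M` is a weakly limit model of `T`: the union of an elementary chain of almost prime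
models. -/
def IsWeaklyLimit (T : L.Theory) (M : Type) [L.Structure M] : Prop :=
  ∃ S : ℕ → L.ElementarySubstructure M, IsElemChainUnion M S ∧ ∀ i, AlmostPrime T (S i)

/-- `M` is a (countably) saturated model of `T`: every type over a finite tuple of `M`
consistent with the theory of that tuple is realized in `M`. -/
def IsSaturatedModel (T : L.Theory) (M : Type) [L.Structure M] : Prop :=
  M ⊨ T ∧ ∀ (n : ℕ) (a : Fin n → M) (N : Mdl T), Countable N →
    ∀ (b : Fin n → N) (c : N), SameType (L := L) a b →
      ∃ d : M, SameType (L := L) (Fin.snoc a d) (Fin.snoc b c)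

/-- `T` is an AL theory: a complete small theory each of whose countable non-saturated
models is either almost prime or limit. -/
def IsALTheory (T : L.Theory) : Prop :=
  T.IsComplete ∧ IsSmall T ∧
    ∀ M : Mdl T, Countable M → ¬ IsSaturatedModel T M →
      AlmostPrime T M ∨ IsLimit T M

/-- A type `p` of `T` is principal if it is generated by a single formula. -/
def IsPrincipalType (T : L.Theory) {n : ℕ} (p : Set (L.Formula (Fin n))) : Prop :=
  ∃ φ ∈ p, ∀ M : Mdl T, Countable M → ∀ a : Fin n → M,
    φ.Realize a → typeOf M a = p

/-- A type `p` of `T` is powerful if every model of `T` realizing `p` realizes every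
type of `T`. -/
def IsPowerfulType (T : L.Theory) {n : ℕ} (p : Set (L.Formula (Fin n))) : Prop :=
  ∀ M : Mdl T, Countable M → Realizes M p →
    ∀ (m : ℕ) (q : Set (L.Formula (Fin m))), IsTypeOf T q → Realizes M q

section Computability

variable [∀ k, Encodable (L.Functions k)] [∀ k, Encodable (L.Relations k)]

/-- A canonical injective Gödel numbering of first-order formulas over an
encodable language. -/
def fmlCode {α : Type} [Encodable α] {n : ℕ} (φ : L.BoundedFormula α n) : ℕ :=
  Encodable.encode φ.listEncode

/-- A structure is decidable if its elementary diagram is computable: under some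
surjective enumeration of its universe, the set of codes of true first-order formulas
with parameters is computable. -/
def DecidableModel (M : Type) [L.Structure M] : Prop :=
  ∃ g : ℕ → M, Function.Surjective g ∧
    ComputablePred (fun c : ℕ => ∃ φ : L.Formula ℕ, fmlCode φ = c ∧ φ.Realize g)

/-- A structure is computable if its atomic diagram is computable. -/
def ComputableModel (M : Type) [L.Structure M] : Prop :=
  ∃ g : ℕ → M, Function.Surjective g ∧
    ComputablePred (fun c : ℕ =>
      ∃ φ : L.Formula ℕ, φ.IsAtomic ∧ fmlCode φ = c ∧ φ.Realize g)

/-- A theory is decidable if it is a computable set of sentences. -/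
def DecidableTheory (T : L.Theory) : Prop :=
  ComputablePred (fun c : ℕ => ∃ φ : L.Sentence, fmlCode φ = c ∧ φ ∈ T)

/-- A type is decidable if it is a computable set of formulas. -/
def DecidableType {n : ℕ} (p : Set (L.Formula (Fin n))) : Prop :=
  ComputablePred (fun c : ℕ => ∃ φ : L.Formula (Fin n), fmlCode φ = c ∧ φ ∈ p)

end Computability


/-- `DecidableModel` with the encodability data of the language given explicitly. -/
def DecidableModel' (L : FirstOrder.Language.{0, 0})
    (i1 : ∀ k, Encodable (L.Functions k)) (i2 : ∀ k, Encodable (L.Relations k))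
    (M : Type) (iM : L.Structure M) : Prop :=
  @DecidableModel L i1 i2 M iM

/-- `ComputableModel` with the encodability data of the language given explicitly. -/
def ComputableModel' (L : FirstOrder.Language.{0, 0})
    (i1 : ∀ k, Encodable (L.Functions k)) (i2 : ∀ k, Encodable (L.Relations k))
    (M : Type) (iM : L.Structure M) : Prop :=
  @ComputableModel L i1 i2 M iM

/-- `T` has exactly one countable model up to isomorphism. -/
def Aleph0Categorical {L : FirstOrder.Language.{0, 0}} (T : L.Theory) : Prop :=
  (∃ M : Mdl T, Countable M) ∧
    ∀ M N : Mdl T, Countable M → Countable N → Nonempty (M ≃[L] N)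

/-- `T` has exactly one model of cardinality `ℵ₁` up to isomorphism. -/
def Aleph1Categorical {L : FirstOrder.Language.{0, 0}} (T : L.Theory) : Prop :=
  (∃ M : Mdl T, Cardinal.mk M = Cardinal.aleph 1) ∧
    ∀ M N : Mdl T, Cardinal.mk M = Cardinal.aleph 1 → Cardinal.mk N = Cardinal.aleph 1 →
      Nonempty (M ≃[L] N)


instance instGraphRelEnc (k : ℕ) : Encodable (FirstOrder.Language.graph.Relations k) :=
  ⟨fun _ => 0,
   fun _ =>
     match k with
     | 2 => some FirstOrder.Language.graphRel.adj
     | 0 => none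
     | 1 => none
     | (_ + 3) => none,
   fun r => by cases r; rfl⟩

instance instGraphFunEnc (k : ℕ) : Encodable (FirstOrder.Language.graph.Functions k) :=
  show Encodable Empty from inferInstance

/-!
A binary sequence is coded in a graph by a hub: a node whose `2n`-th spoke has a number of leaves
that determines the `n`-th term, so that a hub of a decidable graph gives a computable sequence.
Joining infinitely many hubs to a root yields a tree of height three. By a back-and-forth argument,
its theory depends only on the binary tree of the initial segments of the coded sequences, and
formulas of bounded rank are decided in finite approximations. Hence all paths of a binary tree, the
hubs also having spokes with infinitely many leaves, give the same theory as the isolated paths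
alone if these are dense. The first of these graphs realizes all types, because a limit of hubs
along an ultrafilter codes a path and a limit of ever larger spokes is a spoke with infinitely many
leaves. The prime model embeds elementarily in the second.

The binary tree is obtained by diagonalization. It splits at all nodes `0ᵉ`, and along a sequence
that begins with `0ᵉ1` only when the values computed so far by the `e`-th partial computable
function agree with the sequence and a further value is computed. A path that splits infinitely
often is thus computed by that function, so there are only countably many paths, all computable. Yet
no computable function `F` sends each `e` to an isolated path beginning with `0ᵉ1`: if `e` is an
index of `F`, then `F e` splits infinitely often. In a decidable prime model, one could select such
paths by searching for hubs. A decidable saturated model would yield a computable enumeration of all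
paths, and with it such an `F`: let `F e` begin with `0ᵉ1` and leave the enumerated sequences one
after another, as often as it comes to a splitting node; were it to do so infinitely often, it would
be a path that is missing from the enumeration.
-/

section BinaryTree

/-- The initial segment of length `n` of an infinite binary sequence. -/
def initSeg (p : ℕ → Bool) (n : ℕ) : List Bool := (List.range n).map p

theorem length_initSeg (p : ℕ → Bool) (n : ℕ) : (initSeg p n).length = n := by simp [initSeg]

theorem initSeg_succ (p : ℕ → Bool) (n : ℕ) : initSeg p (n + 1) = initSeg p n ++ [p n] := by
  simp [initSeg, List.range_succ]

theorem getD_initSeg (p : ℕ → Bool) {n k : ℕ} (h : k < n) : (initSeg p n).getD k false = p k := by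
  simp [initSeg, List.getD, h]

theorem initSeg_eq_initSeg_iff {p p' : ℕ → Bool} {n : ℕ} :
    initSeg p n = initSeg p' n ↔ ∀ k < n, p k = p' k := by
  simp [initSeg]

/-- A predicate `S` on binary strings encodes the binary tree in which a node `σ` always has the
successor `σ0`, and has the successor `σ1` exactly when `S σ`. These are its infinite branches. -/
def IsPath (S : List Bool → Prop) (p : ℕ → Bool) : Prop := ∀ n, p n = true → S (initSeg p n)

/-- The isolated branches of the tree encoded by `S`, i.e. those passing through only finitely many
splitting nodes. -/
def IsIsolatedPath (S : List Bool → Prop) (p : ℕ → Bool) : Prop :=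
  IsPath S p ∧ ∃ N, ∀ n ≥ N, ¬ S (initSeg p n)

/-- The sequence that follows `p` below `n`, takes the value `b` at `n`, and is zero afterwards. -/
def branchOff (p : ℕ → Bool) (n : ℕ) (b : Bool) : ℕ → Bool := fun k =>
  if k < n then p k else if k = n then b else false

theorem branchOff_of_lt (p : ℕ → Bool) {n k : ℕ} (b : Bool) (h : k < n) :
    branchOff p n b k = p k := if_pos h

theorem branchOff_self (p : ℕ → Bool) (n : ℕ) (b : Bool) : branchOff p n b n = b := by
  simp [branchOff]

theorem initSeg_branchOff (p : ℕ → Bool) {m n : ℕ} (b : Bool) (h : m ≤ n) :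
    initSeg (branchOff p n b) m = initSeg p m :=
  initSeg_eq_initSeg_iff.2 fun _ hk => branchOff_of_lt p b (hk.trans_le h)

variable {S : List Bool → Prop} {p : ℕ → Bool}

theorem IsPath.zero (S : List Bool → Prop) : IsPath S fun _ => false := by simp [IsPath]

theorem isPath_branchOff (hp : IsPath S p) {n : ℕ} {b : Bool} (h : b = true → S (initSeg p n)) :
    IsPath S (branchOff p n b) := by
  intro k hk
  rcases lt_trichotomy k n with hkn | rfl | hkn
  · rw [initSeg_branchOff p b hkn.le]
    exact hp k (branchOff_of_lt p b hkn ▸ hk)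
  · rw [initSeg_branchOff p b le_rfl]
    exact h (branchOff_self p k b ▸ hk)
  · simp [branchOff, hkn.not_gt, hkn.ne'] at hk

theorem IsIsolatedPath.computable (hp : IsIsolatedPath S p) : Computable p := by
  obtain ⟨hpath, N, hN⟩ := hp
  refine ((Primrec.list_getD false).comp (Primrec.const (initSeg p N)) Primrec.id).to_comp.of_eq
    fun n => ?_
  rcases lt_or_ge n N with hn | hn
  · exact getD_initSeg p hn
  · rw [id, List.getD_eq_default _ _ ((length_initSeg p N).trans_le hn), eq_comm,
      Bool.eq_false_iff]
    exact fun h => hN n hn (hpath n h)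

open Classical in
/-- The list of all nodes of length `q` of the binary tree encoded by `S`. -/
noncomputable def treeLevel (S : List Bool → Prop) : ℕ → List (List Bool)
  | 0 => [List.nil]
  | q + 1 => (treeLevel S q).flatMap fun σ =>
      (if S σ then [false, true] else [false]).map fun b => σ ++ [b]

theorem mem_treeLevel {q : ℕ} {σ : List Bool} :
    σ ∈ treeLevel S q ↔ ∃ p, IsPath S p ∧ initSeg p q = σ := by
  induction q generalizing σ with
  | zero =>
    simp only [treeLevel, List.mem_singleton, initSeg, List.range_zero, List.map_nil]
    exact ⟨fun h => ⟨_, IsPath.zero S, h.symm⟩, fun ⟨_, _, h⟩ => h.symm⟩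
  | succ q ih =>
    have mem_succ : σ ∈ treeLevel S (q + 1) ↔
        ∃ τ ∈ treeLevel S q, ∃ b : Bool, (b = true → S τ) ∧ τ ++ [b] = σ := by
      simp only [treeLevel, List.mem_flatMap]
      refine exists_congr fun τ => and_congr_right fun _ => ?_
      by_cases hτ : S τ <;> simp [hτ, eq_comm]
    rw [mem_succ]
    constructor
    · rintro ⟨τ, hτ, b, hb, rfl⟩
      obtain ⟨p, hp, rfl⟩ := ih.1 hτ
      exact ⟨_, isPath_branchOff hp hb, by
        rw [initSeg_succ, initSeg_branchOff p b le_rfl, branchOff_self]⟩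
    · rintro ⟨p, hp, rfl⟩
      exact ⟨_, ih.2 ⟨p, hp, rfl⟩, p q, hp q, (initSeg_succ p q).symm⟩

theorem primrec_treeLevel (hS : PrimrecPred S) : Primrec (treeLevel S) := by
  classical
  have step : Primrec₂ fun (_ : ℕ) (l : List (List Bool)) => l.flatMap fun σ =>
      (if S σ then [false, true] else [false]).map fun b => σ ++ [b] :=
    Primrec.list_flatMap Primrec.snd (Primrec.list_map
      (Primrec.ite (hS.comp Primrec.snd) (Primrec.const _) (Primrec.const _))
      (Primrec.list_concat.comp (Primrec.snd.comp Primrec.fst) Primrec.snd))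
  refine (Primrec.nat_rec₁ [List.nil] step).of_eq fun n => ?_
  induction n with
  | zero => rfl
  | succ n ih => simp only [treeLevel, ← ih]

/-- The sequence `p` begins with `0ᵉ1`. -/
def HasFirstOne (p : ℕ → Bool) (e : ℕ) : Prop := p e = true ∧ ∀ k < e, p k = false

theorem exists_hasFirstOne {n : ℕ} (h : p n = true) : ∃ e ≤ n, HasFirstOne p e := by
  have hex : ∃ n, p n = true := ⟨n, h⟩
  exact ⟨Nat.find hex, Nat.find_min' hex h, Nat.find_spec hex, fun k hk =>
    Bool.eq_false_iff.2 (Nat.find_min hex hk)⟩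

theorem HasFirstOne.idxOf_initSeg {e n : ℕ} (hp : HasFirstOne p e) (hn : e < n) :
    (initSeg p n).idxOf true = e := by
  rw [List.idxOf, List.findIdx_eq (by rwa [length_initSeg])]
  simpa [initSeg, HasFirstOne] using hp

theorem hasFirstOne_branchOff {e n : ℕ} (hp : HasFirstOne p e) (hn : e < n) (b : Bool) :
    HasFirstOne (branchOff p n b) e := by
  refine ⟨(branchOff_of_lt p b hn).trans hp.1, fun k hk => ?_⟩
  exact (branchOff_of_lt p b (hk.trans hn)).trans (hp.2 k hk)

end BinaryTree

section PrimrecRel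

variable {α : Type} [Primcodable α] {R : ℕ → α → Prop}

theorem primrecRel_exists_lt (hR : PrimrecRel R) :
    PrimrecRel fun (n : ℕ) (a : α) => ∃ k < n, R k a :=
  (hR.exists_mem_list.comp (Primrec.list_range.comp Primrec.fst) Primrec.snd).of_eq (by simp)

theorem primrecRel_forall_lt (hR : PrimrecRel R) :
    PrimrecRel fun (n : ℕ) (a : α) => ∀ k < n, R k a :=
  (hR.forall_mem_list.comp (Primrec.list_range.comp Primrec.fst) Primrec.snd).of_eq (by simp)

theorem primrecRel_and {β γ : Type} [Primcodable β] [Primcodable γ] {R R' : β → γ → Prop}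
    (hR : PrimrecRel R) (hR' : PrimrecRel R') : PrimrecRel fun b c => R b c ∧ R' b c :=
  PrimrecPred.and hR hR'

end PrimrecRel

section DiagonalTree

/-- The result of `s` steps of the computation of the `e`-th partial computable function of two
variables at `(e, n)`. -/
def stage (e n s : ℕ) : Option ℕ :=
  Nat.Partrec.Code.evaln s (Denumerable.ofNat Nat.Partrec.Code e) (Nat.pair e n)

theorem stage_mono {e n s s' x : ℕ} (h : s ≤ s') (hx : stage e n s = some x) :
    stage e n s' = some x := Nat.Partrec.Code.evaln_mono h hx

theorem stage_eq_none_of_le {e n s s' : ℕ} (h : s ≤ s') (hs' : stage e n s' = none) :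
    stage e n s = none :=
  Option.eq_none_iff_forall_ne_some.2 fun x hx => by simp [stage_mono h hx] at hs'

theorem stage_unique {e n s s' x y : ℕ} (h : stage e n s = some x) (h' : stage e n s' = some y) :
    x = y :=
  Option.some_injective _ <|
    (stage_mono (le_max_left s s') h).symm.trans (stage_mono (le_max_right s s') h')

theorem stage_eq_none_of_le_arg {e n s : ℕ} (h : s ≤ n) : stage e n s = none :=
  Option.eq_none_iff_forall_ne_some.2 fun _ hx =>
    ((Nat.right_le_pair e n).trans_lt (Nat.Partrec.Code.evaln_bound hx)).not_ge h

theorem primrec_stage {α : Type} [Primcodable α] {f g h : α → ℕ} (hf : Primrec f) (hg : Primrec g)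
    (hh : Primrec h) : Primrec fun a => stage (f a) (g a) (h a) :=
  Nat.Partrec.Code.primrec_evaln.comp
    ((hh.pair ((Primrec.ofNat _).comp hf)).pair (Primrec₂.natPair.comp hf hg))

/-- `stage e` computes the sequence `p`, bits being identified with numbers. -/
def Computes (e : ℕ) (p : ℕ → Bool) : Prop := ∀ n, ∃ s, stage e n s = some (Encodable.encode (p n))

theorem Computes.computable {e : ℕ} {p : ℕ → Bool} (h : Computes e p) : Computable p := by
  have eval_eq (n : ℕ) : (Denumerable.ofNat Nat.Partrec.Code e).eval (Nat.pair e n) =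
      Part.some (Encodable.encode (p n)) := by
    rw [Part.eq_some_iff, Nat.Partrec.Code.evaln_complete]
    exact h n
  have encode_computable : Computable fun n => Encodable.encode (p n) :=
    (Nat.Partrec.Code.eval_part.comp (Computable.const _)
      (Primrec₂.natPair.comp (Primrec.const e) Primrec.id).to_comp).of_eq eval_eq
  exact Computable.option_some_iff.1 <|
    (Computable.decode.comp encode_computable).of_eq fun n => Encodable.encodek (p n)

theorem Computes.unique {e : ℕ} {p p' : ℕ → Bool} (h : Computes e p) (h' : Computes e p') :
    p = p' := by
  funext n
  obtain ⟨s, hs⟩ := h n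
  obtain ⟨s', hs'⟩ := h' n
  exact Encodable.encode_injective (stage_unique hs hs')

theorem exists_computes {F : ℕ → ℕ → Bool} (hF : Computable₂ F) : ∃ e, Computes e (F e) := by
  have hcomp : Computable fun n : ℕ => Encodable.encode (F n.unpair.1 n.unpair.2) :=
    Computable.encode.comp (hF.comp (Computable.fst.comp Computable.unpair)
      (Computable.snd.comp Computable.unpair))
  obtain ⟨c, hc⟩ := Nat.Partrec.Code.exists_code.1 (Partrec.nat_iff.1 hcomp)
  refine ⟨Encodable.encode c, fun n => Nat.Partrec.Code.evaln_complete.1 ?_⟩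
  simp [Denumerable.ofNat_encode, hc]

/-- The splitting nodes of the diagonal tree: all strings `0ᵉ`, and those strings `σ` beginning with
`0ᵉ1` such that at step `|σ| + 1` the length of the initial segment of values computed by `stage e`
grows, the values known at step `|σ|` agreeing with `σ`. -/
def Splits (σ : List Bool) : Prop :=
  σ.idxOf true = σ.length ∨ ∃ k < σ.length + 1,
    (∀ i < k, stage (σ.idxOf true) i σ.length = some (Encodable.encode (σ.getD i false))) ∧
    stage (σ.idxOf true) k σ.length = none ∧ stage (σ.idxOf true) k (σ.length + 1) ≠ none

theorem primrecPred_splits : PrimrecPred Splits := by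
  have first_one : Primrec fun σ : List Bool => σ.idxOf true :=
    Primrec.list_idxOf.comp (Primrec.const true) Primrec.id
  have length := @Primrec.list_length Bool _
  have agree : PrimrecRel fun (i : ℕ) (σ : List Bool) =>
      stage (σ.idxOf true) i σ.length = some (Encodable.encode (σ.getD i false)) :=
    Primrec.eq.comp (primrec_stage (first_one.comp Primrec.snd) Primrec.fst
      (length.comp Primrec.snd)) (Primrec.option_some.comp (Primrec.encode.comp
      ((Primrec.list_getD false).comp Primrec.snd Primrec.fst)))
  have undefined {f : List Bool → ℕ} (hf : Primrec f) : PrimrecRel fun (k : ℕ) (σ : List Bool) =>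
      stage (σ.idxOf true) k (f σ) = none :=
    Primrec.eq.comp (primrec_stage (first_one.comp Primrec.snd) Primrec.fst (hf.comp Primrec.snd))
      (Primrec.const none)
  have grows := primrecRel_and (primrecRel_forall_lt agree)
    (primrecRel_and (undefined length) (undefined (Primrec.succ.comp length)).not)
  exact (Primrec.eq.comp first_one length).or
    ((primrecRel_exists_lt grows).comp (Primrec.succ.comp length) Primrec.id)

variable {p : ℕ → Bool}

theorem splits_initSeg_of_forall_eq_false {n : ℕ} (h : ∀ k < n, p k = false) :
    Splits (initSeg p n) := by
  left
  rw [List.idxOf_eq_length_iff]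
  simpa [initSeg] using h

theorem splits_initSeg_iff {e n : ℕ} (hp : HasFirstOne p e) (hn : e < n) :
    Splits (initSeg p n) ↔ ∃ k, (∀ i < k, stage e i n = some (Encodable.encode (p i))) ∧
      stage e k n = none ∧ stage e k (n + 1) ≠ none := by
  unfold Splits
  rw [hp.idxOf_initSeg hn, length_initSeg, or_iff_right hn.ne]
  refine exists_congr fun k => ⟨fun ⟨_, agree, h⟩ => ⟨fun i hi => ?_, h⟩,
    fun ⟨agree, h⟩ => ⟨?_, fun i hi => ?_, h⟩⟩
  · rw [agree i hi, getD_initSeg p (by omega)]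
  · exact not_le.1 fun hk => h.2 (stage_eq_none_of_le_arg hk)
  · have : k < n + 1 := not_le.1 fun hk => h.2 (stage_eq_none_of_le_arg hk)
    rw [agree i hi, getD_initSeg p (by omega)]

theorem computes_of_frequently_splits {e : ℕ} (hp : HasFirstOne p e)
    (h : ∀ N, ∃ n ≥ N, Splits (initSeg p n)) : Computes e p := by
  suffices ∀ m, ∃ s, ∀ i < m, stage e i s = some (Encodable.encode (p i)) from
    fun n => (this (n + 1)).imp fun s hs => hs n (Nat.lt_succ_self n)
  intro m
  induction m with
  | zero => exact ⟨0, by simp⟩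
  | succ m ih =>
    obtain ⟨s, hs⟩ := ih
    -- At the first split, the value at `m` may be the one newly computed, and hence unverified;
    -- it has been compared with `p` by the time of the second split.
    obtain ⟨n, hn, hsplit⟩ := h (max s (e + 1))
    obtain ⟨n', hn', hsplit'⟩ := h (n + 1)
    obtain ⟨k, agree, undef, new⟩ := (splits_initSeg_iff hp (by omega)).1 hsplit
    obtain ⟨k', agree', undef', -⟩ := (splits_initSeg_iff hp (by omega)).1 hsplit'
    have hmk : m ≤ k := not_lt.1 fun hk => by
      simp [stage_mono (le_of_max_le_left hn) (hs k hk)] at undef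
    have hkk' : k < k' := by
      by_contra! hle
      rcases hle.lt_or_eq with hlt | rfl
      · simp [stage_mono (by omega : n ≤ n') (agree k' hlt)] at undef'
      · exact new (stage_eq_none_of_le hn' undef')
    exact ⟨n', fun i hi => agree' i (by omega)⟩

theorem frequently_splits_of_computes {e : ℕ} (hp : HasFirstOne p e) (h : Computes e p) (N : ℕ) :
    ∃ n ≥ N, Splits (initSeg p n) := by
  -- `k` is the least argument undefined at step `M`; the split occurs when its value is computed.
  set M := N + e + 1
  have undefined_exists : ∃ k, stage e k M = none := ⟨M, stage_eq_none_of_le_arg le_rfl⟩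
  set k := Nat.find undefined_exists
  have defined_exists : ∃ s, stage e k s ≠ none := (h k).imp fun s hs => by simp [hs]
  have ne_zero : Nat.find defined_exists ≠ 0 := fun h =>
    Nat.find_spec defined_exists (by rw [h]; exact stage_eq_none_of_le_arg (Nat.zero_le k))
  obtain ⟨s, hs⟩ := Nat.exists_eq_succ_of_ne_zero ne_zero
  have before : stage e k s = none := not_not.1 (Nat.find_min defined_exists (by omega))
  have after : stage e k (s + 1) ≠ none := by simpa [hs] using Nat.find_spec defined_exists
  have hMs : M ≤ s := by
    by_contra! hlt
    exact after (stage_eq_none_of_le hlt (Nat.find_spec undefined_exists))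
  refine ⟨s, by omega, (splits_initSeg_iff hp (by omega)).2 ⟨k, fun i hi => ?_, before, after⟩⟩
  obtain ⟨y, hy⟩ := Option.ne_none_iff_exists'.1 (Nat.find_min undefined_exists hi)
  obtain ⟨t, ht⟩ := h i
  rw [stage_mono hMs hy, stage_unique hy ht]

theorem IsPath.computable (hp : IsPath Splits p) : Computable p := by
  by_cases hN : ∃ N, ∀ n ≥ N, ¬ Splits (initSeg p n)
  · exact IsIsolatedPath.computable ⟨hp, hN⟩
  push Not at hN
  by_cases hz : ∃ n, p n = true
  · obtain ⟨n, hn⟩ := hz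
    obtain ⟨e, -, he⟩ := exists_hasFirstOne hn
    exact (computes_of_frequently_splits he hN).computable
  · exact (Computable.const false).of_eq fun n => by simp_all

theorem countable_setOf_isPath : {p | IsPath Splits p}.Countable := by
  suffices Countable {p : ℕ → Bool // Computable p} from
    (Set.countable_coe_iff.1 this).mono fun _ hp => IsPath.computable hp
  let toNat (p : {p : ℕ → Bool // Computable p}) : {f : ℕ → ℕ // Computable f} :=
    ⟨fun n => Encodable.encode (p.1 n), Computable.encode.comp p.2⟩
  refine Function.Injective.countable (f := toNat) fun p p' h => Subtype.ext (funext fun n => ?_)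
  exact Encodable.encode_injective (congrFun (congrArg Subtype.val h) n)

theorem IsPath.exists_isIsolatedPath_of_hasFirstOne (hp : IsPath Splits p) {e q : ℕ}
    (he : HasFirstOne p e) (hq : e < q) :
    ∃ p', IsIsolatedPath Splits p' ∧ initSeg p' q = initSeg p q := by
  by_cases hN : ∃ N, ∀ n ≥ N, ¬ Splits (initSeg p n)
  · exact ⟨p, ⟨hp, hN⟩, rfl⟩
  -- `stage e` computes at most one of the two branches through a splitting node.
  push Not at hN
  obtain ⟨n, hn, hsplit⟩ := hN q
  refine ⟨branchOff p n (!p n), ⟨isPath_branchOff hp fun _ => hsplit, ?_⟩,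
    initSeg_branchOff p _ hn⟩
  by_contra! hcon
  have hfirst := hasFirstOne_branchOff he (hq.trans_le hn) (!p n)
  have heq := (computes_of_frequently_splits hfirst hcon).unique
    (computes_of_frequently_splits he hN)
  simpa [branchOff_self] using congrFun heq n

theorem IsPath.exists_isIsolatedPath (hp : IsPath Splits p) (q : ℕ) :
    ∃ p', IsIsolatedPath Splits p' ∧ initSeg p' q = initSeg p q := by
  by_cases hz : ∃ n < q, p n = true
  · obtain ⟨n, hn, hpn⟩ := hz
    obtain ⟨e, hen, he⟩ := exists_hasFirstOne hpn
    exact hp.exists_isIsolatedPath_of_hasFirstOne he (hen.trans_lt hn)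
  · replace hz : ∀ n < q, p n = false := by simpa using hz
    have hsplit := splits_initSeg_of_forall_eq_false hz
    have hfirst : HasFirstOne (branchOff p q true) q :=
      ⟨branchOff_self p q true, fun k hk => (branchOff_of_lt p true hk).trans (hz k hk)⟩
    obtain ⟨p', hp', heq⟩ := IsPath.exists_isIsolatedPath_of_hasFirstOne
      (isPath_branchOff hp fun _ => hsplit) hfirst (Nat.lt_succ_self q)
    refine ⟨p', hp', ?_⟩
    rw [← initSeg_branchOff p true le_rfl]
    rw [initSeg_succ, initSeg_succ] at heq
    exact (List.append_inj' heq rfl).1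

theorem not_exists_computable_selector_isIsolatedPath :
    ¬ ∃ F : ℕ → ℕ → Bool, Computable₂ F ∧ ∀ e, IsIsolatedPath Splits (F e) ∧
      HasFirstOne (F e) e := by
  rintro ⟨F, hF, h⟩
  obtain ⟨e, he⟩ := exists_computes hF
  obtain ⟨⟨-, N, hN⟩, hfirst⟩ := h e
  obtain ⟨n, hn, hsplit⟩ := frequently_splits_of_computes hfirst he N
  exact hN n hn hsplit

end DiagonalTree

section Diagonalization

theorem exists_computable_eq_apply_initSeg {β : ℕ → List Bool → Bool} (hβ : Computable₂ β) :
    ∃ F : ℕ → ℕ → Bool, Computable₂ F ∧ ∀ e n, F e n = β e (initSeg (F e) n) := by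
  let G (e n : ℕ) : List Bool := n.rec .nil fun _ σ => σ ++ [β e σ]
  have hG : Computable₂ G :=
    Computable.nat_rec (h := fun (a : ℕ × ℕ) (q : ℕ × List Bool) => q.2 ++ [β a.1 q.2])
      Computable.snd (Computable.const List.nil)
      (Computable.list_concat.comp (Computable.snd.comp Computable.snd)
        (hβ.comp (Computable.fst.comp Computable.fst) (Computable.snd.comp Computable.snd)))
  have initSeg_eq (e n : ℕ) : initSeg (fun k => β e (G e k)) n = G e n := by
    induction n with
    | zero => rfl
    | succ n ih => rw [initSeg_succ, ih]
  exact ⟨fun e n => β e (G e n), hβ.comp Computable.fst hG, fun e n => by rw [initSeg_eq]⟩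

variable {S : List Bool → Prop} {c : ℕ → ℕ → Bool} {p : ℕ → Bool} {e : ℕ}

open Classical in
/-- The number of proper initial segments of `σ` at which the binary tree encoded by `S` splits. -/
noncomputable def splitCount (S : List Bool → Prop) (σ : List Bool) : ℕ :=
  ((List.range σ.length).filter fun k => S (σ.take k)).length

theorem primrec_splitCount (hS : PrimrecPred S) : Primrec (splitCount S) := by
  classical
  have take : PrimrecRel fun (k : ℕ) (σ : List Bool) => S (σ.take k) :=
    hS.comp Primrec.list_take
  exact Primrec.list_length.comp
    (take.listFilter.comp (Primrec.list_range.comp Primrec.list_length) Primrec.id)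

open Classical in
theorem splitCount_initSeg (S : List Bool → Prop) (p : ℕ → Bool) (n : ℕ) :
    splitCount S (initSeg p n) = Nat.count (fun k => S (initSeg p k)) n := by
  rw [Nat.count, List.countP_eq_length_filter, splitCount, length_initSeg]
  congr 1
  refine List.filter_congr fun k hk => ?_
  rw [initSeg, ← List.map_take, List.take_range, min_eq_left (List.mem_range.1 hk).le, ← initSeg]

open Classical in
/-- The next value, after `σ`, of the sequence that begins with `0ᵉ1` and that, at each splitting
node where the number of earlier splitting nodes is `Nat.pair i j`, leaves the sequence `c i`.
Varying `j` gives infinitely many opportunities to leave `c i`. -/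
noncomputable def diagonalBit (S : List Bool → Prop) (c : ℕ → ℕ → Bool) (e : ℕ)
    (σ : List Bool) : Bool :=
  if σ.length < e then false else if σ.length = e then true else
    decide (S σ) && !c (splitCount S σ).unpair.1 σ.length

theorem computable₂_diagonalBit (hS : PrimrecPred S) (hc : Computable₂ c) :
    Computable₂ (diagonalBit S c) := by
  classical
  have length : Computable fun a : ℕ × List Bool => a.2.length :=
    Computable.list_length.comp Computable.snd
  have before : Computable fun a : ℕ × List Bool => decide (a.2.length < a.1) :=
    Primrec.nat_lt.decide.to_comp.comp length Computable.fst
  have at_one : Computable fun a : ℕ × List Bool => decide (a.2.length = a.1) :=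
    Primrec.eq.decide.to_comp.comp length Computable.fst
  have index : Computable fun a : ℕ × List Bool => (splitCount S a.2).unpair.1 :=
    Computable.fst.comp (Computable.unpair.comp ((primrec_splitCount hS).to_comp.comp
      Computable.snd))
  have after := Primrec.and.to_comp.comp (hS.decide.to_comp.comp Computable.snd)
    (Primrec.not.to_comp.comp (hc.comp index length))
  refine (Computable.cond before (Computable.const false)
    (Computable.cond at_one (Computable.const true) after)).of_eq fun a => ?_
  simp only [diagonalBit, Bool.cond_decide]

theorem hasFirstOne_of_eq_diagonalBit
    (hp : ∀ n, p n = diagonalBit S c e (initSeg p n)) : HasFirstOne p e := by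
  refine ⟨?_, fun k hk => ?_⟩
  · rw [hp, diagonalBit, length_initSeg, if_neg (lt_irrefl e), if_pos rfl]
  · rw [hp, diagonalBit, length_initSeg, if_pos hk]

open Classical in
theorem eq_of_eq_diagonalBit (hp : ∀ n, p n = diagonalBit S c e (initSeg p n))
    {n : ℕ} (hn : e < n) :
    p n = (decide (S (initSeg p n)) &&
      !c (Nat.count (fun k => S (initSeg p k)) n).unpair.1 n) := by
  rw [hp n, diagonalBit, length_initSeg, if_neg hn.not_gt, if_neg hn.ne', splitCount_initSeg]

theorem isPath_of_eq_diagonalBit (hp : ∀ n, p n = diagonalBit S c e (initSeg p n))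
    (hS : ∀ q n, (∀ k < n, q k = false) → S (initSeg q n)) : IsPath S p := by
  intro n hn
  rcases le_or_gt n e with hne | hne
  · exact hS p n fun k hk => (hasFirstOne_of_eq_diagonalBit hp).2 k (hk.trans_le hne)
  · classical
    rw [eq_of_eq_diagonalBit hp hne, Bool.and_eq_true, decide_eq_true_eq] at hn
    exact hn.1

theorem ne_of_eq_diagonalBit (hp : ∀ n, p n = diagonalBit S c e (initSeg p n))
    (hinf : {n | S (initSeg p n)}.Infinite) (i : ℕ) : c i ≠ p := by
  classical
  intro heq
  set n := Nat.nth (fun k => S (initSeg p k)) (Nat.pair i (e + 1))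
  have hsplit : S (initSeg p n) := Nat.nth_mem_of_infinite hinf _
  have hcount : Nat.count (fun k => S (initSeg p k)) n = Nat.pair i (e + 1) :=
    Nat.count_nth_of_infinite hinf _
  have hen : e < n := (Nat.right_le_pair i (e + 1)).trans
    (Nat.le_nth fun hfin => absurd hfin hinf)
  have := eq_of_eq_diagonalBit hp hen
  rw [hcount, Nat.unpair_pair, heq, decide_eq_true hsplit, Bool.true_and] at this
  exact (Bool.eq_not_self _).1 this

theorem exists_computable_selector_isIsolatedPath (hS : PrimrecPred S)
    (hzero : ∀ q n, (∀ k < n, q k = false) → S (initSeg q n)) (hc : Computable₂ c)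
    (hcover : ∀ p, IsPath S p → ∃ i, c i = p) :
    ∃ F : ℕ → ℕ → Bool, Computable₂ F ∧ ∀ e, IsIsolatedPath S (F e) ∧ HasFirstOne (F e) e := by
  obtain ⟨F, hF, heq⟩ := exists_computable_eq_apply_initSeg (computable₂_diagonalBit hS hc)
  refine ⟨F, hF, fun e => ⟨⟨isPath_of_eq_diagonalBit (heq e) hzero, ?_⟩,
    hasFirstOne_of_eq_diagonalBit (heq e)⟩⟩
  by_contra! hsplit
  obtain ⟨i, hi⟩ := hcover _ (isPath_of_eq_diagonalBit (heq e) hzero)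
  refine ne_of_eq_diagonalBit (heq e) (Set.infinite_of_forall_exists_gt fun N => ?_) i hi
  obtain ⟨n, hn, h⟩ := hsplit (N + 1)
  exact ⟨n, h, hn⟩

theorem not_exists_computable_enumeration_isPath :
    ¬ ∃ c : ℕ → ℕ → Bool, Computable₂ c ∧ ∀ p, IsPath Splits p → ∃ i, c i = p := by
  rintro ⟨c, hc, hcover⟩
  exact not_exists_computable_selector_isIsolatedPath
    (exists_computable_selector_isIsolatedPath primrecPred_splits
      (fun _ _ => splits_initSeg_of_forall_eq_false) hc hcover)

end Diagonalization

section TreeGraph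

variable {ι : Type}

/-- Adjacency in the infinite tree of finite lists over `ι`: the children of `u` are the lists
`n :: u`, so a node is listed starting from its last edge, and the root is `[]`. -/
def TreeAdj (u v : List ι) : Prop := (∃ n, v = n :: u) ∨ ∃ n, u = n :: v

theorem TreeAdj.symm {u v : List ι} (h : TreeAdj u v) : TreeAdj v u := Or.symm h

theorem not_treeAdj_self (u : List ι) : ¬ TreeAdj u u := by simp [TreeAdj]

/-- The graph induced on a set of nodes by the tree of finite lists over `ι`. -/
def treeGraph (A : Set (List ι)) : SimpleGraph A where
  Adj u v := TreeAdj (u : List ι) v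
  symm := ⟨fun _ _ => TreeAdj.symm⟩
  loopless := ⟨fun u => not_treeAdj_self (u : List ι)⟩

instance treeStructure (A : Set (List ι)) : Language.graph.Structure A := (treeGraph A).structure

/-- The sets of nodes that are subtrees, i.e. closed under passing to the parent. -/
def IsSubtree (A : Set (List ι)) : Prop := ∀ ⦃n u⦄, n :: u ∈ A → u ∈ A

theorem IsSubtree.mem_of_suffix {A : Set (List ι)} (hA : IsSubtree A) {u v : List ι}
    (h : u <:+ v) (hv : v ∈ A) : u ∈ A := by
  induction v with
  | nil => exact List.suffix_nil.1 h ▸ hv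
  | cons n v ih =>
    rcases List.suffix_cons_iff.1 h with rfl | h
    · exact hv
    · exact ih h (hA hv)

end TreeGraph

/-- The quantifier rank of a formula. -/
def quantifierRank {α : Type} : {k : ℕ} → L.BoundedFormula α k → ℕ
  | _, .falsum => 0
  | _, .equal _ _ => 0
  | _, .rel _ _ => 0
  | _, .imp φ ψ => max (quantifierRank φ) (quantifierRank ψ)
  | _, .all φ => quantifierRank φ + 1

section BackAndForth

variable {ι C : Type} {A B : Set (List ι)} {cA cB : List ι → C} {S : Finset (List ι × List ι)}

/-- A finite partial isomorphism between the trees `A` and `B` with node colourings `cA` and `cB`: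
a bijection between finite subtrees that preserves the parent relation and the colours. -/
structure PartialIso (A : Set (List ι)) (cA : List ι → C) (B : Set (List ι)) (cB : List ι → C)
    (S : Finset (List ι × List ι)) : Prop where
  nil_mem : ([], []) ∈ S
  mem : ∀ ⦃a b⦄, (a, b) ∈ S → a ∈ A ∧ b ∈ B ∧ cA a = cB b
  inj : ∀ ⦃a b a' b'⦄, (a, b) ∈ S → (a', b') ∈ S → (a = a' ↔ b = b')
  parent_left : ∀ ⦃n a b⦄, (n :: a, b) ∈ S → ∃ m b', b = m :: b' ∧ (a, b') ∈ S
  parent_right : ∀ ⦃m a b⦄, (a, m :: b) ∈ S → ∃ n a', a = n :: a' ∧ (a', b) ∈ S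

namespace PartialIso

theorem swap (h : PartialIso A cA B cB S) :
    PartialIso B cB A cA (S.map (Equiv.prodComm _ _).toEmbedding) where
  nil_mem := by simpa using h.nil_mem
  mem a b hab := by
    obtain ⟨ha, hb, hc⟩ := h.mem (by simpa using hab)
    exact ⟨hb, ha, hc.symm⟩
  inj a b a' b' hab hab' := (h.inj (by simpa using hab) (by simpa using hab')).symm
  parent_left n a b hab := by simpa using h.parent_right (by simpa using hab)
  parent_right n a b hab := by simpa using h.parent_left (by simpa using hab)

theorem length_eq (h : PartialIso A cA B cB S) {a b : List ι} (hab : (a, b) ∈ S) :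
    a.length = b.length := by
  induction a generalizing b with
  | nil => rw [(h.inj h.nil_mem hab).1 rfl]
  | cons n a ih =>
    obtain ⟨m, b', rfl, hab'⟩ := h.parent_left hab
    rw [List.length_cons, List.length_cons, ih hab']

theorem treeAdj_of_treeAdj (h : PartialIso A cA B cB S) {a b a' b' : List ι} (hab : (a, b) ∈ S)
    (hab' : (a', b') ∈ S) (hadj : TreeAdj a a') : TreeAdj b b' := by
  rcases hadj with ⟨n, rfl⟩ | ⟨n, rfl⟩
  · obtain ⟨m, c, rfl, hc⟩ := h.parent_left hab'
    exact Or.inl ⟨m, by rw [(h.inj hab hc).1 rfl]⟩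
  · obtain ⟨m, c, rfl, hc⟩ := h.parent_left hab
    exact Or.inr ⟨m, by rw [(h.inj hab' hc).1 rfl]⟩

theorem treeAdj_iff (h : PartialIso A cA B cB S) {a b a' b' : List ι} (hab : (a, b) ∈ S)
    (hab' : (a', b') ∈ S) : TreeAdj a a' ↔ TreeAdj b b' :=
  ⟨h.treeAdj_of_treeAdj hab hab',
    h.swap.treeAdj_of_treeAdj (by simpa using hab) (by simpa using hab')⟩

theorem insert [DecidableEq ι] (h : PartialIso A cA B cB S) {n m : ι} {a b : List ι}
    (hab : (a, b) ∈ S) (hn : n :: a ∈ A) (hm : m :: b ∈ B) (hc : cA (n :: a) = cB (m :: b))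
    (hleft : ∀ b', (n :: a, b') ∉ S) (hright : ∀ a', (a', m :: b) ∉ S) :
    PartialIso A cA B cB (insert (n :: a, m :: b) S) where
  nil_mem := Finset.mem_insert_of_mem h.nil_mem
  mem x y hxy := by
    rcases Finset.mem_insert.1 hxy with hxy | hxy
    · cases hxy
      exact ⟨hn, hm, hc⟩
    · exact h.mem hxy
  inj x y x' y' hxy hxy' := by
    rcases Finset.mem_insert.1 hxy with hxy | hxy <;>
      rcases Finset.mem_insert.1 hxy' with hxy' | hxy'
    · cases hxy
      cases hxy'
      simp
    · cases hxy
      exact iff_of_false (fun e => hleft _ (e ▸ hxy')) fun e => hright _ (e ▸ hxy')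
    · cases hxy'
      exact iff_of_false (fun e => hleft _ (e ▸ hxy)) fun e => hright _ (e ▸ hxy)
    · exact h.inj hxy hxy'
  parent_left k x y hxy := by
    rcases Finset.mem_insert.1 hxy with hxy | hxy
    · cases hxy
      exact ⟨m, b, rfl, Finset.mem_insert_of_mem hab⟩
    · obtain ⟨m', b', hy, hmem⟩ := h.parent_left hxy
      exact ⟨m', b', hy, Finset.mem_insert_of_mem hmem⟩
  parent_right k x y hxy := by
    rcases Finset.mem_insert.1 hxy with hxy | hxy
    · cases hxy
      exact ⟨n, a, rfl, Finset.mem_insert_of_mem hab⟩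
    · obtain ⟨n', a', hx, hmem⟩ := h.parent_right hxy
      exact ⟨n', a', hx, Finset.mem_insert_of_mem hmem⟩

end PartialIso

/-- The number of children of `u` in `A` of colour `κ`. -/
noncomputable def childCount (A : Set (List ι)) (cA : List ι → C) (u : List ι) (κ : C) : ℕ∞ :=
  {n : ι | n :: u ∈ A ∧ cA (n :: u) = κ}.encard

theorem childCount_eq_zero {u : List ι} {κ : C} (h : ∀ n, n :: u ∈ A → cA (n :: u) ≠ κ) :
    childCount A cA u κ = 0 := by
  rw [childCount, Set.encard_eq_zero, Set.eq_empty_iff_forall_notMem]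
  exact fun n hn => h n hn.1 hn.2

/-- Nodes of `A` and `B` of the same colour have the same number of children of each colour, where
numbers at least `t` are not distinguished. -/
def ChildCountsAgree (t : ℕ) (A : Set (List ι)) (cA : List ι → C) (B : Set (List ι))
    (cB : List ι → C) : Prop :=
  ∀ u ∈ A, ∀ v ∈ B, cA u = cB v → ∀ κ, min (childCount A cA u κ) t = min (childCount B cB v κ) t

theorem ChildCountsAgree.symm {t : ℕ} (h : ChildCountsAgree t A cA B cB) :
    ChildCountsAgree t B cB A cA :=
  fun u hu v hv huv κ => (h v hv u hu huv.symm κ).symm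

namespace PartialIso

theorem exists_fresh_child {t : ℕ} (hcounts : ChildCountsAgree t A cA B cB)
    (hS : PartialIso A cA B cB S) {n : ι} {a b : List ι} (hab : (a, b) ∈ S) (hn : n :: a ∈ A)
    (hleft : ∀ b', (n :: a, b') ∉ S) (hcard : S.card < t) :
    ∃ m, m :: b ∈ B ∧ cA (n :: a) = cB (m :: b) ∧ ∀ a', (a', m :: b) ∉ S := by
  by_contra! hused
  set κ := cA (n :: a) with hκ
  set Y := {m : ι | m :: b ∈ B ∧ cB (m :: b) = κ} with hY
  have matched : ∀ m ∈ Y, ∃ n', (n' :: a, m :: b) ∈ S := by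
    rintro m ⟨hm, hc⟩
    obtain ⟨a', ha'⟩ := hused m hm hc.symm
    obtain ⟨n', a'', rfl, h⟩ := hS.parent_right ha'
    exact ⟨n', (hS.inj hab h).2 rfl ▸ ha'⟩
  choose! f hf using matched
  have f_injOn : Set.InjOn f Y := fun m hm m' hm' e => by
    simpa using (hS.inj (hf m hm) (hf m' hm')).1 (by rw [e])
  have card_Y_le : Y.encard ≤ S.card := by
    rw [← Set.encard_coe_eq_coe_finsetCard]
    exact Set.encard_le_encard_of_injOn (f := fun m => (f m :: a, m :: b)) hf fun m _ m' _ e => by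
      simpa using congrArg Prod.snd e
  have card_Y_lt : Y.encard + 1 ≤ childCount A cA a κ := by
    have n_notMem : n ∉ f '' Y := by
      rintro ⟨m, hm, rfl⟩
      exact hleft _ (hf m hm)
    rw [← f_injOn.encard_image, ← Set.encard_insert_of_notMem n_notMem]
    refine Set.encard_le_encard (Set.insert_subset ⟨hn, rfl⟩ ?_)
    rintro _ ⟨m, hm, rfl⟩
    obtain ⟨hA, -, hc⟩ := hS.mem (hf m hm)
    exact ⟨hA, hc.trans hm.2⟩
  have Y_lt : Y.encard < t := card_Y_le.trans_lt (by exact_mod_cast hcard)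
  obtain ⟨hA, hB, hc⟩ := hS.mem hab
  have : Y.encard + 1 ≤ Y.encard := calc
    Y.encard + 1 ≤ min (childCount A cA a κ) t := le_min card_Y_lt (Order.add_one_le_of_lt Y_lt)
    _ = min Y.encard t := hcounts a hA b hB hc κ
    _ ≤ Y.encard := min_le_left _ _
  exact ((ENat.add_one_le_iff Y_lt.ne_top).1 this).false

theorem exists_extend_left {t : ℕ} (hcounts : ChildCountsAgree t A cA B cB) (hA : IsSubtree A)
    (hS : PartialIso A cA B cB S) (a : List ι) (ha : a ∈ A) (hcard : S.card + a.length ≤ t) :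
    ∃ S' ⊇ S, PartialIso A cA B cB S' ∧ S'.card ≤ S.card + a.length ∧ ∃ b, (a, b) ∈ S' := by
  classical
  induction a with
  | nil => exact ⟨S, subset_rfl, hS, le_rfl, [], hS.nil_mem⟩
  | cons n a ih =>
    rw [List.length_cons] at hcard ⊢
    obtain ⟨S₁, hSS₁, hS₁, hcard₁, b, hab⟩ := ih (hA ha) (by omega)
    by_cases hex : ∃ b', (n :: a, b') ∈ S₁
    · exact ⟨S₁, hSS₁, hS₁, by omega, hex⟩
    · push Not at hex
      obtain ⟨m, hm, hc, hright⟩ := exists_fresh_child hcounts hS₁ hab ha hex (by omega)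
      refine ⟨_, hSS₁.trans (Finset.subset_insert _ _), hS₁.insert hab ha hm hc hex hright, ?_,
        m :: b, Finset.mem_insert_self _ _⟩
      have := Finset.card_insert_le (n :: a, m :: b) S₁
      omega

theorem exists_extend_right {t : ℕ} (hcounts : ChildCountsAgree t A cA B cB) (hB : IsSubtree B)
    (hS : PartialIso A cA B cB S) (b : List ι) (hb : b ∈ B) (hcard : S.card + b.length ≤ t) :
    ∃ S' ⊇ S, PartialIso A cA B cB S' ∧ S'.card ≤ S.card + b.length ∧ ∃ a, (a, b) ∈ S' := by
  obtain ⟨S', hSS', hS', hcard', a, ha⟩ :=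
    hS.swap.exists_extend_left hcounts.symm hB b hb (by rwa [Finset.card_map])
  rw [Finset.card_map] at hcard'
  refine ⟨_, fun x hx => ?_, hS'.swap, by rwa [Finset.card_map], a, by simpa using ha⟩
  have hswap : x.swap ∈ S' := hSS' (by simpa using hx)
  simpa using hswap

theorem term_mem {α : Type} {v : α → A} {v' : α → B}
    (hv : ∀ i, ((v i : List ι), (v' i : List ι)) ∈ S) :
    ∀ s : Language.graph.Term α, ((s.realize v).1, (s.realize v').1) ∈ S
  | .var i => hv i
  | .func f _ => f.elim

theorem sumElim_mem {α : Type} {k : ℕ} {v : α → A} {v' : α → B} {w : Fin k → A} {w' : Fin k → B}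
    (hv : ∀ i, ((v i : List ι), (v' i : List ι)) ∈ S)
    (hw : ∀ i, ((w i : List ι), (w' i : List ι)) ∈ S) :
    ∀ i, ((Sum.elim v w i).1, (Sum.elim v' w' i).1) ∈ S
  | .inl i => hv i
  | .inr i => hw i

theorem snoc_mem {k : ℕ} {w : Fin k → A} {w' : Fin k → B}
    (hw : ∀ i, ((w i : List ι), (w' i : List ι)) ∈ S) {a : A} {b : B}
    (hab : ((a : List ι), (b : List ι)) ∈ S) (i : Fin (k + 1)) :
    ((Fin.snoc (α := fun _ => A) w a i).1, (Fin.snoc (α := fun _ => B) w' b i).1) ∈ S := by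
  induction i using Fin.lastCases with
  | last => simpa using hab
  | cast i => simpa using hw i

/-- A back-and-forth argument: choosing a node of a tree of height `d` extends a finite partial
isomorphism by at most `d` pairs. -/
theorem realize_iff {t d : ℕ} (hcounts : ChildCountsAgree t A cA B cB)
    (hA : IsSubtree A) (hB : IsSubtree B) (hAd : ∀ u ∈ A, u.length ≤ d)
    (hBd : ∀ u ∈ B, u.length ≤ d) (hS : PartialIso A cA B cB S) {α : Type} {k : ℕ}
    (φ : Language.graph.BoundedFormula α k)
    (hcard : S.card + d * quantifierRank φ ≤ t) {v : α → A} {v' : α → B} {w : Fin k → A}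
    {w' : Fin k → B} (hv : ∀ i, ((v i : List ι), (v' i : List ι)) ∈ S)
    (hw : ∀ i, ((w i : List ι), (w' i : List ι)) ∈ S) : φ.Realize v w ↔ φ.Realize v' w' := by
  induction φ generalizing S with
  | falsum => rfl
  | equal s₁ s₂ =>
    simp only [BoundedFormula.Realize, Subtype.ext_iff]
    exact hS.inj (term_mem (sumElim_mem hv hw) s₁) (term_mem (sumElim_mem hv hw) s₂)
  | rel R ts =>
    cases R
    exact hS.treeAdj_iff (term_mem (sumElim_mem hv hw) (ts 0))
      (term_mem (sumElim_mem hv hw) (ts 1))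
  | imp φ ψ ihφ ihψ =>
    rw [quantifierRank, ← Nat.mul_max_mul_left] at hcard
    rw [BoundedFormula.realize_imp, BoundedFormula.realize_imp, ihφ hS (by omega) hv hw,
      ihψ hS (by omega) hv hw]
  | all φ ih =>
    rw [quantifierRank, mul_add_one] at hcard
    rw [BoundedFormula.realize_all, BoundedFormula.realize_all]
    constructor
    · intro h b
      have := hBd b b.2
      obtain ⟨S', hSS', hS', hcard', a, hab⟩ :=
        hS.exists_extend_right hcounts hB b b.2 (by omega)
      exact (ih hS' (by omega) (fun i => hSS' (hv i))
        (snoc_mem (fun i => hSS' (hw i)) (a := ⟨a, (hS'.mem hab).1⟩) hab)).1 (h _)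
    · intro h a
      have := hAd a a.2
      obtain ⟨S', hSS', hS', hcard', b, hab⟩ :=
        hS.exists_extend_left hcounts hA a a.2 (by omega)
      exact (ih hS' (by omega) (fun i => hSS' (hv i))
        (snoc_mem (fun i => hSS' (hw i)) (b := ⟨b, (hS'.mem hab).2.1⟩) hab)).2 (h _)

end PartialIso

end BackAndForth

section HubTree

/-- The colours of the nodes of a hub tree: hubs are coloured by binary strings, and spokes by their
number of leaves. -/
inductive Colour where
  | top
  | hub (σ : List Bool)
  | spoke (c : ℕ∞)
  | leaf

/-- The tree of height three in which the root `[]` has a child `[x]` (a hub) for each `x ∈ H`, and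
the hub `[x]` has a child `[j, x]` (a spoke) for each `j` with `d x j ≠ 0`, which in turn has
`d x j` children `[l, j, x]` (leaves). -/
def hubTree (H : Set ℕ) (d : ℕ → ℕ → ℕ∞) : Set (List ℕ) := fun u =>
  match u with
  | [] => True
  | [x] => x ∈ H
  | [j, x] => x ∈ H ∧ d x j ≠ 0
  | [l, j, x] => x ∈ H ∧ (l : ℕ∞) < d x j
  | _ => False

/-- The colouring of a hub tree given by labels of the hubs, where numbers of leaves are truncated
at `T`. -/
noncomputable def colour (label : ℕ → List Bool) (d : ℕ → ℕ → ℕ∞) (T : ℕ) (u : List ℕ) : Colour :=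
  match u with
  | [] => .top
  | [x] => .hub (label x)
  | [j, x] => .spoke (min (d x j) T)
  | _ => .leaf

variable {H H' : Set ℕ} {d d' : ℕ → ℕ → ℕ∞} {label label' : ℕ → List Bool}

theorem isSubtree_hubTree : IsSubtree (hubTree H d)
  | _, [], _ => trivial
  | _, [_], h => h.1
  | _, [_, _], h => ⟨h.1, (pos_of_gt h.2).ne'⟩

theorem length_le_of_mem_hubTree : ∀ u ∈ hubTree H d, u.length ≤ 3
  | [], _ | [_], _ | [_, _], _ | [_, _, _], _ => by simp

theorem encard_setOf_natCast_lt (k : ℕ∞) : {l : ℕ | (l : ℕ∞) < k}.encard = k := by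
  cases k with
  | top => simp
  | coe n =>
    have : {l : ℕ | (l : ℕ∞) < n} = Finset.range n := by
      ext
      simp
    rw [this, Set.encard_coe_eq_coe_finsetCard, Finset.card_range]

theorem childCount_spoke_leaf {T j x : ℕ} (hx : x ∈ H) :
    childCount (hubTree H d) (colour label d T) [j, x] .leaf = d x j := by
  rw [← encard_setOf_natCast_lt (d x j), childCount]
  congr 1
  ext l
  exact ⟨fun h => h.1.2, fun h => ⟨⟨hx, h⟩, rfl⟩⟩

/-- The hub tree is a faithful code, with precision `q`, of the binary tree encoded by `S`: up to
`q`, each node of the level `q` labels many hubs, the number of leaves of the spokes `[2n, x]` with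
`n < q` gives the label of the hub `[x]`, and all other spokes of `[x]` have many leaves. -/
structure CodesTree (S : List Bool → Prop) (q : ℕ) (H : Set ℕ) (label : ℕ → List Bool)
    (d : ℕ → ℕ → ℕ∞) : Prop where
  label_mem : ∀ x ∈ H, label x ∈ treeLevel S q
  many_hubs : ∀ σ ∈ treeLevel S q, (q : ℕ∞) ≤ {x | x ∈ H ∧ label x = σ}.encard
  even_spoke : ∀ x ∈ H, ∀ n < q,
    d x (2 * n) = (2 * n + ((label x).getD n false).toNat + 2 : ℕ)
  other_spoke : ∀ x ∈ H, ∀ j, (∃ n < q, j = 2 * n) ∨ d x j = 0 ∨ ((2 * q + 2 : ℕ) : ℕ∞) ≤ d x j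
  many_large_spokes : ∀ x ∈ H, (q : ℕ∞) ≤ {j | ((2 * q + 2 : ℕ) : ℕ∞) ≤ d x j}.encard

open Classical in
/-- The number of children of each colour of a node of a given colour, with numbers at least `q` not
distinguished, in a hub tree that codes `S` with precision `q`. -/
noncomputable def codedChildCount (S : List Bool → Prop) (q : ℕ) : Colour → Colour → ℕ∞
  | .top, .hub σ => if σ ∈ treeLevel S q then q else 0
  | .hub σ, .spoke c => if c = ((2 * q + 2 : ℕ) : ℕ∞) then q else
      min {n : ℕ | n < q ∧ c = (2 * n + (σ.getD n false).toNat + 2 : ℕ)}.encard q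
  | .spoke c, .leaf => min c q
  | _, _ => 0

namespace CodesTree

variable {S : List Bool → Prop} {q : ℕ}

theorem min_childCount_hub (h : CodesTree S q H label d) (σ : List Bool) :
    min (childCount (hubTree H d) (colour label d (2 * q + 2)) [] (.hub σ)) q =
      codedChildCount S q .top (.hub σ) := by
  rw [codedChildCount]
  split_ifs with hσ
  · refine min_eq_right ((h.many_hubs σ hσ).trans (Set.encard_le_encard ?_))
    rintro x ⟨hx, rfl⟩
    exact ⟨hx, rfl⟩
  · rw [childCount_eq_zero, zero_min]
    rintro x hx hc
    cases hc
    exact hσ (h.label_mem x hx)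

theorem le_childCount_large_spoke (h : CodesTree S q H label d) {x : ℕ} (hx : x ∈ H) :
    (q : ℕ∞) ≤ childCount (hubTree H d) (colour label d (2 * q + 2)) [x]
      (.spoke (2 * q + 2 : ℕ)) := by
  refine (h.many_large_spokes x hx).trans (Set.encard_le_encard fun j hj => ⟨⟨hx, ?_⟩, ?_⟩)
  · intro hzero
    simp [hzero] at hj
  · exact congrArg Colour.spoke (min_eq_right hj)

theorem childCount_small_spoke (h : CodesTree S q H label d) {x : ℕ} (hx : x ∈ H) {c : ℕ∞}
    (hc : c ≠ (2 * q + 2 : ℕ)) :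
    childCount (hubTree H d) (colour label d (2 * q + 2)) [x] (.spoke c) =
      {n : ℕ | n < q ∧ c = (2 * n + ((label x).getD n false).toNat + 2 : ℕ)}.encard := by
  have truncate_even (n : ℕ) (hn : n < q) : min (d x (2 * n)) (2 * q + 2 : ℕ) =
      (2 * n + ((label x).getD n false).toNat + 2 : ℕ) := by
    have := Bool.toNat_le ((label x).getD n false)
    rw [h.even_spoke x hx n hn]
    exact min_eq_left (by exact_mod_cast (by omega))
  rw [← Function.Injective.encard_image (f := fun n : ℕ => 2 * n)
    (fun a b hab => by simpa using hab), childCount]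
  congr 1
  ext j
  constructor
  · rintro ⟨⟨-, hj⟩, hcol⟩
    replace hcol : min (d x j) (2 * q + 2 : ℕ) = c := Colour.spoke.inj hcol
    rcases h.other_spoke x hx j with ⟨n, hn, rfl⟩ | hzero | hlarge
    · exact ⟨n, ⟨hn, by rw [← hcol, truncate_even n hn]⟩, rfl⟩
    · exact absurd hzero hj
    · exact absurd (hcol.symm.trans (min_eq_right hlarge)) hc
  · rintro ⟨n, ⟨hn, rfl⟩, rfl⟩
    refine ⟨⟨hx, ?_⟩, congrArg Colour.spoke (truncate_even n hn)⟩
    rw [h.even_spoke x hx n hn]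
    exact Nat.cast_ne_zero.2 (by omega)

theorem min_childCount_spoke (h : CodesTree S q H label d) {x : ℕ} (hx : x ∈ H) (c : ℕ∞) :
    min (childCount (hubTree H d) (colour label d (2 * q + 2)) [x] (.spoke c)) q =
      codedChildCount S q (.hub (label x)) (.spoke c) := by
  rw [codedChildCount]
  split_ifs with hc
  · exact min_eq_right (hc ▸ h.le_childCount_large_spoke hx)
  · rw [h.childCount_small_spoke hx hc]

theorem min_childCount (h : CodesTree S q H label d) {u : List ℕ} (hu : u ∈ hubTree H d)
    (κ : Colour) : min (childCount (hubTree H d) (colour label d (2 * q + 2)) u κ) q =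
      codedChildCount S q (colour label d (2 * q + 2) u) κ := by
  have no_child {v : List ℕ} {κ : Colour}
      (hv : ∀ n, n :: v ∈ hubTree H d → colour label d (2 * q + 2) (n :: v) ≠ κ) :
      min (childCount (hubTree H d) (colour label d (2 * q + 2)) v κ) q = 0 := by
    rw [childCount_eq_zero hv, zero_min]
  match u, hu with
  | [], _ =>
    cases κ with
    | hub σ => exact h.min_childCount_hub σ
    | _ => exact no_child fun _ _ => nofun
  | [x], hx =>
    cases κ with
    | spoke c => exact h.min_childCount_spoke hx c
    | _ => exact no_child fun _ _ => nofun
  | [j, x], hx =>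
    cases κ with
    | leaf =>
      rw [childCount_spoke_leaf hx.1, colour, codedChildCount, min_assoc,
        min_eq_right (by exact_mod_cast (by omega) : (q : ℕ∞) ≤ (2 * q + 2 : ℕ))]
    | _ => exact no_child fun _ _ => nofun
  | [_, _, _], _ => cases κ <;> exact no_child fun _ => nofun

theorem childCountsAgree (h : CodesTree S q H label d) (h' : CodesTree S q H' label' d') :
    ChildCountsAgree q (hubTree H d) (colour label d (2 * q + 2)) (hubTree H' d')
      (colour label' d' (2 * q + 2)) := fun u hu v hv huv κ => by
  rw [h.min_childCount hu, h'.min_childCount hv, huv]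

end CodesTree

end HubTree

section FiniteSubtree

variable {ι C : Type} {A B : Set (List ι)} {cA cB : List ι → C}

theorem exists_finset_isSubtree (hA : IsSubtree A) (hnil : [] ∈ A) {α : Type} [Finite α]
    (a : α → A) : ∃ F : Finset (List ι), [] ∈ F ∧ IsSubtree (F : Set (List ι)) ∧ ↑F ⊆ A ∧
      ∀ i, (a i : List ι) ∈ F := by
  classical
  have := Fintype.ofFinite α
  have mem_iff (u) : u ∈ insert [] (Finset.univ.biUnion fun i => (a i : List ι).tails.toFinset) ↔
      u = [] ∨ ∃ i, u <:+ (a i : List ι) := by simp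
  refine ⟨_, Finset.mem_insert_self _ _, fun n u h => ?_, fun u h => ?_,
    fun i => (mem_iff _).2 (Or.inr ⟨i, List.suffix_rfl⟩)⟩
  · obtain h | ⟨i, h⟩ := (mem_iff _).1 h
    · cases h
    · exact (mem_iff _).2 (Or.inr ⟨i, (List.suffix_cons n u).trans h⟩)
  · obtain rfl | ⟨i, h⟩ := (mem_iff _).1 h
    · exact hnil
    · exact hA.mem_of_suffix h (a i).2

open Classical in
theorem PartialIso.diag {F : Finset (List ι)} (hnil : [] ∈ F)
    (hF : IsSubtree (F : Set (List ι))) (h : ∀ u ∈ F, u ∈ A ∧ u ∈ B ∧ cA u = cB u) :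
    PartialIso A cA B cB F.diag where
  nil_mem := Finset.mem_diag.2 ⟨hnil, rfl⟩
  mem a b hab := by
    obtain ⟨ha, rfl : a = b⟩ := Finset.mem_diag.1 hab
    exact h a ha
  inj a b a' b' hab hab' := by
    rw [show a = b from (Finset.mem_diag.1 hab).2, show a' = b' from (Finset.mem_diag.1 hab').2]
  parent_left n a b hab := by
    obtain ⟨ha, rfl : n :: a = b⟩ := Finset.mem_diag.1 hab
    exact ⟨n, a, rfl, Finset.mem_diag.2 ⟨hF ha, rfl⟩⟩
  parent_right m a b hab := by
    obtain ⟨ha, rfl : a = m :: b⟩ := Finset.mem_diag.1 hab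
    exact ⟨m, b, rfl, Finset.mem_diag.2 ⟨hF ha, rfl⟩⟩

end FiniteSubtree

section PathTree

/-- `P` enumerates the sequences with the property `Q`, repeating each of them infinitely often. -/
def Enumerates (P : ℕ → ℕ → Bool) (Q : (ℕ → Bool) → Prop) : Prop :=
  (∀ x, Q (P x)) ∧ ∀ p, Q p → {x | P x = p}.Infinite

theorem exists_enumerates {Q : (ℕ → Bool) → Prop} (hQ : {p | Q p}.Countable) (hne : ∃ p, Q p) :
    ∃ P, Enumerates P Q := by
  obtain ⟨f, hf⟩ := hQ.exists_eq_range hne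
  have mem_iff (p) : Q p ↔ p ∈ Set.range f := Set.ext_iff.1 hf p
  refine ⟨fun x => f x.unpair.1, fun x => (mem_iff _).2 ⟨_, rfl⟩, fun p hp => ?_⟩
  obtain ⟨i, rfl⟩ := (mem_iff p).1 hp
  exact Set.infinite_of_injective_forall_mem (f := Nat.pair i)
    (fun j j' h => (Nat.pair_eq_pair.1 h).2) fun j => by simp

/-- The number of leaves of the `j`-th spoke of a hub that codes the sequence `p`: the spoke `2n`
has `2n + p n + 2` leaves, and the odd spokes have `o` leaves. -/
def spokeSize {N : Type} [NatCast N] (p : ℕ → Bool) (o : N) (j : ℕ) : N :=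
  if j % 2 = 0 then ((j + (p (j / 2)).toNat + 2 : ℕ) : N) else o

theorem spokeSize_even {N : Type} [NatCast N] (p : ℕ → Bool) (o : N) (n : ℕ) :
    spokeSize p o (2 * n) = ((2 * n + (p n).toNat + 2 : ℕ) : N) := by
  simp [spokeSize]

theorem spokeSize_odd {N : Type} [NatCast N] (p : ℕ → Bool) (o : N) (n : ℕ) :
    spokeSize p o (2 * n + 1) = o := by
  simp [spokeSize, Nat.add_mod]

/-- The hub tree whose hubs code the sequences `P x`, the odd spokes having `o` leaves. -/
def pathTree (P : ℕ → ℕ → Bool) (o : ℕ∞) : Set (List ℕ) :=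
  hubTree Set.univ fun x => spokeSize (P x) o

variable {S : List Bool → Prop} {P : ℕ → ℕ → Bool}

theorem codesTree_pathTree {o : ℕ∞} (ho : o = 0 ∨ o = ⊤) (hP : ∀ x, IsPath S (P x)) {q : ℕ}
    (hdense : ∀ p, IsPath S p → {x | initSeg (P x) q = initSeg p q}.Infinite) :
    CodesTree S q Set.univ (fun x => initSeg (P x) q) fun x => spokeSize (P x) o where
  label_mem x _ := mem_treeLevel.2 ⟨P x, hP x, rfl⟩
  many_hubs σ hσ := by
    obtain ⟨p, hp, rfl⟩ := mem_treeLevel.1 hσ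
    simpa only [Set.mem_univ, true_and] using le_top.trans_eq (hdense p hp).encard_eq.symm
  even_spoke x _ n hn := by rw [spokeSize_even, getD_initSeg _ hn]
  other_spoke x _ j := by
    obtain ⟨n, rfl | rfl⟩ := Nat.even_or_odd' j
    · rcases lt_or_ge n q with hn | hn
      · exact Or.inl ⟨n, hn, rfl⟩
      · rw [spokeSize_even]
        exact Or.inr (Or.inr (by exact_mod_cast (by omega)))
    · rw [spokeSize_odd]
      exact Or.inr (ho.imp_right fun h => le_top.trans_eq h.symm)
  many_large_spokes x _ := by
    have : {j | ((2 * q + 2 : ℕ) : ℕ∞) ≤ spokeSize (P x) o j}.Infinite := by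
      refine Set.infinite_of_injective_forall_mem (f := fun j => 2 * (j + q))
        (fun a b hab => by simpa using hab) fun j => ?_
      rw [Set.mem_ofPred_eq, spokeSize_even]
      exact_mod_cast (by omega)
    exact le_top.trans_eq this.encard_eq.symm

theorem Enumerates.codesTree (hP : Enumerates P (IsPath S)) (q : ℕ) :
    CodesTree S q Set.univ (fun x => initSeg (P x) q) fun x => spokeSize (P x) ⊤ :=
  codesTree_pathTree (Or.inr rfl) hP.1 fun p hp => (hP.2 p hp).mono fun x hx => by
    rw [Set.mem_ofPred_eq] at hx ⊢
    rw [hx]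

theorem Enumerates.codesTree_of_isIsolatedPath
    (hdense : ∀ p, IsPath S p → ∀ q, ∃ p', IsIsolatedPath S p' ∧ initSeg p' q = initSeg p q)
    (hP : Enumerates P (IsIsolatedPath S)) (q : ℕ) :
    CodesTree S q Set.univ (fun x => initSeg (P x) q) fun x => spokeSize (P x) 0 :=
  codesTree_pathTree (Or.inl rfl) (fun x => (hP.1 x).1) fun p hp => by
    obtain ⟨p', hp', heq⟩ := hdense p hp q
    refine (hP.2 p' hp').mono fun x hx => ?_
    rw [Set.mem_ofPred_eq] at hx ⊢
    rw [hx, heq]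

end PathTree

section FiniteTree

/-- The number of leaves of the `j`-th spoke of a hub labelled `σ` in the finite hub trees that code
binary trees with precision `q`. -/
def truncatedSpokeSize (q : ℕ) (σ : List Bool) (j : ℕ) : ℕ :=
  if j < 2 * q then spokeSize (fun n => σ.getD n false) (2 * q + 2) j else 0

/-- The list of nodes of the finite hub tree whose hubs are labelled by the list `s`. -/
def finiteTree (q : ℕ) (s : List (List Bool)) : List (List ℕ) :=
  [] :: (List.range s.length).flatMap fun x =>
    [x] :: (List.range (2 * q)).flatMap fun j =>
      [j, x] :: (List.range (truncatedSpokeSize q (s.getD x []) j)).map fun l => [l, j, x]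

/-- The labels of the finite tree that approximates the path tree of `P` with precision `q` and
whose first `m` hubs are labelled as in the path tree. -/
noncomputable def hubLabels (S : List Bool → Prop) (P : ℕ → ℕ → Bool) (m q : ℕ) :
    List (List Bool) :=
  (List.range m).map (fun x => initSeg (P x) q) ++ (List.range q).flatMap fun _ => treeLevel S q

theorem truncatedSpokeSize_ne_zero_iff {q : ℕ} {σ : List Bool} {j : ℕ} :
    truncatedSpokeSize q σ j ≠ 0 ↔ j < 2 * q := by
  simp only [truncatedSpokeSize, spokeSize]
  split_ifs <;> simp [*]

theorem mem_finiteTree {q : ℕ} {s : List (List Bool)} {u : List ℕ} : u ∈ finiteTree q s ↔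
    u ∈ hubTree {x | x < s.length} fun x j => (truncatedSpokeSize q (s.getD x []) j : ℕ∞) := by
  match u with
  | [] => exact iff_of_true List.mem_cons_self trivial
  | [x] =>
    change _ ↔ x < s.length
    simp [finiteTree]
  | [j, x] =>
    change _ ↔ x < s.length ∧ (truncatedSpokeSize q (s.getD x []) j : ℕ∞) ≠ 0
    rw [Nat.cast_ne_zero, truncatedSpokeSize_ne_zero_iff]
    simp [finiteTree]
  | [l, j, x] =>
    change _ ↔ x < s.length ∧ (l : ℕ∞) < truncatedSpokeSize q (s.getD x []) j
    have := @truncatedSpokeSize_ne_zero_iff q (s.getD x []) j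
    generalize hk : truncatedSpokeSize q (s.getD x []) j = k at this ⊢
    simp [finiteTree, ← hk, -List.getD_eq_getElem?_getD]
    omega
  | _ :: _ :: _ :: _ :: _ => exact iff_of_false (by simp [finiteTree]) id

theorem count_le_encard_setOf_getD {α : Type} [BEq α] [LawfulBEq α] (s : List α) (a d : α) :
    (s.count a : ℕ∞) ≤ {x | x < s.length ∧ s.getD x d = a}.encard := by
  rw [← List.length_idxsOf (s := 0), ← List.toFinset_card_of_nodup List.nodup_idxsOf,
    ← Set.encard_coe_eq_coe_finsetCard]
  refine Set.encard_le_encard fun x hx => ?_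
  obtain ⟨h, hget⟩ : ∃ h : x < s.length, s[x] = a := by simpa using hx
  exact ⟨h, by simpa [h] using hget⟩

variable {S : List Bool → Prop} {P : ℕ → ℕ → Bool}

theorem le_count_hubLabels {m q : ℕ} {σ : List Bool} (hσ : σ ∈ treeLevel S q) :
    q ≤ (hubLabels S P m q).count σ := by
  rw [hubLabels, List.count_append, List.count_flatMap]
  have sum_eq : ((List.range q).map (List.count σ ∘ fun _ => treeLevel S q)).sum =
      q * (treeLevel S q).count σ := by simp [Function.comp_def]
  rw [sum_eq]
  exact Nat.le_add_left_of_le (Nat.le_mul_of_pos_right q (List.count_pos_iff.2 hσ))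

theorem getD_hubLabels {m q x : ℕ} (h : x < m) :
    (hubLabels S P m q).getD x [] = initSeg (P x) q := by
  rw [hubLabels, List.getD_append _ _ _ _ (by simpa using h)]
  simp [List.getD, h]

theorem codesTree_finiteTree (hP : ∀ x, IsPath S (P x)) (m q : ℕ) :
    CodesTree S q {x | x < (hubLabels S P m q).length} (fun x => (hubLabels S P m q).getD x [])
      fun x j => truncatedSpokeSize q ((hubLabels S P m q).getD x []) j where
  label_mem x hx := by
    have mem : (hubLabels S P m q).getD x [] ∈ hubLabels S P m q := by
      rw [List.getD_eq_getElem _ _ hx]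
      exact List.getElem_mem _
    generalize (hubLabels S P m q).getD x [] = σ at mem
    rw [hubLabels, List.mem_append, List.mem_map, List.mem_flatMap] at mem
    rcases mem with ⟨y, -, rfl⟩ | ⟨_, -, hσ⟩
    · exact mem_treeLevel.2 ⟨_, hP y, rfl⟩
    · exact hσ
  many_hubs σ hσ := (Nat.cast_le.2 (le_count_hubLabels hσ)).trans (count_le_encard_setOf_getD _ σ _)
  even_spoke x _ n hn := by
    rw [truncatedSpokeSize, if_pos (by omega), spokeSize_even, Nat.cast_id]
  other_spoke x _ j := by
    by_cases hj : j < 2 * q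
    · obtain ⟨n, rfl | rfl⟩ := Nat.even_or_odd' j
      · exact Or.inl ⟨n, by omega, rfl⟩
      · rw [truncatedSpokeSize, if_pos hj, spokeSize_odd]
        exact Or.inr (Or.inr le_rfl)
    · simp [truncatedSpokeSize, hj]
  many_large_spokes x _ := by
    have odd_injective : Function.Injective fun n => 2 * n + 1 := fun a b hab => by simpa using hab
    conv_lhs => rw [← Finset.card_range q, ← Set.encard_coe_eq_coe_finsetCard,
      ← odd_injective.encard_image]
    refine Set.encard_le_encard ?_
    rintro _ ⟨n, hn, rfl⟩
    have : n < q := by simpa using hn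
    rw [Set.mem_ofPred_eq, truncatedSpokeSize, if_pos (by dsimp only; omega), spokeSize_odd]

theorem truncatedSpokeSize_initSeg (p : ℕ → Bool) {q j : ℕ} (hj : j < 2 * q) :
    (truncatedSpokeSize q (initSeg p q) j : ℕ∞) =
      min (spokeSize p (⊤ : ℕ∞) j) ((2 * q + 2 : ℕ) : ℕ∞) := by
  rw [truncatedSpokeSize, if_pos hj]
  obtain ⟨n, rfl | rfl⟩ := Nat.even_or_odd' j
  · have := Bool.toNat_le (p n)
    rw [spokeSize_even, spokeSize_even, getD_initSeg p (by omega), Nat.cast_id, min_eq_left]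
    exact_mod_cast (by omega)
  · rw [spokeSize_odd, spokeSize_odd, min_eq_right le_top]

theorem mem_finiteTree_and_colour_eq {m q : ℕ} (hmq : m ≤ q) {u : List ℕ}
    (hu : u ∈ pathTree P ⊤) (hm : ∀ x ∈ u, x < m) : u ∈ finiteTree q (hubLabels S P m q) ∧
      colour (fun x => initSeg (P x) q) (fun x => spokeSize (P x) ⊤) (2 * q + 2) u =
      colour (fun x => (hubLabels S P m q).getD x [])
        (fun x j => truncatedSpokeSize q ((hubLabels S P m q).getD x []) j) (2 * q + 2) u := by
  have size_eq {x j : ℕ} (hx : x < m) (hj : j < m) :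
      (truncatedSpokeSize q ((hubLabels S P m q).getD x []) j : ℕ∞) =
        min (spokeSize (P x) (⊤ : ℕ∞) j) ((2 * q + 2 : ℕ) : ℕ∞) := by
    rw [getD_hubLabels hx, truncatedSpokeSize_initSeg _ (by omega)]
  have le_length : m ≤ (hubLabels S P m q).length := by simp [hubLabels]
  rw [mem_finiteTree]
  match u, hu with
  | [], _ => exact ⟨trivial, rfl⟩
  | [x], _ =>
    have hx : x < m := hm x (by simp)
    exact ⟨hx.trans_le le_length, congrArg Colour.hub (getD_hubLabels hx).symm⟩
  | [j, x], h =>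
    have hx : x < m := hm x (by simp)
    have heq := size_eq hx (hm j (by simp))
    refine ⟨⟨hx.trans_le le_length, ?_⟩, congrArg Colour.spoke ?_⟩
    · dsimp only
      rw [heq]
      exact (lt_min (pos_iff_ne_zero.2 h.2) (by exact_mod_cast (by omega))).ne'
    · dsimp only
      rw [heq, min_assoc, min_self]
  | [l, j, x], h =>
    have hx : x < m := hm x (by simp)
    have hl : l < m := hm l (by simp)
    refine ⟨⟨hx.trans_le le_length, ?_⟩, rfl⟩
    dsimp only
    rw [size_eq hx (hm j (by simp))]
    exact lt_min h.2 (by exact_mod_cast (by omega))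

theorem exists_forall_mem_lt (F : Finset (List ℕ)) : ∃ m, ∀ u ∈ F, ∀ x ∈ u, x < m :=
  ⟨∑ u ∈ F, u.sum + 1, fun _ hu _ hx => Nat.lt_succ_of_le ((List.le_sum_of_mem hx).trans
    (Finset.single_le_sum (f := List.sum) (fun _ _ => Nat.zero_le _) hu))⟩

theorem Enumerates.exists_realize_finiteTree_iff (hP : Enumerates P (IsPath S)) {α : Type}
    [Finite α] (a : α → pathTree P ⊤) :
    ∃ m N, ∀ q ≥ N, ∃ h : ∀ i, (a i : List ℕ) ∈ finiteTree q (hubLabels S P m q),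
      ∀ φ : Language.graph.Formula α, N + 3 * quantifierRank φ ≤ q →
        (φ.Realize a ↔ φ.Realize fun i =>
          (⟨a i, h i⟩ : ({u | u ∈ finiteTree q (hubLabels S P m q)} : Set (List ℕ)))) := by
  obtain ⟨F, hnil, hF, hFP, haF⟩ := exists_finset_isSubtree isSubtree_hubTree trivial a
  obtain ⟨m, hm⟩ := exists_forall_mem_lt F
  refine ⟨m, m + F.card, fun q hq => ?_⟩
  have agree (u) (hu : u ∈ F) :=
    mem_finiteTree_and_colour_eq (S := S) ((Nat.le_add_right _ _).trans hq) (hFP hu) (hm u hu)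
  refine ⟨fun i => (agree _ (haF i)).1, fun φ hφ => ?_⟩
  have counts := (hP.codesTree q).childCountsAgree (codesTree_finiteTree hP.1 m q)
  have tree_eq : {u | u ∈ finiteTree q (hubLabels S P m q)} = hubTree _ _ :=
    Set.ext fun _ => mem_finiteTree
  rw [← tree_eq] at counts
  have iso := PartialIso.diag hnil hF fun u hu => ⟨hFP hu, agree u hu⟩
  exact iso.realize_iff counts isSubtree_hubTree (tree_eq ▸ isSubtree_hubTree)
    length_le_of_mem_hubTree (tree_eq ▸ length_le_of_mem_hubTree) φ
    (by rw [Finset.diag_card]; omega) (fun i => Finset.mem_diag.2 ⟨haF i, rfl⟩) finZeroElim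

theorem computable_initSeg {p : ℕ → Bool} (hp : Computable p) : Computable (initSeg p) := by
  have step : Computable₂ fun (_ : ℕ) (a : ℕ × List Bool) => a.2 ++ [p a.1] :=
    Computable.list_concat.comp (Computable.snd.comp Computable.snd)
      (hp.comp (Computable.fst.comp Computable.snd))
  refine (Computable.nat_rec Computable.id (Computable.const []) step).of_eq fun q => ?_
  induction q with
  | zero => rfl
  | succ q ih => rw [initSeg_succ, ← ih, id, id]

theorem computable_hubLabels (hS : PrimrecPred S) (hP : ∀ x, Computable (P x)) (m : ℕ) :
    Computable (hubLabels S P m) := by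
  have prefix_computable (m : ℕ) :
      Computable fun q => (List.range m).map fun x => initSeg (P x) q := by
    induction m with
    | zero => exact Computable.const _
    | succ m ih =>
      exact (Computable.list_concat.comp ih (computable_initSeg (hP m))).of_eq fun q => by
        simp [List.range_succ]
  have suffix_primrec : Primrec fun q => (List.range q).flatMap fun _ => treeLevel S q :=
    Primrec.list_flatMap Primrec.list_range ((primrec_treeLevel hS).comp Primrec.fst)
  exact Computable.list_append.comp (prefix_computable m) suffix_primrec.to_comp

theorem primrec_truncatedSpokeSize : Primrec fun a : (ℕ × List Bool) × ℕ =>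
    truncatedSpokeSize a.1.1 a.1.2 a.2 := by
  have q := (Primrec.fst (α := ℕ) (β := List Bool)).comp (Primrec.fst (β := ℕ))
  have σ := (Primrec.snd (α := ℕ) (β := List Bool)).comp (Primrec.fst (β := ℕ))
  have j := Primrec.snd (α := ℕ × List Bool) (β := ℕ)
  have two := Primrec.const (α := (ℕ × List Bool) × ℕ) 2
  have toNat : Primrec Bool.toNat := Primrec.dom_finite _
  have double_q := Primrec.nat_mul.comp two q
  have even_size := Primrec.nat_add.comp (Primrec.nat_add.comp j (toNat.comp
    ((Primrec.list_getD false).comp σ (Primrec.nat_div.comp j two)))) two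
  exact Primrec.ite (Primrec.nat_lt.comp j double_q)
    (Primrec.ite (Primrec.eq.comp (Primrec.nat_mod.comp j two) (Primrec.const 0)) even_size
      (Primrec.nat_add.comp double_q two)) (Primrec.const 0)

theorem primrec_finiteTree : Primrec₂ finiteTree := by
  have label : Primrec fun a : (ℕ × List (List Bool)) × ℕ => a.1.2.getD a.2 [] :=
    (Primrec.list_getD []).comp (Primrec.snd.comp Primrec.fst) Primrec.snd
  have spoke : Primrec fun a : ((ℕ × List (List Bool)) × ℕ) × ℕ => [a.2, a.1.2] :=
    Primrec.list_cons.comp Primrec.snd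
      (Primrec.list_cons.comp (Primrec.snd.comp Primrec.fst) (Primrec.const []))
  have size : Primrec fun a : ((ℕ × List (List Bool)) × ℕ) × ℕ =>
      truncatedSpokeSize a.1.1.1 (a.1.1.2.getD a.1.2 []) a.2 :=
    primrec_truncatedSpokeSize.comp (((Primrec.fst.comp (Primrec.fst.comp Primrec.fst)).pair
      (label.comp Primrec.fst)).pair Primrec.snd)
  have leaves : Primrec fun a : ((ℕ × List (List Bool)) × ℕ) × ℕ =>
      (List.range (truncatedSpokeSize a.1.1.1 (a.1.1.2.getD a.1.2 []) a.2)).map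
        fun l => [l, a.2, a.1.2] :=
    Primrec.list_map (Primrec.list_range.comp size)
      (Primrec.list_cons.comp Primrec.snd (spoke.comp Primrec.fst))
  have spokes : Primrec fun a : (ℕ × List (List Bool)) × ℕ =>
      (List.range (2 * a.1.1)).flatMap fun j => [j, a.2] ::
        (List.range (truncatedSpokeSize a.1.1 (a.1.2.getD a.2 []) j)).map fun l => [l, j, a.2] :=
    Primrec.list_flatMap (Primrec.list_range.comp (Primrec.nat_mul.comp (Primrec.const 2)
      (Primrec.fst.comp Primrec.fst))) (Primrec.list_cons.comp spoke leaves)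
  have hub : Primrec fun a : (ℕ × List (List Bool)) × ℕ => [a.2] :=
    Primrec.list_cons.comp Primrec.snd (Primrec.const [])
  exact Primrec.list_cons.comp (Primrec.const []) (Primrec.list_flatMap
    (Primrec.list_range.comp (Primrec.list_length.comp Primrec.snd))
    (Primrec.list_cons.comp hub spokes))

end FiniteTree

section Reading

variable {V : Type}

/-- The list of all `k`-tuples of elements of `D`. -/
def tuples (D : List V) : ℕ → List (List V)
  | 0 => [List.nil]
  | k + 1 => (tuples D k).flatMap fun e => D.map fun u => e ++ [u]

theorem ofFn_mem_tuples {D : List V} {k : ℕ} (w : Fin k → ({u | u ∈ D} : Set V)) :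
    (List.ofFn fun i => (w i : V)) ∈ tuples D k := by
  induction k with
  | zero => simp [tuples]
  | succ k ih =>
    rw [List.ofFn_succ', List.concat_eq_append]
    simp only [tuples, List.mem_flatMap, List.mem_map]
    exact ⟨_, ih fun i => w i.castSucc, _, (w (Fin.last k)).2, rfl⟩

/-- The token of the variable with code `s` in a formula with `k` bound variables. -/
def variableToken (k s : ℕ) : ℕ := 2 * Nat.pair k (Nat.pair (2 * s) 0 + 1)

/-- The code of the variable with token `x`, a left inverse of `variableToken k`. -/
def variableCode (x : ℕ) : ℕ := ((x / 2).unpair.2 - 1).unpair.1 / 2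

theorem variableCode_variableToken (k s : ℕ) : variableCode (variableToken k s) = s := by
  rw [variableCode, variableToken, Nat.mul_div_cancel_left _ two_pos, Nat.unpair_pair]
  simp

/-- The tokens of the variables of a formula with `n` free and `k` bound variables; the free
variables have even codes and the bound ones have odd codes. -/
def variableTokens (n k : ℕ) : List ℕ :=
  (List.range n).map (fun i => variableToken k (2 * i)) ++
    (List.range k).map fun i => variableToken k (2 * i + 1)

theorem zero_notMem_variableTokens (n k : ℕ) : 0 ∉ variableTokens n k := by
  have (s : ℕ) : variableToken k s ≠ 0 := by
    have := Nat.right_le_pair k (Nat.pair (2 * s) 0 + 1)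
    rw [variableToken]
    omega
  simp [variableTokens, this]

/-- The result of reading a formula off the front of a list of tokens: the number of the remaining
tokens, and the list of the assignments to the bound variables that satisfy the formula. -/
abbrev Reading (V : Type) := Option (ℕ × List (List V))

/-- The reading, in a table of readings, of the `i`-th suffix as a formula with `k` bound
variables. -/
def lookup (T : List (List (Reading V))) (i k : ℕ) : Reading V := (T.getD i []).getD k none

open Classical in
/-- The reading of an implication, where `T` reads the suffixes of the following `n` tokens. -/
noncomputable def readImp (D : List V) (k n : ℕ) (T : List (List (Reading V))) : Reading V :=
  (lookup T 0 k).bind fun a => (lookup T (n - a.1) k).bind fun b =>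
    some (b.1, (tuples D k).filter fun e => e ∉ a.2 ∨ e ∈ b.2)

open Classical in
/-- The reading of a universal formula, where `T` reads the suffixes of the following tokens. -/
noncomputable def readAll (D : List V) (k : ℕ) (T : List (List (Reading V))) : Reading V :=
  (lookup T 0 (k + 1)).bind fun a =>
    some (a.1, (tuples D k).filter fun e => ∀ u ∈ D, e ++ [u] ∈ a.2)

variable [Inhabited V]

/-- The value of the variable with token `x` when the free variables have the values `vals` and the
bound variables have the values `e`. -/
def tokenValue (vals e : List V) (x : ℕ) : V :=
  (if variableCode x % 2 = 0 then vals else e).getD (variableCode x / 2) default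

open Classical in
/-- The reading of an atomic formula that states the relation `R` between the variables with tokens
`x` and `y`, and is followed by `r` tokens. -/
noncomputable def readAtom (R : V → V → Prop) (vals D : List V) (k r x y : ℕ) : Reading V :=
  if x ∈ variableTokens vals.length k ∧ y ∈ variableTokens vals.length k then
    some (r, (tuples D k).filter fun e => R (tokenValue vals e x) (tokenValue vals e y))
  else none

/-- The reading of the tokens `x :: ts`, where `T` reads the suffixes of `ts`. The tokens `3`, `7`,
`4 * k + 11` and `25` stand for implications, universal quantifiers, falsity and adjacency;
equations have no token of their own, and adjacency is followed by the level token `4 * k + 3`. -/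
noncomputable def readCons (adj : V → V → Prop) (vals D : List V) (k x : ℕ) (ts : List ℕ)
    (T : List (List (Reading V))) : Reading V :=
  if x = 3 then readImp D k ts.length T
  else if x = 7 then readAll D k T
  else if x = 4 * k + 11 then some (ts.length, [])
  else if x = 25 then
    if ts.getD 0 0 = 4 * k + 3 then
      readAtom adj vals D k (ts.length - 3) (ts.getD 1 0) (ts.getD 2 0)
    else none
  else readAtom Eq vals D k (ts.length - 1) x (ts.getD 0 0)

/-- The table of the readings of all suffixes of a list of tokens as formulas with at most `K` bound
variables. -/
noncomputable def readings (adj : V → V → Prop) (vals D : List V) (K : ℕ) :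
    List ℕ → List (List (Reading V))
  | [] => []
  | x :: ts => ((List.range (K + 1)).map fun k =>
      readCons adj vals D k x ts (readings adj vals D K ts)) :: readings adj vals D K ts

/-- The reading of a list of tokens as a formula with `k ≤ K` bound variables. -/
noncomputable def reading (adj : V → V → Prop) (vals D : List V) (K : ℕ) (l : List ℕ) (k : ℕ) :
    Reading V :=
  lookup (readings adj vals D K l) 0 k

variable {adj : V → V → Prop} {vals D : List V} {K k x : ℕ}

theorem lookup_readings (l : List ℕ) (i k : ℕ) :
    lookup (readings adj vals D K l) i k = reading adj vals D K (l.drop i) k := by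
  induction l generalizing i with
  | nil => simp [reading, readings, lookup]
  | cons x ts ih =>
    cases i with
    | zero => rfl
    | succ i => rw [List.drop_succ_cons, ← ih]; simp [readings, lookup]

theorem reading_nil : reading adj vals D K [] k = none := by
  simp [reading, readings, lookup]

theorem reading_cons {ts : List ℕ} (hk : k ≤ K) : reading adj vals D K (x :: ts) k =
    readCons adj vals D k x ts (readings adj vals D K ts) := by
  simp [reading, readings, lookup, List.getD, Nat.lt_succ_of_le hk]

theorem le_of_reading_eq_some {l : List ℕ} {a : ℕ × List (List V)}
    (h : reading adj vals D K l k = some a) : k ≤ K := by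
  by_contra hk
  cases l <;> simp_all [reading, readings, lookup, List.getD]

end Reading

section PrimrecReading

variable {V γ : Type} [Primcodable V] [Primcodable γ] {vals D : γ → List V}
  {T : γ → List (List (Reading V))} {ts : γ → List ℕ} {k n r x y : γ → ℕ}

theorem primrecRel_mem_list {β : Type} [Primcodable β] :
    PrimrecRel fun (b : β) (l : List β) => b ∈ l := by
  classical
  exact ((Primrec.eq (α := β)).exists_mem_list.comp Primrec.snd Primrec.fst).of_eq (by simp)

theorem primrec_tuples : Primrec₂ (tuples : List V → ℕ → List (List V)) := by
  have extend : Primrec₂ fun (D : List V) (a : ℕ × List (List V)) =>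
      a.2.flatMap fun e => D.map fun u => e ++ [u] :=
    Primrec.list_flatMap (Primrec.snd.comp Primrec.snd)
      (Primrec.list_map (Primrec.fst.comp Primrec.fst)
        (Primrec.list_concat.comp (Primrec.snd.comp Primrec.fst) Primrec.snd))
  refine (Primrec.nat_rec (Primrec.const [List.nil]) extend).of_eq fun D k => ?_
  induction k with
  | zero => rfl
  | succ k ih => simp only [tuples, ← ih]

theorem primrec_filter_tuples {R : List V → γ → Prop} [DecidableRel R] (hR : PrimrecRel R)
    (hD : Primrec D) (hk : Primrec k) :
    Primrec fun c => (tuples (D c) (k c)).filter fun e => R e c :=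
  hR.listFilter.comp (primrec_tuples.comp hD hk) Primrec.id

theorem primrec_variableToken : Primrec₂ variableToken :=
  Primrec.nat_mul.comp (Primrec.const 2) (Primrec₂.natPair.comp Primrec.fst (Primrec.succ.comp
    (Primrec₂.natPair.comp (Primrec.nat_mul.comp (Primrec.const 2) Primrec.snd)
      (Primrec.const 0))))

theorem primrec_variableCode : Primrec variableCode :=
  Primrec.nat_div.comp (Primrec.fst.comp (Primrec.unpair.comp (Primrec.pred.comp (Primrec.snd.comp
    (Primrec.unpair.comp (Primrec.nat_div.comp Primrec.id (Primrec.const 2)))))))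
    (Primrec.const 2)

theorem primrec_variableTokens : Primrec₂ variableTokens := by
  have double : Primrec fun a : (ℕ × ℕ) × ℕ => 2 * a.2 :=
    Primrec.nat_mul.comp (Primrec.const 2) Primrec.snd
  have level : Primrec fun a : (ℕ × ℕ) × ℕ => a.1.2 := Primrec.snd.comp Primrec.fst
  exact Primrec.list_append.comp
    (Primrec.list_map (Primrec.list_range.comp Primrec.fst)
      (primrec_variableToken.comp level double))
    (Primrec.list_map (Primrec.list_range.comp Primrec.snd)
      (primrec_variableToken.comp level (Primrec.succ.comp double)))

theorem primrec_lookup (hT : Primrec T) (hn : Primrec n) (hk : Primrec k) :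
    Primrec fun c => lookup (T c) (n c) (k c) :=
  (Primrec.list_getD none).comp ((Primrec.list_getD []).comp hT hn) hk

theorem primrec_readImp (hD : Primrec D) (hk : Primrec k) (hn : Primrec n) (hT : Primrec T) :
    Primrec fun c => readImp (D c) (k c) (n c) (T c) := by
  classical
  have holds : PrimrecRel fun (e : List V) (c : (γ × ℕ × List (List V)) × ℕ × List (List V)) =>
      e ∉ c.1.2.2 ∨ e ∈ c.2.2 :=
    (primrecRel_mem_list.comp Primrec.fst (Primrec.snd.comp (Primrec.snd.comp
      (Primrec.fst.comp Primrec.snd)))).not.or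
      (primrecRel_mem_list.comp Primrec.fst (Primrec.snd.comp (Primrec.snd.comp Primrec.snd)))
  refine Primrec.option_bind (primrec_lookup hT (Primrec.const 0) hk)
    (Primrec.option_bind (primrec_lookup (hT.comp Primrec.fst) (Primrec.nat_sub.comp
      (hn.comp Primrec.fst) (Primrec.fst.comp Primrec.snd)) (hk.comp Primrec.fst)) ?_)
  exact Primrec.option_some.comp ((Primrec.fst.comp Primrec.snd).pair
    (primrec_filter_tuples holds (hD.comp (Primrec.fst.comp Primrec.fst))
      (hk.comp (Primrec.fst.comp Primrec.fst))))

theorem primrec_readAll (hD : Primrec D) (hk : Primrec k) (hT : Primrec T) :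
    Primrec fun c => readAll (D c) (k c) (T c) := by
  classical
  have extends_to : PrimrecRel fun (u : V) (a : List V × γ × ℕ × List (List V)) =>
      a.1 ++ [u] ∈ a.2.2.2 :=
    primrecRel_mem_list.comp (Primrec.list_concat.comp (Primrec.fst.comp Primrec.snd) Primrec.fst)
      (Primrec.snd.comp (Primrec.snd.comp (Primrec.snd.comp Primrec.snd)))
  have holds : PrimrecRel fun (e : List V) (c : γ × ℕ × List (List V)) =>
      ∀ u ∈ D c.1, e ++ [u] ∈ c.2.2 :=
    extends_to.forall_mem_list.comp (hD.comp (Primrec.fst.comp Primrec.snd)) Primrec.id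
  exact Primrec.option_bind (primrec_lookup hT (Primrec.const 0) (Primrec.succ.comp hk))
    (Primrec.option_some.comp ((Primrec.fst.comp Primrec.snd).pair
      (primrec_filter_tuples holds (hD.comp Primrec.fst) (hk.comp Primrec.fst))))

variable [Inhabited V]

theorem primrec_tokenValue {e : γ → List V} (hv : Primrec vals) (he : Primrec e) (hx : Primrec x) :
    Primrec fun c => tokenValue (vals c) (e c) (x c) :=
  have code := primrec_variableCode.comp hx
  (Primrec.list_getD default).comp (Primrec.ite (Primrec.eq.comp
    (Primrec.nat_mod.comp code (Primrec.const 2)) (Primrec.const 0)) hv he)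
    (Primrec.nat_div.comp code (Primrec.const 2))

theorem primrec_readAtom {R : V → V → Prop} (hR : PrimrecRel R) (hv : Primrec vals)
    (hD : Primrec D) (hk : Primrec k) (hr : Primrec r) (hx : Primrec x) (hy : Primrec y) :
    Primrec fun c => readAtom R (vals c) (D c) (k c) (r c) (x c) (y c) := by
  classical
  have tokens := primrec_variableTokens.comp (Primrec.list_length.comp hv) hk
  have holds : PrimrecRel fun (e : List V) c =>
      R (tokenValue (vals c) e (x c)) (tokenValue (vals c) e (y c)) :=
    hR.comp (primrec_tokenValue (hv.comp Primrec.snd) Primrec.fst (hx.comp Primrec.snd))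
      (primrec_tokenValue (hv.comp Primrec.snd) Primrec.fst (hy.comp Primrec.snd))
  exact Primrec.ite ((primrecRel_mem_list.comp hx tokens).and (primrecRel_mem_list.comp hy tokens))
    (Primrec.option_some.comp (hr.pair (primrec_filter_tuples holds hD hk))) (Primrec.const none)

variable {adj : V → V → Prop}

theorem primrec_readCons (hadj : PrimrecRel adj) (hv : Primrec vals) (hD : Primrec D)
    (hk : Primrec k) (hx : Primrec x) (hts : Primrec ts) (hT : Primrec T) :
    Primrec fun c => readCons adj (vals c) (D c) (k c) (x c) (ts c) (T c) := by
  have four_mul := Primrec.nat_mul.comp (Primrec.const 4) hk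
  have length := Primrec.list_length.comp hts
  have token (i : ℕ) : Primrec fun c => (ts c).getD i 0 :=
    (Primrec.list_getD 0).comp hts (Primrec.const i)
  exact Primrec.ite (Primrec.eq.comp hx (Primrec.const 3)) (primrec_readImp hD hk length hT)
    (Primrec.ite (Primrec.eq.comp hx (Primrec.const 7)) (primrec_readAll hD hk hT)
    (Primrec.ite (Primrec.eq.comp hx (Primrec.nat_add.comp four_mul (Primrec.const 11)))
      (Primrec.option_some.comp (length.pair (Primrec.const [])))
    (Primrec.ite (Primrec.eq.comp hx (Primrec.const 25))
      (Primrec.ite (Primrec.eq.comp (token 0) (Primrec.nat_add.comp four_mul (Primrec.const 3)))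
        (primrec_readAtom hadj hv hD hk (Primrec.nat_sub.comp length (Primrec.const 3)) (token 1)
          (token 2)) (Primrec.const none))
      (primrec_readAtom Primrec.eq hv hD hk (Primrec.nat_sub.comp length (Primrec.const 1)) hx
        (token 0)))))

theorem primrec_readings (hadj : PrimrecRel adj) (hv : Primrec vals) (hD : Primrec D)
    (hk : Primrec k) (hts : Primrec ts) :
    Primrec fun c => readings adj (vals c) (D c) (k c) (ts c) := by
  have row : Primrec₂ fun c (a : ℕ × List ℕ × List (List (Reading V))) =>
      (List.range (k c + 1)).map fun i => readCons adj (vals c) (D c) i a.1 a.2.1 a.2.2 :=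
    Primrec.list_map (Primrec.list_range.comp (Primrec.succ.comp (hk.comp Primrec.fst)))
      (primrec_readCons hadj (hv.comp (Primrec.fst.comp Primrec.fst))
        (hD.comp (Primrec.fst.comp Primrec.fst)) Primrec.snd
        (Primrec.fst.comp (Primrec.snd.comp Primrec.fst))
        (Primrec.fst.comp (Primrec.snd.comp (Primrec.snd.comp Primrec.fst)))
        (Primrec.snd.comp (Primrec.snd.comp (Primrec.snd.comp Primrec.fst))))
  have step : Primrec₂ fun c (a : ℕ × List ℕ × List (List (Reading V))) =>
      ((List.range (k c + 1)).map fun i => readCons adj (vals c) (D c) i a.1 a.2.1 a.2.2) ::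
        a.2.2 :=
    Primrec.list_cons.comp row (Primrec.snd.comp (Primrec.snd.comp Primrec.snd))
  refine (Primrec.list_rec hts (Primrec.const []) step).of_eq fun c => ?_
  induction ts c with
  | nil => rfl
  | cons x l ih => simp only [readings, ← ih]

theorem primrec_reading (hadj : PrimrecRel adj) (hv : Primrec vals) (hD : Primrec D)
    (hn : Primrec n) (hts : Primrec ts) (hk : Primrec k) :
    Primrec fun c => reading adj (vals c) (D c) (n c) (ts c) (k c) :=
  primrec_lookup (primrec_readings hadj hv hD hn hts) (Primrec.const 0) hk

end PrimrecReading

section Tokens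

variable {α : Type}

theorem exists_eq_var (t : Language.graph.Term α) : ∃ a, t = Term.var a := by
  cases t with
  | var a => exact ⟨a, rfl⟩
  | func f => exact f.elim

@[elab_as_elim]
theorem graphFormula_induction
    {motive : ∀ {k}, Language.graph.BoundedFormula α k → Prop} {k : ℕ}
    (φ : Language.graph.BoundedFormula α k)
    (falsum : ∀ {k}, motive (BoundedFormula.falsum : Language.graph.BoundedFormula α k))
    (equal : ∀ {k} (s t : α ⊕ Fin k), motive (BoundedFormula.equal (Term.var s) (Term.var t)))
    (rel : ∀ {k} (s t : α ⊕ Fin k),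
      motive (BoundedFormula.rel graphRel.adj ![Term.var s, Term.var t]))
    (imp : ∀ {k} (φ ψ : Language.graph.BoundedFormula α k), motive φ → motive ψ →
      motive (φ.imp ψ))
    (all : ∀ {k} (φ : Language.graph.BoundedFormula α (k + 1)), motive φ → motive φ.all) :
    motive φ := by
  induction φ with
  | falsum => exact falsum
  | equal t₁ t₂ =>
    obtain ⟨s, rfl⟩ := exists_eq_var t₁
    obtain ⟨t, rfl⟩ := exists_eq_var t₂
    exact equal s t
  | rel R ts =>
    cases R
    obtain ⟨s, hs⟩ := exists_eq_var (ts 0)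
    obtain ⟨t, ht⟩ := exists_eq_var (ts 1)
    rw [show ts = ![Term.var s, Term.var t] by ext i; fin_cases i <;> assumption]
    exact rel s t
  | imp φ ψ hφ hψ => exact imp φ ψ hφ hψ
  | all φ hφ => exact all φ hφ

variable [Encodable α] {k : ℕ}

/-- The codes of the symbols of a formula, in Polish order. -/
def tokens (φ : Language.graph.BoundedFormula α k) : List ℕ :=
  φ.listEncode.map Encodable.encode

theorem encode_map_encode {β : Type} [Encodable β] (l : List β) :
    Encodable.encode (l.map Encodable.encode) = Encodable.encode l := by
  induction l with
  | nil => rfl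
  | cons a l ih =>
    rw [List.map_cons, Encodable.encode_list_cons, Encodable.encode_list_cons, ih]
    rfl

theorem fmlCode_eq_encode_tokens (φ : Language.graph.BoundedFormula α k) :
    fmlCode φ = Encodable.encode (tokens φ) :=
  (encode_map_encode _).symm

theorem tokens_falsum (k : ℕ) :
    tokens (BoundedFormula.falsum : Language.graph.BoundedFormula α k) = [4 * k + 11] := by
  change [2 * (2 * (k + 2) + 1) + 1] = _
  congr 1
  omega

theorem tokens_imp (φ ψ : Language.graph.BoundedFormula α k) :
    tokens (φ.imp ψ) = 3 :: (tokens φ ++ tokens ψ) := by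
  simp only [tokens, BoundedFormula.listEncode, List.cons_append, List.map_cons, List.map_append]
  rfl

theorem tokens_all (φ : Language.graph.BoundedFormula α (k + 1)) :
    tokens φ.all = 7 :: tokens φ :=
  rfl

theorem tokens_equal (s t : α ⊕ Fin k) :
    tokens (BoundedFormula.equal (L := Language.graph) (Term.var s) (Term.var t)) =
      [variableToken k (Encodable.encode s), variableToken k (Encodable.encode t)] :=
  rfl

theorem tokens_rel (s t : α ⊕ Fin k) :
    tokens (BoundedFormula.rel (L := Language.graph) graphRel.adj ![Term.var s, Term.var t]) =
      [25, 4 * k + 3, variableToken k (Encodable.encode s),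
        variableToken k (Encodable.encode t)] := by
  change [25, 2 * (2 * k + 1) + 1, variableToken k (Encodable.encode s),
    variableToken k (Encodable.encode t)] = _
  congr 2
  omega

theorem quantifierRank_lt_length_tokens (φ : Language.graph.BoundedFormula α k) :
    quantifierRank φ < (tokens φ).length := by
  induction φ using graphFormula_induction with
  | falsum => simp [tokens_falsum, quantifierRank]
  | equal => simp [tokens_equal, quantifierRank]
  | rel => simp [tokens_rel, quantifierRank]
  | imp φ ψ hφ hψ =>
    simp only [tokens_imp, quantifierRank, List.length_cons, List.length_append]
    omega
  | all φ hφ =>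
    simp only [tokens_all, quantifierRank, List.length_cons]
    omega

theorem length_le_encode (l : List ℕ) : l.length ≤ Encodable.encode l := by
  induction l with
  | nil => simp
  | cons a l ih =>
    rw [Encodable.encode_list_cons, List.length_cons]
    exact Nat.succ_le_succ (ih.trans (Nat.right_le_pair _ _))

theorem quantifierRank_le_fmlCode (φ : Language.graph.BoundedFormula α k) :
    quantifierRank φ ≤ fmlCode φ := by
  rw [fmlCode_eq_encode_tokens]
  exact (quantifierRank_lt_length_tokens φ).le.trans (length_le_encode _)

theorem mem_variableTokens {n x : ℕ} (hn : ∀ i, i < n ↔ ∃ a : α, Encodable.encode a = i) :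
    x ∈ variableTokens n k ↔ ∃ s : α ⊕ Fin k, variableToken k (Encodable.encode s) = x := by
  simp only [variableTokens, List.mem_append, List.mem_map, List.mem_range, hn, Sum.exists]
  refine or_congr ⟨?_, ?_⟩ ⟨?_, ?_⟩
  · rintro ⟨_, ⟨a, rfl⟩, rfl⟩
    exact ⟨a, rfl⟩
  · rintro ⟨a, rfl⟩
    exact ⟨_, ⟨a, rfl⟩, rfl⟩
  · rintro ⟨i, hi, rfl⟩
    exact ⟨⟨i, hi⟩, rfl⟩
  · rintro ⟨i, rfl⟩
    exact ⟨i, i.2, rfl⟩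

end Tokens

section Correctness

variable {V α : Type} [Inhabited V] [Encodable α] {vals D : List V} {adj : V → V → Prop} {K k : ℕ}

theorem exists_readAtom_eq_some {R : V → V → Prop} {r x y : ℕ} {a : ℕ × List (List V)}
    (hn : ∀ i, i < vals.length ↔ ∃ a : α, Encodable.encode a = i)
    (h : readAtom R vals D k r x y = some a) : a.1 = r ∧ ∃ s t : α ⊕ Fin k,
      variableToken k (Encodable.encode s) = x ∧ variableToken k (Encodable.encode t) = y := by
  rw [readAtom] at h
  split_ifs at h with hxy
  obtain ⟨s, hs⟩ := (mem_variableTokens hn).1 hxy.1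
  obtain ⟨t, ht⟩ := (mem_variableTokens hn).1 hxy.2
  exact ⟨congrArg Prod.fst (Option.some.inj h).symm, s, t, hs, ht⟩

theorem exists_eq_tokens_append_of_readCons {x : ℕ} {ts : List ℕ} {T : List (List (Reading V))}
    {a : ℕ × List (List V)} (hn : ∀ i, i < vals.length ↔ ∃ a : α, Encodable.encode a = i)
    (ih : ∀ i k b, lookup T i k = some b → ∃ (φ : Language.graph.BoundedFormula α k) (l : List ℕ),
      ts.drop i = tokens φ ++ l ∧ l.length = b.1)
    (h : readCons adj vals D k x ts T = some a) :
    ∃ (φ : Language.graph.BoundedFormula α k) (l : List ℕ),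
      x :: ts = tokens φ ++ l ∧ l.length = a.1 := by
  rw [readCons] at h
  split_ifs at h with h_imp h_all h_falsum h_rel h_level
  · simp only [readImp, Option.bind_eq_some_iff, Option.some.injEq] at h
    obtain ⟨b, hb, c, hc, rfl⟩ := h
    obtain ⟨φ, l, hφ, hl⟩ := ih _ _ _ hb
    obtain ⟨ψ, l', hψ, hl'⟩ := ih _ _ _ hc
    rw [List.drop_zero] at hφ
    rw [hφ, ← hl, List.length_append, Nat.add_sub_cancel, List.drop_left] at hψ
    exact ⟨φ.imp ψ, l', by simp [tokens_imp, h_imp, hφ, hψ], hl'⟩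
  · simp only [readAll, Option.bind_eq_some_iff, Option.some.injEq] at h
    obtain ⟨b, hb, rfl⟩ := h
    obtain ⟨φ, l, hφ, hl⟩ := ih _ _ _ hb
    rw [List.drop_zero] at hφ
    exact ⟨φ.all, l, by simp [tokens_all, h_all, hφ], hl⟩
  · obtain rfl := Option.some.inj h
    exact ⟨BoundedFormula.falsum, ts, by rw [tokens_falsum, h_falsum]; rfl, rfl⟩
  · obtain ⟨ha, s, t, hs, ht⟩ := exists_readAtom_eq_some hn h
    match ts with
    | [] | [_] | [_, _] =>
      exact absurd (ht ▸ (mem_variableTokens hn).2 ⟨t, rfl⟩) (zero_notMem_variableTokens _ _)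
    | _ :: _ :: _ :: l =>
      obtain rfl : _ = _ := hs
      obtain rfl : _ = _ := ht
      obtain rfl : _ = _ := h_level
      exact ⟨BoundedFormula.rel graphRel.adj ![Term.var s, Term.var t], l,
        by rw [tokens_rel, h_rel]; rfl, ha.symm⟩
  · obtain ⟨ha, s, t, rfl, ht⟩ := exists_readAtom_eq_some hn h
    match ts with
    | [] => exact absurd (ht ▸ (mem_variableTokens hn).2 ⟨t, rfl⟩) (zero_notMem_variableTokens _ _)
    | _ :: l =>
      obtain rfl : _ = _ := ht
      exact ⟨BoundedFormula.equal (Term.var s) (Term.var t), l, rfl, ha.symm⟩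

theorem exists_eq_tokens_append_of_reading {l : List ℕ} {a : ℕ × List (List V)}
    (hn : ∀ i, i < vals.length ↔ ∃ a : α, Encodable.encode a = i)
    (h : reading adj vals D K l k = some a) :
    ∃ (φ : Language.graph.BoundedFormula α k) (ts : List ℕ),
      l = tokens φ ++ ts ∧ ts.length = a.1 := by
  induction hN : l.length using Nat.strong_induction_on generalizing l k a with
  | _ N ih =>
    cases l with
    | nil => simp [reading_nil] at h
    | cons x ts =>
      rw [reading_cons (le_of_reading_eq_some h)] at h
      refine exists_eq_tokens_append_of_readCons hn (fun i k b hb => ?_) h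
      rw [lookup_readings] at hb
      refine ih _ ?_ hb rfl
      rw [List.length_drop, ← hN, List.length_cons]
      omega

variable {v : α → ({u | u ∈ D} : Set V)}

theorem tokenValue_variableToken (hv : ∀ a, vals.getD (Encodable.encode a) default = v a)
    (w : Fin k → ({u | u ∈ D} : Set V)) (s : α ⊕ Fin k) :
    tokenValue vals (List.ofFn fun i => (w i : V)) (variableToken k (Encodable.encode s)) =
      (Sum.elim v w s).1 := by
  rw [tokenValue, variableCode_variableToken]
  cases s with
  | inl a =>
    have : Encodable.encode (Sum.inl a : α ⊕ Fin k) = 2 * Encodable.encode a := rfl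
    rw [this, if_pos (by omega), Nat.mul_div_cancel_left _ two_pos, hv]
    rfl
  | inr i =>
    have : Encodable.encode (Sum.inr i : α ⊕ Fin k) = 2 * (i : ℕ) + 1 := rfl
    rw [this, if_neg (by omega), show (2 * (i : ℕ) + 1) / 2 = i by omega]
    simp [List.getD]

theorem exists_readAtom_variableToken (R : V → V → Prop) (r : ℕ)
    (hn : ∀ i, i < vals.length ↔ ∃ a : α, Encodable.encode a = i)
    (hv : ∀ a, vals.getD (Encodable.encode a) default = v a) (s t : α ⊕ Fin k) :
    ∃ E, readAtom R vals D k r (variableToken k (Encodable.encode s))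
        (variableToken k (Encodable.encode t)) = some (r, E) ∧
      ∀ w : Fin k → ({u | u ∈ D} : Set V), (List.ofFn fun i => (w i : V)) ∈ E ↔
        R (Sum.elim v w s).1 (Sum.elim v w t).1 := by
  classical
  rw [readAtom, if_pos ⟨(mem_variableTokens hn).2 ⟨s, rfl⟩, (mem_variableTokens hn).2 ⟨t, rfl⟩⟩]
  refine ⟨_, rfl, fun w => ?_⟩
  rw [List.mem_filter, and_iff_right (ofFn_mem_tuples w), decide_eq_true_eq,
    tokenValue_variableToken hv, tokenValue_variableToken hv]

/-- Reading the tokens of `φ` off the front of a list gives the assignments to the bound variables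
that satisfy `φ` when the free variables have the values `v`. -/
def ReadsCorrectly [Language.graph.Structure ({u | u ∈ D} : Set V)] (adj : V → V → Prop)
    (vals : List V) (K : ℕ) (v : α → ({u | u ∈ D} : Set V))
    (φ : Language.graph.BoundedFormula α k) : Prop :=
  ∀ ts : List ℕ, k + (tokens φ).length ≤ K →
    ∃ E, reading adj vals D K (tokens φ ++ ts) k = some (ts.length, E) ∧
      ∀ w : Fin k → ({u | u ∈ D} : Set V),
        (List.ofFn fun i => (w i : V)) ∈ E ↔ φ.Realize v w

section ReadsCorrectly

variable [Language.graph.Structure ({u | u ∈ D} : Set V)]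

theorem readsCorrectly_falsum :
    ReadsCorrectly adj vals K v (.falsum : Language.graph.BoundedFormula α k) := by
  intro ts hK
  rw [tokens_falsum, List.length_singleton] at hK
  rw [tokens_falsum, List.singleton_append, reading_cons (by omega), readCons,
    if_neg (by omega), if_neg (by omega), if_pos rfl]
  exact ⟨[], rfl, fun w => by simp [BoundedFormula.Realize]⟩

theorem readsCorrectly_equal (hn : ∀ i, i < vals.length ↔ ∃ a : α, Encodable.encode a = i)
    (hv : ∀ a, vals.getD (Encodable.encode a) default = v a) (s t : α ⊕ Fin k) :
    ReadsCorrectly adj vals K v (.equal (.var s) (.var t) : Language.graph.BoundedFormula α k) := by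
  intro ts hK
  have even (s) : variableToken k s % 2 = 0 := Nat.mul_mod_right _ _
  have hs := even (Encodable.encode s)
  rw [tokens_equal, List.cons_append, reading_cons (by omega), readCons, if_neg (by omega),
    if_neg (by omega), if_neg (by omega), if_neg (by omega)]
  obtain ⟨E, hE, hmem⟩ := exists_readAtom_variableToken (k := k) Eq ts.length hn hv s t
  exact ⟨E, hE, fun w => (hmem w).trans Subtype.ext_iff.symm⟩

theorem readsCorrectly_adj
    (hadj : ∀ a b : ({u | u ∈ D} : Set V),
      Structure.RelMap (L := Language.graph) graphRel.adj ![a, b] ↔ adj a b)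
    (hn : ∀ i, i < vals.length ↔ ∃ a : α, Encodable.encode a = i)
    (hv : ∀ a, vals.getD (Encodable.encode a) default = v a) (s t : α ⊕ Fin k) :
    ReadsCorrectly adj vals K v
      (.rel graphRel.adj ![.var s, .var t] : Language.graph.BoundedFormula α k) := by
  intro ts hK
  rw [tokens_rel, List.cons_append, reading_cons (by omega), readCons, if_neg (by omega),
    if_neg (by omega), if_neg (by omega), if_pos rfl]
  obtain ⟨E, hE, hmem⟩ := exists_readAtom_variableToken (k := k) adj ts.length hn hv s t
  refine ⟨E, (if_pos rfl).trans hE, fun w => (hmem w).trans ((hadj _ _).symm.trans ?_)⟩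
  exact (BoundedFormula.realize_rel₂ (t₁ := Term.var s) (t₂ := Term.var t)).symm

theorem ReadsCorrectly.imp {φ ψ : Language.graph.BoundedFormula α k}
    (hφ : ReadsCorrectly adj vals K v φ) (hψ : ReadsCorrectly adj vals K v ψ) :
    ReadsCorrectly adj vals K v (φ.imp ψ) := by
  classical
  intro ts hK
  simp only [tokens_imp, List.length_cons, List.length_append] at hK
  obtain ⟨E, hE, hmem⟩ := hφ (tokens ψ ++ ts) (by omega)
  obtain ⟨E', hE', hmem'⟩ := hψ ts (by omega)
  rw [tokens_imp, List.cons_append, reading_cons (by omega), readCons, if_pos rfl, readImp,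
    lookup_readings, List.drop_zero, List.append_assoc, hE, Option.bind_some, lookup_readings,
    List.length_append, Nat.add_sub_cancel, List.drop_left, hE']
  refine ⟨_, rfl, fun w => ?_⟩
  rw [List.mem_filter, and_iff_right (ofFn_mem_tuples w), decide_eq_true_eq, hmem, hmem',
    BoundedFormula.realize_imp, imp_iff_not_or]

theorem ReadsCorrectly.all {φ : Language.graph.BoundedFormula α (k + 1)}
    (hφ : ReadsCorrectly adj vals K v φ) : ReadsCorrectly adj vals K v φ.all := by
  classical
  intro ts hK
  simp only [tokens_all, List.length_cons] at hK
  obtain ⟨E, hE, hmem⟩ := hφ ts (by omega)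
  rw [tokens_all, List.cons_append, reading_cons (by omega), readCons, if_neg (by omega),
    if_pos rfl, readAll, lookup_readings, List.drop_zero, hE]
  refine ⟨_, rfl, fun w => ?_⟩
  have snoc_mem (u : ({u | u ∈ D} : Set V)) :
      (List.ofFn fun i => (w i : V)) ++ [u.1] ∈ E ↔ φ.Realize v (Fin.snoc w u) := by
    rw [← hmem, List.ofFn_succ', List.concat_eq_append]
    simp
  rw [List.mem_filter, and_iff_right (ofFn_mem_tuples w), decide_eq_true_eq,
    BoundedFormula.realize_all, ← forall_congr' snoc_mem]
  exact ⟨fun h u => h u.1 u.2, fun h u hu => h ⟨u, hu⟩⟩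

theorem readsCorrectly
    (hadj : ∀ a b : ({u | u ∈ D} : Set V),
      Structure.RelMap (L := Language.graph) graphRel.adj ![a, b] ↔ adj a b)
    (hn : ∀ i, i < vals.length ↔ ∃ a : α, Encodable.encode a = i)
    (hv : ∀ a, vals.getD (Encodable.encode a) default = v a)
    (φ : Language.graph.BoundedFormula α k) : ReadsCorrectly adj vals K v φ := by
  induction φ using graphFormula_induction with
  | falsum => exact readsCorrectly_falsum
  | equal s t => exact readsCorrectly_equal hn hv s t
  | rel s t => exact readsCorrectly_adj hadj hn hv s t
  | imp φ ψ hφ hψ => exact hφ.imp hψ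
  | all φ hφ => exact hφ.all

end ReadsCorrectly

open Classical in
theorem exists_fmlCode_eq_and_realize_iff [Language.graph.Structure ({u | u ∈ D} : Set V)]
    (hadj : ∀ a b : ({u | u ∈ D} : Set V),
      Structure.RelMap (L := Language.graph) graphRel.adj ![a, b] ↔ adj a b)
    (hn : ∀ i, i < vals.length ↔ ∃ a : α, Encodable.encode a = i)
    (hv : ∀ a, vals.getD (Encodable.encode a) default = v a) (l : List ℕ) :
    (∃ φ : Language.graph.Formula α, fmlCode φ = Encodable.encode l ∧ φ.Realize v) ↔
      ∃ a ∈ (reading adj vals D l.length l 0).toList, a.1 = 0 ∧ [] ∈ a.2 := by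
  have complete (φ : Language.graph.Formula α) : ∃ E,
      reading adj vals D (tokens φ).length (tokens φ) 0 = some (0, E) ∧
        ([] ∈ E ↔ φ.Realize v) := by
    obtain ⟨E, hE, hmem⟩ := readsCorrectly hadj hn hv φ [] (Nat.zero_add _).le
    rw [List.append_nil] at hE
    exact ⟨E, hE, hmem default⟩
  simp only [fmlCode_eq_encode_tokens, Encodable.encode_inj, Option.mem_toList]
  constructor
  · rintro ⟨φ, rfl, hφ⟩
    obtain ⟨E, hE, hmem⟩ := complete φ
    exact ⟨_, hE, rfl, hmem.2 hφ⟩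
  · rintro ⟨⟨r, E⟩, hE, rfl : r = 0, hnil⟩
    obtain ⟨φ, ts, rfl, hts⟩ := exists_eq_tokens_append_of_reading hn hE
    obtain rfl := List.length_eq_zero_iff.1 hts
    rw [List.append_nil] at hE ⊢
    obtain ⟨E', hE', hmem⟩ := complete φ
    obtain rfl : E = E' := by simpa using hE.symm.trans hE'
    exact ⟨φ, rfl, hmem.1 hnil⟩

end Correctness

section Decidability

variable {V : Type} [Primcodable V]

theorem primrecPred_accepts :
    PrimrecPred fun o : Reading V => ∃ a ∈ o.toList, a.1 = 0 ∧ [] ∈ a.2 := by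
  have accepts : PrimrecPred fun a : ℕ × List (List V) => a.1 = 0 ∧ [] ∈ a.2 :=
    (Primrec.eq.comp Primrec.fst (Primrec.const 0)).and
      (primrecRel_mem_list.comp (Primrec.const _) Primrec.snd)
  exact accepts.exists_mem_list.comp Primrec.optionToList

variable {α : Type} [Encodable α]

/-- The structures and assignments depend on the code of the formula, so that `D c` may be a finite
approximation of an infinite structure that is good enough for the formula with code `c`. -/
theorem computablePred_realize [Inhabited V] {adj : V → V → Prop} (hadj : PrimrecRel adj)
    {D : ℕ → List V} (hD : Computable D) [∀ c, Language.graph.Structure ({u | u ∈ D c} : Set V)]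
    (hrel : ∀ c, ∀ a b : ({u | u ∈ D c} : Set V),
      Structure.RelMap (L := Language.graph) graphRel.adj ![a, b] ↔ adj a b) {vals : List V}
    (hn : ∀ i, i < vals.length ↔ ∃ a : α, Encodable.encode a = i)
    {v : ∀ c, α → ({u | u ∈ D c} : Set V)}
    (hv : ∀ c a, vals.getD (Encodable.encode a) default = v c a) :
    ComputablePred fun c => ∃ φ : Language.graph.Formula α, fmlCode φ = c ∧ φ.Realize (v c) := by
  have read : Computable fun c => reading adj vals (D c) (Denumerable.ofNat (List ℕ) c).length
      (Denumerable.ofNat (List ℕ) c) 0 := by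
    have : Primrec fun a : List V × List ℕ => reading adj vals a.1 a.2.length a.2 0 :=
      primrec_reading hadj (Primrec.const vals) Primrec.fst (Primrec.list_length.comp Primrec.snd)
        Primrec.snd (Primrec.const 0)
    exact this.to_comp.comp (hD.pair (Computable.ofNat _))
  obtain ⟨_, accepts⟩ := primrecPred_accepts (V := V)
  refine ComputablePred.of_eq ⟨fun c => inferInstance, accepts.to_comp.comp read⟩ fun c => ?_
  refine (exists_fmlCode_eq_and_realize_iff (hrel c) hn (hv c) _).symm.trans ?_
  rw [Denumerable.encode_ofNat]

theorem primrecRel_treeAdj : PrimrecRel (TreeAdj (ι := ℕ)) := by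
  have isChild : PrimrecPred fun uv : List ℕ × List ℕ => uv.2 ≠ [] ∧ uv.2.tail = uv.1 :=
    PrimrecPred.and (PrimrecPred.not (Primrec.eq.comp Primrec.snd (Primrec.const [])))
      (Primrec.eq.comp (Primrec.list_tail.comp Primrec.snd) Primrec.fst)
  have isChild_iff (u v : List ℕ) : (v ≠ [] ∧ v.tail = u) ↔ ∃ n, v = n :: u := by
    cases v <;> simp
  exact (PrimrecPred.or isChild (isChild.comp (Primrec.snd.pair Primrec.fst))).of_eq fun uv =>
    or_congr (isChild_iff uv.1 uv.2) (isChild_iff uv.2 uv.1)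

theorem Enumerates.computablePred_realize {S : List Bool → Prop} {P : ℕ → ℕ → Bool}
    (hS : PrimrecPred S) (hP : Enumerates P (IsPath S)) (hPc : ∀ x, Computable (P x)) {n : ℕ}
    (hn : ∀ i, i < n ↔ ∃ a : α, Encodable.encode a = i) (a : α → pathTree P ⊤) :
    ComputablePred fun c => ∃ φ : Language.graph.Formula α, fmlCode φ = c ∧ φ.Realize a := by
  have : Finite α :=
    Finite.of_injective (fun i => (⟨Encodable.encode i, (hn _).2 ⟨i, rfl⟩⟩ : Fin n)) fun i j h =>
      Encodable.encode_injective (Fin.mk.inj h)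
  obtain ⟨m, N, happrox⟩ := hP.exists_realize_finiteTree_iff a
  set q : ℕ → ℕ := fun c => N + 3 * c
  set D : ℕ → List (List ℕ) := fun c => finiteTree (q c) (hubLabels S P m (q c))
  choose hmem hiff using fun c => happrox (q c) (Nat.le_add_right _ _)
  have hq : Computable q :=
    (Primrec.nat_add.comp (Primrec.const N)
      (Primrec.nat_mul.comp (Primrec.const 3) Primrec.id)).to_comp
  have hD : Computable D :=
    primrec_finiteTree.to_comp.comp hq ((computable_hubLabels hS hPc m).comp hq)
  choose g hg using fun i : Fin n => (hn i).1 i.isLt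
  refine (PaperAL.computablePred_realize primrecRel_treeAdj hD
    (vals := List.ofFn fun i => (a (g i) : List ℕ)) (v := fun c i => ⟨a i, hmem c i⟩)
    (fun _ _ _ => Iff.rfl) (by simpa using hn) fun _ i => ?_).of_eq fun c => ?_
  · have hi := (hn (Encodable.encode i)).2 ⟨i, rfl⟩
    have : g ⟨Encodable.encode i, hi⟩ = i := Encodable.encode_injective (hg _)
    simp [List.getD, hi, this]
  · refine exists_congr fun φ => and_congr_right fun hφ => (hiff c φ ?_).symm
    have := quantifierRank_le_fmlCode φ
    simp only [q]
    omega

end Decidability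

section UltrafilterLimit

variable {ι : Type} {U : Ultrafilter ι}

theorem eventually_eq_const_or_forall_eventually_le (D : ι → ℕ∞) :
    (∃ k : ℕ, ∀ᶠ s in U, D s = k) ∨ ∀ k : ℕ, ∀ᶠ s in U, (k : ℕ∞) ≤ D s := by
  refine or_iff_not_imp_right.2 fun h => ?_
  push Not at h
  obtain ⟨K, hK⟩ := h
  have hbounded : ∀ᶠ s in U, ∃ k ∈ Set.Iio K, D s = (k : ℕ) := by
    filter_upwards [hK] with s hs
    lift D s to ℕ using (hs.trans (ENat.natCast_lt_top K)).ne with k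
    exact ⟨k, by exact_mod_cast hs, rfl⟩
  obtain ⟨k, -, hk⟩ := (Ultrafilter.eventually_exists_mem_iff (Set.finite_Iio K)).1 hbounded
  exact ⟨k, hk⟩

/-- The colouring of the hub tree that codes the sequences `P x` with unbounded odd spokes, at
precision `q`. -/
noncomputable def pathColour (P : ℕ → ℕ → Bool) (q : ℕ) : List ℕ → Colour :=
  colour (fun x => initSeg (P x) q) (fun x => spokeSize (P x) ⊤) (2 * q + 2)

/-- Finite partial isomorphisms `T s` which have a common range `B`, and which for each precision
preserve colours for almost all `s`. The nodes of `B` are then limits of their preimages. -/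
structure IsLimitIso (U : Ultrafilter ι) (P : ℕ → ℕ → Bool) (B : Finset (List ℕ))
    (T : ι → Finset (List ℕ × List ℕ)) : Prop where
  partialIso : ∀ q, ∀ᶠ s in U,
    PartialIso (pathTree P ⊤) (pathColour P q) (pathTree P ⊤) (pathColour P q) (T s)
  image_snd : ∀ s, (T s).image Prod.snd = B

/-- For almost all `s`, the node `f s` is outside the domain of `T s`, and it is a child of the
node that `T s` sends to `b`. -/
def IsNewChild (U : Ultrafilter ι) (P : ℕ → ℕ → Bool) (T : ι → Finset (List ℕ × List ℕ))
    (f : ι → List ℕ) (b : List ℕ) : Prop :=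
  ∀ᶠ s in U, ∃ n a, f s = n :: a ∧ n :: a ∈ pathTree P ⊤ ∧ (a, b) ∈ T s ∧
    ∀ b', (n :: a, b') ∉ T s

/-- The node `v` has the limit along `U` of the colours of `f`. -/
def IsLimitNode (U : Ultrafilter ι) (P : ℕ → ℕ → Bool) (f : ι → List ℕ) (v : List ℕ) : Prop :=
  v ∈ pathTree P ⊤ ∧ ∀ q, ∀ᶠ s in U, pathColour P q (f s) = pathColour P q v

variable {S : List Bool → Prop} {P : ℕ → ℕ → Bool} {B : Finset (List ℕ)}
  {T : ι → Finset (List ℕ × List ℕ)} {f : ι → List ℕ} {b : List ℕ}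

theorem isLimitIso_singleton : IsLimitIso U P {[]} fun _ => {([], [])} where
  partialIso _ := .of_forall fun _ => by
    refine PartialIso.diag (F := {[]}) (by simp) (by simp [IsSubtree]) fun u hu => ?_
    rw [Finset.mem_singleton.1 hu]
    exact ⟨trivial, trivial, rfl⟩
  image_snd _ := rfl

theorem exists_fresh_of_infinite {Q : ℕ → Prop} (h : {m | Q m}.Infinite) (B : Finset (List ℕ))
    (b : List ℕ) : ∃ m, Q m ∧ m :: b ∉ B := by
  have hfinite : {m | m :: b ∈ B}.Finite :=
    B.finite_toSet.preimage fun m _ m' _ e => by simpa using e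
  obtain ⟨m, hm, hmB⟩ := (h.sdiff hfinite).nonempty
  exact ⟨m, hm, hmB⟩

/-- The limit of hubs codes the pointwise limit of the sequences coded. -/
theorem exists_isLimitNode_hub (hP : Enumerates P (IsPath S)) {x : ι → ℕ}
    (hf : ∀ᶠ s in U, f s = [x s]) (B : Finset (List ℕ)) :
    ∃ m, IsLimitNode U P f [m] ∧ [m] ∉ B := by
  classical
  set p : ℕ → Bool := fun k => decide (∀ᶠ s in U, P (x s) k = true) with hp
  have agree_at (k : ℕ) : ∀ᶠ s in U, P (x s) k = p k := by
    by_cases hk : ∀ᶠ s in U, P (x s) k = true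
    · simp [hp, hk]
    · simpa [hp, hk] using Ultrafilter.eventually_not.2 hk
  have agree_below (q : ℕ) : ∀ᶠ s in U, initSeg (P (x s)) q = initSeg p q := by
    simp only [initSeg_eq_initSeg_iff]
    exact (Set.finite_Iio q).eventually_all.2 fun k _ => agree_at k
  have hpath : IsPath S p := fun k hk => by
    obtain ⟨s, hseg, hs⟩ := ((agree_below k).and (agree_at k)).exists
    exact hseg ▸ hP.1 (x s) k (hs.trans hk)
  obtain ⟨m, hm, hmB⟩ := exists_fresh_of_infinite (hP.2 p hpath) B []
  refine ⟨m, ⟨trivial, fun q => ?_⟩, hmB⟩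
  filter_upwards [hf, agree_below q] with s hs hq
  simp only [hs, pathColour, colour, hq, hm]

/-- The limit of spokes with unboundedly many leaves is an odd spoke. -/
theorem exists_isLimitNode_odd_spoke {j x : ι → ℕ} (hf : ∀ᶠ s in U, f s = [j s, x s])
    (hlarge : ∀ k : ℕ, ∀ᶠ s in U, (k : ℕ∞) ≤ spokeSize (P (x s)) ⊤ (j s)) (y : ℕ)
    (B : Finset (List ℕ)) : ∃ m, IsLimitNode U P f [m, y] ∧ [m, y] ∉ B := by
  have hinfinite : {m : ℕ | ∃ n, 2 * n + 1 = m}.Infinite :=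
    Set.infinite_range_of_injective fun n n' h => by simpa using h
  obtain ⟨_, ⟨n, rfl⟩, hB⟩ := exists_fresh_of_infinite hinfinite B [y]
  refine ⟨_, ⟨⟨trivial, by simp [spokeSize_odd]⟩, fun q => ?_⟩, hB⟩
  filter_upwards [hf, hlarge (2 * q + 2)] with s hs hq
  simp only [hs, pathColour, colour, spokeSize_odd, min_eq_right hq, le_top, min_eq_right]

namespace IsLimitIso

theorem insert (hT : IsLimitIso U P B T) (hf : IsNewChild U P T f b) {m : ℕ}
    (hm : IsLimitNode U P f (m :: b)) (hmB : m :: b ∉ B) :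
    IsLimitIso U P (insert (m :: b) B) fun s => insert (f s, m :: b) (T s) where
  partialIso q := by
    filter_upwards [hT.partialIso q, hf, hm.2 q] with s hTs ⟨n, a, hfs, hA, hab, hleft⟩ hc
    rw [hfs] at hc ⊢
    refine hTs.insert hab hA hm.1 hc hleft fun a' ha' => hmB ?_
    exact hT.image_snd s ▸ Finset.mem_image_of_mem Prod.snd ha'
  image_snd s := by rw [Finset.image_insert, hT.image_snd]

theorem card_eq (hT : IsLimitIso U P B T) : ∀ᶠ s in U, (T s).card = B.card := by
  filter_upwards [hT.partialIso 0] with s hTs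
  rw [← hT.image_snd s, Finset.card_image_of_injOn]
  rintro ⟨a, b⟩ hab ⟨a', b'⟩ hab' (rfl : b = b')
  rw [(hTs.inj hab hab').2 rfl]

theorem exists_isLimitNode_of_colour_determined (hP : Enumerates P (IsPath S))
    (hT : IsLimitIso U P B T) (hf : IsNewChild U P T f b) {κ : ℕ → Colour}
    (hκ : ∀ q, ∀ᶠ s in U, pathColour P q (f s) = κ q) {q : ℕ} (hq : B.card < q)
    (hdet : ∀ m, m :: b ∈ pathTree P ⊤ → pathColour P q (m :: b) = κ q →
      ∀ q', pathColour P q' (m :: b) = κ q') :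
    ∃ m, IsLimitNode U P f (m :: b) ∧ m :: b ∉ B := by
  obtain ⟨s, hTs, hcard, ⟨n, a, hfs, hA, hab, hleft⟩, hκs⟩ :=
    ((hT.partialIso q).and (hT.card_eq.and (hf.and (hκ q)))).exists
  obtain ⟨m, hm, hc, hfresh⟩ := PartialIso.exists_fresh_child
    ((hP.codesTree q).childCountsAgree (hP.codesTree q)) hTs hab hA hleft (by omega)
  refine ⟨m, ⟨hm, fun q' => ?_⟩, fun hmB => ?_⟩
  · filter_upwards [hκ q'] with s hs
    rw [hs, hdet m hm (hc.symm.trans (hfs ▸ hκs))]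
  · rw [← hT.image_snd s] at hmB
    obtain ⟨⟨a', _⟩, ha', rfl⟩ := Finset.mem_image.1 hmB
    exact hfresh a' ha'

theorem exists_isLimitNode_spoke (hP : Enumerates P (IsPath S)) (hT : IsLimitIso U P B T)
    {y : ℕ} (hf : IsNewChild U P T f [y]) {j x : ι → ℕ} (hfjx : ∀ᶠ s in U, f s = [j s, x s]) :
    ∃ m, IsLimitNode U P f [m, y] ∧ [m, y] ∉ B := by
  rcases eventually_eq_const_or_forall_eventually_le (U := U)
    fun s => spokeSize (P (x s)) ⊤ (j s) with ⟨k, hk⟩ | hlarge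
  · have hκ (q : ℕ) : ∀ᶠ s in U, pathColour P q (f s) = .spoke (min k (2 * q + 2 : ℕ)) := by
      filter_upwards [hfjx, hk] with s hs hks
      simp only [hs, pathColour, colour, hks]
    refine hT.exists_isLimitNode_of_colour_determined hP hf hκ (q := B.card + k + 1) (by omega)
      fun m _ hc q' => ?_
    have hmin : min (spokeSize (P y) (⊤ : ℕ∞) m) (2 * (B.card + k + 1) + 2 : ℕ) = k :=
      (Colour.spoke.inj hc).trans (min_eq_left (by exact_mod_cast (by omega)))
    have hsize : spokeSize (P y) (⊤ : ℕ∞) m = k := by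
      rcases min_choice (spokeSize (P y) (⊤ : ℕ∞) m) (2 * (B.card + k + 1) + 2 : ℕ) with h | h
      · exact h.symm.trans hmin
      · have := Nat.cast_injective (R := ℕ∞) (h.symm.trans hmin)
        omega
    simp only [pathColour, colour, hsize]
  · exact exists_isLimitNode_odd_spoke hfjx hlarge y B

theorem exists_isLimitNode_leaf (hP : Enumerates P (IsPath S)) (hT : IsLimitIso U P B T)
    {j y : ℕ} (hf : IsNewChild U P T f [j, y]) (hleaf : ∀ᶠ s in U, ∃ l j' x, f s = [l, j', x]) :
    ∃ m, IsLimitNode U P f [m, j, y] ∧ [m, j, y] ∉ B := by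
  refine hT.exists_isLimitNode_of_colour_determined hP hf (κ := fun _ => .leaf) (fun q => ?_)
    (Nat.lt_succ_self _) fun _ _ _ _ => rfl
  filter_upwards [hleaf] with s ⟨l, j', x, hs⟩
  rw [hs]
  rfl

theorem exists_isLimitNode (hP : Enumerates P (IsPath S)) (hT : IsLimitIso U P B T)
    (hf : IsNewChild U P T f b) : ∃ m, IsLimitNode U P f (m :: b) ∧ m :: b ∉ B := by
  have hchild : ∀ᶠ s in U, f s ∈ pathTree P ⊤ ∧ (f s).length = b.length + 1 := by
    filter_upwards [hf, hT.partialIso 0] with s ⟨n, a, hs, hA, hab, _⟩ hTs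
    rw [hs, List.length_cons, hTs.length_eq hab]
    exact ⟨hA, rfl⟩
  match b, hf, hchild with
  | [], _, hchild =>
    obtain ⟨x, hx⟩ := (hchild.mono fun s hs => List.length_eq_one_iff.1 hs.2).choice
    exact exists_isLimitNode_hub hP hx B
  | [y], hf, hchild =>
    obtain ⟨j, hj⟩ := (hchild.mono fun s hs => List.length_eq_two.1 hs.2).choice
    obtain ⟨x, hx⟩ := hj.choice
    exact hT.exists_isLimitNode_spoke hP hf hx
  | [j, y], hf, hchild =>
    exact hT.exists_isLimitNode_leaf hP hf (hchild.mono fun s hs => List.length_eq_three.1 hs.2)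
  | _ :: _ :: _ :: _, _, hchild =>
    obtain ⟨s, hA, hlength⟩ := hchild.exists
    have := length_le_of_mem_hubTree _ hA
    simp only [List.length_cons] at hlength
    omega

theorem exists_extend_child (hP : Enumerates P (IsPath S)) (hT : IsLimitIso U P B T)
    (hf : ∀ᶠ s in U, f s ∈ pathTree P ⊤ ∧ f s ≠ [] ∧ ((f s).tail, b) ∈ T s) :
    ∃ B' T', IsLimitIso U P B' T' ∧ (∀ s, T s ⊆ T' s) ∧ ∃ v, ∀ᶠ s in U, (f s, v) ∈ T' s := by
  by_cases hold : ∀ᶠ s in U, ∃ v ∈ B, (f s, v) ∈ T s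
  · obtain ⟨v, -, hv⟩ := (Ultrafilter.eventually_exists_mem_iff B.finite_toSet).1 hold
    exact ⟨B, T, hT, fun _ => subset_rfl, v, hv⟩
  · have hnew : IsNewChild U P T f b := by
      filter_upwards [hf, Ultrafilter.eventually_not.2 hold] with s ⟨hA, hne, hab⟩ hs
      obtain ⟨n, a, ha⟩ := List.exists_cons_of_ne_nil hne
      rw [ha] at hA hab hs
      refine ⟨n, a, ha, hA, hab, fun v hv => hs ⟨v, ?_, hv⟩⟩
      exact hT.image_snd s ▸ Finset.mem_image_of_mem Prod.snd hv
    obtain ⟨m, hm, hmB⟩ := hT.exists_isLimitNode hP hnew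
    exact ⟨_, _, hT.insert hnew hm hmB, fun s => Finset.subset_insert _ _, m :: b,
      .of_forall fun s => Finset.mem_insert_self _ _⟩

theorem exists_extend (hP : Enumerates P (IsPath S)) (hT : IsLimitIso U P B T) (d : ℕ)
    (hf : ∀ᶠ s in U, f s ∈ pathTree P ⊤ ∧ (f s).length ≤ d) :
    ∃ B' T', IsLimitIso U P B' T' ∧ (∀ s, T s ⊆ T' s) ∧ ∃ v, ∀ᶠ s in U, (f s, v) ∈ T' s := by
  induction d generalizing f with
  | zero =>
    refine ⟨B, T, hT, fun _ => subset_rfl, [], ?_⟩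
    filter_upwards [hf, hT.partialIso 0] with s hs hTs
    exact List.length_eq_zero_iff.1 (Nat.le_zero.1 hs.2) ▸ hTs.nil_mem
  | succ d ih =>
    by_cases hnil : ∀ᶠ s in U, f s = []
    · refine ⟨B, T, hT, fun _ => subset_rfl, [], ?_⟩
      filter_upwards [hnil, hT.partialIso 0] with s hs hTs
      exact hs ▸ hTs.nil_mem
    · replace hnil := Ultrafilter.eventually_not.2 hnil
      obtain ⟨B₁, T₁, hT₁, hTT₁, b, hb⟩ := ih (f := fun s => (f s).tail) <| by
        filter_upwards [hf] with s ⟨hA, hlength⟩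
        rw [List.length_tail]
        exact ⟨isSubtree_hubTree.mem_of_suffix (List.tail_suffix _) hA, by omega⟩
      obtain ⟨B₂, T₂, hT₂, hTT₂, hv⟩ := hT₁.exists_extend_child hP (f := f) <| by
        filter_upwards [hf, hnil, hb] with s hs hne hbs
        exact ⟨hs.1, hne, hbs⟩
      exact ⟨B₂, T₂, hT₂, fun s => (hTT₁ s).trans (hTT₂ s), hv⟩

theorem exists_forall_eventually_mem (hP : Enumerates P (IsPath S)) {α : Type} [Finite α]
    (a : ι → α → pathTree P ⊤) : ∃ B T, IsLimitIso U P B T ∧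
      ∃ v : α → List ℕ, ∀ᶠ s in U, ∀ i, ((a s i : List ℕ), v i) ∈ T s := by
  have := Fintype.ofFinite α
  have hfinset (I : Finset α) : ∃ B T, IsLimitIso U P B T ∧
      ∀ i ∈ I, ∃ v, ∀ᶠ s in U, ((a s i : List ℕ), v) ∈ T s := by
    classical
    induction I using Finset.induction_on with
    | empty => exact ⟨_, _, isLimitIso_singleton, by simp⟩
    | insert i I _ ih =>
      obtain ⟨B, T, hT, hI⟩ := ih
      obtain ⟨B', T', hT', hTT', hi⟩ := hT.exists_extend hP 3 (f := fun s => (a s i : List ℕ))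
        (.of_forall fun s => ⟨(a s i).2, length_le_of_mem_hubTree _ (a s i).2⟩)
      refine ⟨B', T', hT', (Finset.forall_mem_insert ..).2 ⟨hi, fun i' hi' => ?_⟩⟩
      obtain ⟨v, hv⟩ := hI i' hi'
      exact ⟨v, hv.mono fun s hs => hTT' s hs⟩
  obtain ⟨B, T, hT, hmem⟩ := hfinset Finset.univ
  choose v hv using fun i => hmem i (Finset.mem_univ i)
  exact ⟨B, T, hT, v, Filter.eventually_all.2 hv⟩

end IsLimitIso

/-- Łoś's theorem for the tree itself: it is its own limit along an ultrafilter. -/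
theorem Enumerates.exists_realize_iff_eventually (hP : Enumerates P (IsPath S)) (U : Ultrafilter ι)
    {α : Type} [Finite α] (a : ι → α → pathTree P ⊤) : ∃ b : α → pathTree P ⊤,
      ∀ φ : Language.graph.Formula α, φ.Realize b ↔ ∀ᶠ s in U, φ.Realize (a s) := by
  obtain ⟨B, T, hT, v, hv⟩ := IsLimitIso.exists_forall_eventually_mem (U := U) hP a
  obtain ⟨s, hs, hTs⟩ := (hv.and (hT.partialIso 0)).exists
  let b : α → pathTree P ⊤ := fun i => ⟨v i, (hTs.mem (hs i)).2.1⟩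
  refine ⟨b, fun φ => ?_⟩
  have hiff : ∀ᶠ s in U, φ.Realize (a s) ↔ φ.Realize b := by
    set q := B.card + 3 * quantifierRank φ
    filter_upwards [hv, hT.card_eq, hT.partialIso q] with s hs hcard hTs
    exact hTs.realize_iff ((hP.codesTree q).childCountsAgree (hP.codesTree q))
      isSubtree_hubTree isSubtree_hubTree length_le_of_mem_hubTree length_le_of_mem_hubTree φ
      (by rw [hcard]) hs nofun
  rw [Filter.eventually_congr hiff, Filter.eventually_const]

end UltrafilterLimit

section Theory

theorem elementarilyEquivalent_hubTree {S : List Bool → Prop} {H H' : Set ℕ}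
    {d d' : ℕ → ℕ → ℕ∞} {label label' : ℕ → ℕ → List Bool}
    (h : ∀ q, CodesTree S q H (label q) d) (h' : ∀ q, CodesTree S q H' (label' q) d') :
    hubTree H d ≅[Language.graph] hubTree H' d' := by
  refine elementarilyEquivalent_iff.2 fun φ => ?_
  set q := 1 + 3 * quantifierRank φ
  have hroot : PartialIso (hubTree H d) (colour (label q) d (2 * q + 2)) (hubTree H' d')
      (colour (label' q) d' (2 * q + 2)) (Finset.diag {[]}) := by
    refine PartialIso.diag (by simp) (by simp [IsSubtree]) fun u hu => ?_
    rw [Finset.mem_singleton.1 hu]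
    exact ⟨trivial, trivial, rfl⟩
  exact hroot.realize_iff ((h q).childCountsAgree (h' q)) isSubtree_hubTree isSubtree_hubTree
    length_le_of_mem_hubTree length_le_of_mem_hubTree φ (by simp [q]) nofun nofun

instance {H : Set ℕ} {d : ℕ → ℕ → ℕ∞} : Nonempty (hubTree H d) := ⟨⟨[], trivial⟩⟩

instance {P : ℕ → ℕ → Bool} {o : ℕ∞} : Nonempty (pathTree P o) := ⟨⟨[], trivial⟩⟩

theorem simpleGraph_subset_completeTheory_treeGraph {ι : Type} (A : Set (List ι)) :
    Language.Theory.simpleGraph ⊆ Language.graph.completeTheory A :=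
  Theory.model_iff_subset_completeTheory.1 (simpleGraph_model (treeGraph A))

theorem exists_realize_iff_of_elementarilyEquivalent {M N : Type} [L.Structure M] [L.Structure N]
    (h : M ≅[L] N) {α : Type} [Finite α] (φ : L.Formula α) :
    (∃ a : α → M, φ.Realize a) ↔ ∃ a : α → N, φ.Realize a := by
  have realize_iExs (K : Type) [L.Structure K] :
      K ⊨ Formula.iExs α (φ.relabel (Sum.inr : α → Empty ⊕ α)) ↔ ∃ a : α → K, φ.Realize a := by
    rw [Sentence.Realize, Formula.realize_iExs]
    simp only [Formula.realize_relabel, Sum.elim_comp_inr]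
  rw [← realize_iExs, ← realize_iExs, h.realize_sentence]

theorem elementarilyEquivalent_of_model_completeTheory (M N : Type) [L.Structure M] [L.Structure N]
    [Nonempty M] [N ⊨ L.completeTheory M] : M ≅[L] N :=
  elementarilyEquivalent_iff.2 fun φ => (realize_iff_of_model_completeTheory M N φ).symm

/-- By compactness: the finite subsets of a type are realized, and a limit of realizations along
an ultrafilter finer than their inclusion order realizes the whole type. -/
theorem exists_typeOf_eq_of_ultrafilter_limits {M : Type} [L.Structure M] [Nonempty M] {n : ℕ}
    (hlim : ∀ {ι : Type} (U : Ultrafilter ι) (a : ι → Fin n → M), ∃ b : Fin n → M,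
      ∀ φ : L.Formula (Fin n), φ.Realize b ↔ ∀ᶠ s in U, φ.Realize (a s))
    {p : Set (L.Formula (Fin n))} (hp : IsTypeOf (L.completeTheory M) p) :
    ∃ a : Fin n → M, typeOf M a = p := by
  classical
  obtain ⟨N, -, b, rfl⟩ := hp
  have hfinite (F : Finset (typeOf (L := L) N b)) : ∃ a : Fin n → M, ∀ φ ∈ F, φ.1.Realize a := by
    have hF : (Formula.iInf fun φ : F => φ.1.1).Realize b :=
      Formula.realize_iInf.2 fun φ => φ.1.2
    obtain ⟨a, ha⟩ := (exists_realize_iff_of_elementarilyEquivalent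
      (elementarilyEquivalent_of_model_completeTheory M N) _).2 ⟨b, hF⟩
    exact ⟨a, fun φ hφ => Formula.realize_iInf.1 ha ⟨φ, hφ⟩⟩
  choose a ha using hfinite
  obtain ⟨c, hc⟩ := hlim (Ultrafilter.of Filter.atTop) a
  have realize_of_mem (φ) (hφ : φ ∈ typeOf (L := L) N b) : φ.Realize c := by
    refine (hc φ).2 (Ultrafilter.of_le _ ?_)
    filter_upwards [Filter.eventually_ge_atTop {⟨φ, hφ⟩}] with F hF
    exact ha F ⟨φ, hφ⟩ (hF (Finset.mem_singleton_self _))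
  refine ⟨c, Set.ext fun φ => ⟨fun h => ?_, realize_of_mem φ⟩⟩
  by_contra hφ
  exact Formula.realize_not.1 (realize_of_mem φ.not (Formula.realize_not.2 hφ)) h

namespace Enumerates

variable {S : List Bool → Prop} {P : ℕ → ℕ → Bool}

theorem exists_typeOf_eq (hP : Enumerates P (IsPath S)) {n : ℕ}
    {p : Set (Language.graph.Formula (Fin n))}
    (hp : IsTypeOf (Language.graph.completeTheory (pathTree P ⊤)) p) :
    ∃ a : Fin n → pathTree P ⊤, typeOf (pathTree P ⊤) a = p :=
  exists_typeOf_eq_of_ultrafilter_limits (fun U a => hP.exists_realize_iff_eventually U a) hp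

theorem isSmall (hP : Enumerates P (IsPath S)) :
    IsSmall (Language.graph.completeTheory (pathTree P ⊤)) := fun _ =>
  (Set.countable_range fun a => typeOf (pathTree P ⊤) a).mono fun _ hp => hP.exists_typeOf_eq hp

theorem decidableTheory (hP : Enumerates P (IsPath S)) (hS : PrimrecPred S)
    (hPc : ∀ x, Computable (P x)) :
    DecidableTheory (Language.graph.completeTheory (pathTree P ⊤)) :=
  hP.computablePred_realize hS hPc (n := 0) (α := Empty) (by simp) default

theorem decidableType (hP : Enumerates P (IsPath S)) (hS : PrimrecPred S)
    (hPc : ∀ x, Computable (P x)) {n : ℕ} {p : Set (Language.graph.Formula (Fin n))}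
    (hp : IsTypeOf (Language.graph.completeTheory (pathTree P ⊤)) p) : DecidableType p := by
  obtain ⟨a, rfl⟩ := hP.exists_typeOf_eq hp
  exact hP.computablePred_realize hS hPc (α := Fin n)
    (fun i => ⟨fun h => ⟨⟨i, h⟩, rfl⟩, by rintro ⟨a, rfl⟩; exact a.isLt⟩) a

end Enumerates

end Theory

section Degrees

variable {α : Type}

/-- The edge relation of a structure in the language of graphs. -/
def Adjacent {M : Type} [Language.graph.Structure M] (x y : M) : Prop :=
  Structure.RelMap (L := Language.graph) (n := 2) graphRel.adj ![x, y]

/-- `x` has a neighbour `y` with exactly `d` neighbours. -/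
def HasNeighbourOfDegree {M : Type} [Language.graph.Structure M] (d : ℕ) (x : M) : Prop :=
  ∃ y, Adjacent x y ∧ {w | Adjacent y w}.encard = d

/-- The formula stating that the relation `adj` holds between two variables. -/
def adjacentFormula {k : ℕ} (s t : α ⊕ Fin k) : Language.graph.BoundedFormula α k :=
  .rel graphRel.adj ![.var s, .var t]

/-- The formula stating that two variables are different. -/
def neFormula {k : ℕ} (s t : α ⊕ Fin k) : Language.graph.BoundedFormula α k :=
  .imp (.equal (.var s) (.var t)) .falsum

/-- The formula stating that the bound variable `0` has fewer than `d` neighbours different from the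
bound variables `1, …, k`. -/
def fewNeighbours : (d k : ℕ) → Language.graph.BoundedFormula α (k + 1)
  | 0, _ => .falsum
  | d + 1, k => .all (.imp (adjacentFormula (.inr 0) (.inr (Fin.last (k + 1))))
      ((List.finRange k).foldr
        (fun i => .imp (neFormula (.inr i.succ.castSucc) (.inr (Fin.last (k + 1)))))
        (fewNeighbours d (k + 1))))

/-- The formula stating that the free variable `i` has no neighbour of degree `d`. -/
def noNeighbourOfDegree (i : α) (d : ℕ) : Language.graph.Formula α :=
  .all (.imp (adjacentFormula (.inl i) (.inr 0))
    (.imp (fewNeighbours (d + 1) 0) (fewNeighbours d 0)))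

section Semantics

theorem realize_foldr_imp {ι M : Type} [L.Structure M] {k : ℕ} {v : α → M} {xs : Fin k → M}
    {f : ι → L.BoundedFormula α k} {φ : L.BoundedFormula α k} (l : List ι) :
    (l.foldr (fun i => (f i).imp) φ).Realize v xs ↔
      (∀ i ∈ l, (f i).Realize v xs) → φ.Realize v xs := by
  induction l with
  | nil => simp
  | cons i l ih => simp [ih, and_imp]

theorem encard_lt_add_one_iff {β : Type} {A : Set β} {d : ℕ} :
    A.encard < (d + 1 : ℕ) ↔ ∀ w ∈ A, (A \ {w}).encard < d := by
  have remove {w : β} (hw : w ∈ A) : A.encard < (d + 1 : ℕ) ↔ (A \ {w}).encard < d := by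
    rw [← Set.encard_sdiff_singleton_add_one hw, Nat.cast_add_one]
    exact ENat.add_lt_add_iff_right ENat.one_ne_top
  refine ⟨fun h w hw => (remove hw).1 h, fun h => ?_⟩
  obtain rfl | ⟨w, hw⟩ := A.eq_empty_or_nonempty
  · simp
  · exact (remove hw).2 (h w hw)

variable {M : Type} [Language.graph.Structure M] {v : α → M} {k : ℕ}

theorem realize_adjacentFormula {s t : α ⊕ Fin k} {xs : Fin k → M} :
    (adjacentFormula s t).Realize v xs ↔ Adjacent (Sum.elim v xs s) (Sum.elim v xs t) := by
  change Structure.RelMap (L := Language.graph) (n := 2) graphRel.adj _ ↔ _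
  exact iff_of_eq (congrArg _ (funext (Fin.forall_fin_two.2 ⟨rfl, rfl⟩)))

theorem realize_neFormula {s t : α ⊕ Fin k} {xs : Fin k → M} :
    (neFormula s t).Realize v xs ↔ Sum.elim v xs s ≠ Sum.elim v xs t :=
  Iff.rfl

theorem realize_fewNeighbours {d : ℕ} {xs : Fin (k + 1) → M} :
    (fewNeighbours d k).Realize v xs ↔
      ({w | Adjacent (xs 0) w} \ Set.range fun i : Fin k => xs i.succ).encard < d := by
  induction d generalizing k with
  | zero => simp [fewNeighbours, BoundedFormula.Realize]
  | succ d ih =>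
    have range_snoc (w : M) : (Set.range fun i : Fin (k + 1) =>
        (Fin.snoc xs w : Fin (k + 2) → M) i.succ) =
          (Set.range fun i : Fin k => xs i.succ) ∪ {w} := by
      ext u
      simp only [Set.mem_range, Fin.exists_fin_succ', Fin.succ_castSucc, Fin.snoc_castSucc,
        Fin.succ_last, Fin.snoc_last, Set.mem_union, Set.mem_singleton_iff, eq_comm]
    simp only [fewNeighbours, BoundedFormula.realize_all, BoundedFormula.realize_imp,
      realize_adjacentFormula, realize_foldr_imp, realize_neFormula, ih, range_snoc,
      encard_lt_add_one_iff, List.mem_finRange, true_imp_iff, Sum.elim_inr, Fin.snoc_last,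
      Fin.snoc_castSucc, ← Set.sdiff_sdiff, Set.mem_sdiff, Set.mem_range, not_exists, and_imp]
    rfl

theorem realize_noNeighbourOfDegree {i : α} {d : ℕ} :
    (noNeighbourOfDegree i d).Realize v ↔ ¬ HasNeighbourOfDegree d (v i) := by
  rw [noNeighbourOfDegree, Formula.Realize, BoundedFormula.realize_all, HasNeighbourOfDegree,
    not_exists]
  refine forall_congr' fun y => ?_
  simp only [BoundedFormula.realize_imp, realize_adjacentFormula, realize_fewNeighbours,
    Set.range_eq_empty, Set.sdiff_empty, Sum.elim_inl, Sum.elim_inr, Nat.cast_add_one,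
    ENat.lt_add_one_iff (ENat.natCast_ne_top d), not_and]
  exact imp_congr_right fun _ => ⟨fun h he => (h he.le).ne he, fun h hle => hle.lt_of_ne h⟩

theorem SameType.hasNeighbourOfDegree_iff {N : Type} [Language.graph.Structure N] {n : ℕ}
    {a : Fin n → M} {b : Fin n → N} (h : SameType (L := Language.graph) a b) (i : Fin n) (d : ℕ) :
    HasNeighbourOfDegree d (a i) ↔ HasNeighbourOfDegree d (b i) :=
  not_iff_not.1 (by simpa only [realize_noNeighbourOfDegree] using h (noNeighbourOfDegree i d))

end Semantics

section Codes

/-- The tokens of `fewNeighbours (d + 1) k` up to those of `fewNeighbours d (k + 1)`. -/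
def neighbourTokens (k : ℕ) : List ℕ :=
  [7, 3, 25, 4 * (k + 2) + 3, variableToken (k + 2) 1, variableToken (k + 2) (2 * (k + 1) + 1)] ++
    (List.range k).flatMap fun i => [3, 3, variableToken (k + 2) (2 * (i + 1) + 1),
      variableToken (k + 2) (2 * (k + 1) + 1), 4 * (k + 2) + 11]

/-- The tokens of `fewNeighbours d k`. -/
def fewNeighboursTokens (d k : ℕ) : List ℕ :=
  (List.range d).flatMap (fun i => neighbourTokens (k + i)) ++ [4 * (k + d + 1) + 11]

/-- The tokens of `noNeighbourOfDegree i d`. -/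
def noNeighbourOfDegreeTokens (i d : ℕ) : List ℕ :=
  [7, 3, 25, 7, variableToken 1 (2 * i), variableToken 1 1, 3] ++
    (fewNeighboursTokens (d + 1) 0 ++ fewNeighboursTokens d 0)

variable [Encodable α]

theorem tokens_foldr_imp {ι : Type} {k : ℕ} (f : ι → Language.graph.BoundedFormula α k)
    (φ : Language.graph.BoundedFormula α k) (l : List ι) :
    tokens (l.foldr (fun i => (f i).imp) φ) =
      (l.flatMap fun i => 3 :: tokens (f i)) ++ tokens φ := by
  induction l with
  | nil => rfl
  | cons i l ih => simp [tokens_imp, ih]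

theorem fewNeighboursTokens_succ (d k : ℕ) :
    fewNeighboursTokens (d + 1) k = neighbourTokens k ++ fewNeighboursTokens d (k + 1) := by
  rw [fewNeighboursTokens, fewNeighboursTokens, List.range_succ_eq_map, List.flatMap_cons,
    List.flatMap_map, List.append_assoc]
  simp only [Nat.add_zero, Nat.succ_eq_add_one, Nat.add_right_comm, Nat.add_assoc,
    Nat.add_comm 1]

theorem tokens_fewNeighbours (d k : ℕ) :
    tokens (fewNeighbours d k : Language.graph.BoundedFormula α (k + 1)) =
      fewNeighboursTokens d k := by
  induction d generalizing k with
  | zero => simp [fewNeighbours, fewNeighboursTokens, tokens_falsum]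
  | succ d ih =>
    rw [fewNeighboursTokens_succ, neighbourTokens, ← List.map_coe_finRange_eq_range,
      List.flatMap_map]
    simp only [fewNeighbours, adjacentFormula, neFormula, tokens_all, tokens_imp,
      tokens_foldr_imp, tokens_rel, tokens_equal, tokens_falsum, ih, List.cons_append,
      List.nil_append]
    rfl

theorem tokens_noNeighbourOfDegree (i d : ℕ) :
    tokens (noNeighbourOfDegree i d) = noNeighbourOfDegreeTokens i d := by
  simp only [noNeighbourOfDegree, adjacentFormula, tokens_all, tokens_imp, tokens_rel,
    tokens_fewNeighbours, noNeighbourOfDegreeTokens, Encodable.encode_inl, Encodable.encode_nat,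
    List.cons_append, List.nil_append]
  rfl

theorem primrec_affine {γ : Type} [Primcodable γ] (a b : ℕ) {f : γ → ℕ} (hf : Primrec f) :
    Primrec fun c => a * f c + b :=
  Primrec.nat_add.comp (Primrec.nat_mul.comp (Primrec.const a) hf) (Primrec.const b)

theorem primrec_neighbourTokens : Primrec neighbourTokens := by
  have level {γ : Type} [Primcodable γ] {f : γ → ℕ} (hf : Primrec f) : Primrec fun c => f c + 2 :=
    Primrec.nat_add.comp hf (Primrec.const 2)
  have last {γ : Type} [Primcodable γ] {f : γ → ℕ} (hf : Primrec f) :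
      Primrec fun c => variableToken (f c + 2) (2 * (f c + 1) + 1) :=
    primrec_variableToken.comp (level hf) (primrec_affine 2 1 (Primrec.succ.comp hf))
  refine Primrec.list_append.comp ?_ (Primrec.list_flatMap Primrec.list_range ?_)
  · exact Primrec.list_cons.comp (Primrec.const 7) <| Primrec.list_cons.comp (Primrec.const 3) <|
      Primrec.list_cons.comp (Primrec.const 25) <|
      Primrec.list_cons.comp (primrec_affine 4 3 (level Primrec.id)) <|
      Primrec.list_cons.comp (primrec_variableToken.comp (level Primrec.id) (Primrec.const 1)) <|
      Primrec.list_cons.comp (last Primrec.id) (Primrec.const [])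
  · exact Primrec.list_cons.comp (Primrec.const 3) <| Primrec.list_cons.comp (Primrec.const 3) <|
      Primrec.list_cons.comp (primrec_variableToken.comp (level Primrec.fst)
        (primrec_affine 2 1 (Primrec.succ.comp Primrec.snd))) <|
      Primrec.list_cons.comp (last Primrec.fst) <|
      Primrec.list_cons.comp (primrec_affine 4 11 (level Primrec.fst)) (Primrec.const [])

theorem primrec_fewNeighboursTokens : Primrec₂ fewNeighboursTokens :=
  Primrec.list_append.comp
    (Primrec.list_flatMap (Primrec.list_range.comp Primrec.fst)
      (primrec_neighbourTokens.comp
        (Primrec.nat_add.comp (Primrec.snd.comp Primrec.fst) Primrec.snd)))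
    (Primrec.list_cons.comp
      (primrec_affine 4 11 (Primrec.succ.comp (Primrec.nat_add.comp Primrec.snd Primrec.fst)))
      (Primrec.const []))

theorem primrec_noNeighbourOfDegreeTokens : Primrec₂ noNeighbourOfDegreeTokens :=
  Primrec.list_append.comp
    (Primrec.list_append.comp (Primrec.const [7, 3, 25, 7]) <|
      Primrec.list_cons.comp (primrec_variableToken.comp (Primrec.const 1)
        (primrec_affine 2 0 Primrec.fst)) (Primrec.const [variableToken 1 1, 3]))
    (Primrec.list_append.comp
      (primrec_fewNeighboursTokens.comp (Primrec.succ.comp Primrec.snd) (Primrec.const 0))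
      (primrec_fewNeighboursTokens.comp Primrec.snd (Primrec.const 0)))

theorem fmlCode_injective [∀ k, Encodable (L.Functions k)] [∀ k, Encodable (L.Relations k)]
    {k : ℕ} : Function.Injective (fmlCode : L.BoundedFormula α k → ℕ) := fun φ ψ h => by
  have := BoundedFormula.encoding.encode_injective (a₁ := (⟨k, φ⟩ : Σ n, L.BoundedFormula α n))
    (a₂ := ⟨k, ψ⟩) (Encodable.encode_injective h)
  simpa using this

theorem DecidableModel.exists_computable_hasNeighbourOfDegree {M : Type}
    [Language.graph.Structure M] (hM : DecidableModel (L := Language.graph) M) :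
    ∃ (g : ℕ → M) (h : ℕ → ℕ → Bool), Function.Surjective g ∧ Computable₂ h ∧
      ∀ i d, h i d = true ↔ HasNeighbourOfDegree d (g i) := by
  obtain ⟨g, hg, hc⟩ := hM
  obtain ⟨c, hc, hcg⟩ := ComputablePred.computable_iff.1 hc
  refine ⟨g, fun i d => !c (Encodable.encode (noNeighbourOfDegreeTokens i d)), hg,
    Primrec.not.to_comp.comp
      (hc.comp (Computable.encode.comp primrec_noNeighbourOfDegreeTokens.to_comp)), fun i d => ?_⟩
  have hrealize : c (fmlCode (noNeighbourOfDegree i d)) = true ↔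
      (noNeighbourOfDegree i d).Realize g := by
    rw [← iff_of_eq (congrFun hcg _)]
    exact ⟨fun ⟨φ, hφ, h⟩ => fmlCode_injective hφ ▸ h, fun h => ⟨_, rfl, h⟩⟩
  beta_reduce
  rw [← tokens_noNeighbourOfDegree, ← fmlCode_eq_encode_tokens, Bool.not_eq_true',
    ← Bool.not_eq_true, hrealize, realize_noNeighbourOfDegree, not_not]

end Codes

end Degrees

section TreeDegree

variable {ι : Type} {A : Set (List ι)}

/-- The number of neighbours of a node in the graph that the tree of finite lists induces on `A`. -/
noncomputable def treeDegree (A : Set (List ι)) (u : List ι) : ℕ∞ :=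
  {v | v ∈ A ∧ TreeAdj u v}.encard

theorem hasNeighbourOfDegree_iff_treeDegree {u : A} {d : ℕ} :
    HasNeighbourOfDegree d u ↔ ∃ v ∈ A, TreeAdj (u : List ι) v ∧ treeDegree A v = d := by
  have degree_eq (v : A) : {w | Adjacent v w}.encard = treeDegree A v := by
    rw [treeDegree, ← Subtype.val_injective.encard_image]
    congr 1
    ext w
    exact ⟨fun ⟨w', hw', h⟩ => h ▸ ⟨w'.2, hw'⟩, fun ⟨hw, h⟩ => ⟨⟨w, hw⟩, h, rfl⟩⟩
  simp only [HasNeighbourOfDegree, degree_eq]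
  exact ⟨fun ⟨v, h⟩ => ⟨v, v.2, h⟩, fun ⟨v, hv, h⟩ => ⟨⟨v, hv⟩, h⟩⟩

theorem treeDegree_nil : treeDegree A [] = {n | [n] ∈ A}.encard := by
  have neighbours_eq : {v | v ∈ A ∧ TreeAdj [] v} = (fun n => [n]) '' {n | [n] ∈ A} := by
    ext v
    constructor
    · rintro ⟨hv, ⟨n, rfl⟩ | ⟨n, h⟩⟩
      · exact ⟨n, hv, rfl⟩
      · cases h
    · rintro ⟨n, hn, rfl⟩
      exact ⟨hn, Or.inl ⟨n, rfl⟩⟩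
  rw [treeDegree, neighbours_eq, List.singleton_injective.encard_image]

theorem treeDegree_cons (hA : IsSubtree A) {n : ι} {u : List ι} (h : n :: u ∈ A) :
    treeDegree A (n :: u) = {m | m :: n :: u ∈ A}.encard + 1 := by
  have neighbours_eq : {v | v ∈ A ∧ TreeAdj (n :: u) v} =
      insert u ((· :: n :: u) '' {m | m :: n :: u ∈ A}) := by
    ext v
    constructor
    · rintro ⟨hv, ⟨m, rfl⟩ | ⟨m, h⟩⟩
      · exact Or.inr ⟨m, hv, rfl⟩
      · exact Or.inl (List.cons.inj h).2.symm
    · rintro (rfl | ⟨m, hm, rfl⟩)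
      · exact ⟨hA h, Or.inr ⟨n, rfl⟩⟩
      · exact ⟨hm, Or.inl ⟨m, rfl⟩⟩
  have cons_injective : Function.Injective (· :: n :: u) := fun _ _ h => (List.cons.inj h).1
  have not_mem : u ∉ (· :: n :: u) '' {m | m :: n :: u ∈ A} := fun ⟨m, _, h⟩ => by
    simpa [Nat.add_assoc] using congrArg List.length h
  rw [treeDegree, neighbours_eq, Set.encard_insert_of_notMem not_mem, cons_injective.encard_image]

variable {H : Set ℕ} {d : ℕ → ℕ → ℕ∞} {j x : ℕ}

theorem treeDegree_spoke (h : [j, x] ∈ hubTree H d) :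
    treeDegree (hubTree H d) [j, x] = d x j + 1 := by
  rw [treeDegree_cons isSubtree_hubTree h, ← encard_setOf_natCast_lt (d x j)]
  congr 2
  ext l
  exact and_iff_right h.1

theorem treeDegree_leaf {l : ℕ} (h : [l, j, x] ∈ hubTree H d) :
    treeDegree (hubTree H d) [l, j, x] = 1 := by
  rw [treeDegree_cons isSubtree_hubTree h, Set.encard_eq_zero.2, zero_add]
  exact Set.eq_empty_of_forall_notMem fun _ h => h

end TreeDegree

section CodesPath

/-- The number of neighbours of the spoke that codes the value `b` of a sequence at `n`. -/
def bitDegree (n : ℕ) (b : Bool) : ℕ := 2 * n + b.toNat + 3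

theorem bitDegree_inj {n m : ℕ} {b c : Bool} : bitDegree n b = bitDegree m c ↔ n = m ∧ b = c := by
  cases b <;> cases c <;> simp [bitDegree] <;> omega

/-- The element `x` of a graph codes the binary sequence `p` by the degrees of its neighbours. -/
def CodesPath {M : Type} [Language.graph.Structure M] (x : M) (p : ℕ → Bool) : Prop :=
  ∀ n b, HasNeighbourOfDegree (bitDegree n b) x ↔ p n = b

variable {P : ℕ → ℕ → Bool} {o : ℕ∞}

theorem spokeSize_even_ne_zero (p : ℕ → Bool) (o : ℕ∞) (n : ℕ) : spokeSize p o (2 * n) ≠ 0 := by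
  rw [spokeSize_even]
  exact Nat.cast_ne_zero.2 (Nat.succ_ne_zero _)

theorem isSubtree_pathTree : IsSubtree (pathTree P o) := isSubtree_hubTree

/-- The `x`-th hub of a path tree. -/
def hubNode (P : ℕ → ℕ → Bool) (o : ℕ∞) (x : ℕ) : pathTree P o := ⟨[x], trivial⟩

theorem treeDegree_pathTree_nil : treeDegree (pathTree P o) [] = ⊤ := by
  rw [treeDegree_nil, ← (Set.infinite_univ (α := ℕ)).encard_eq]
  rfl

theorem treeDegree_pathTree_hub (x : ℕ) : treeDegree (pathTree P o) [x] = ⊤ := by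
  have infinite_spokes : {j | [j, x] ∈ pathTree P o}.Infinite :=
    Set.infinite_of_injective_forall_mem (f := fun n => 2 * n) (fun a b hab => by simpa using hab)
      fun n => ⟨trivial, spokeSize_even_ne_zero (P x) o n⟩
  rw [treeDegree_cons isSubtree_pathTree (hubNode P o x).2, infinite_spokes.encard_eq, top_add]

theorem hasNeighbourOfDegree_hub {x d : ℕ} :
    HasNeighbourOfDegree d (hubNode P o x) ↔
      ∃ j, spokeSize (P x) o j ≠ 0 ∧ spokeSize (P x) o j + 1 = (d : ℕ∞) := by
  rw [hasNeighbourOfDegree_iff_treeDegree]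
  constructor
  · rintro ⟨_, hv, ⟨j, rfl⟩ | ⟨_, h⟩, hd⟩
    · exact ⟨j, hv.2, (treeDegree_spoke hv).symm.trans hd⟩
    · obtain ⟨rfl, rfl⟩ := List.cons.inj h
      exact absurd (treeDegree_pathTree_nil.symm.trans hd) (ENat.top_ne_natCast d)
  · rintro ⟨j, hj, hd⟩
    have mem : [j, x] ∈ pathTree P o := ⟨trivial, hj⟩
    exact ⟨_, mem, Or.inl ⟨j, rfl⟩, (treeDegree_spoke mem).trans hd⟩

theorem codesPath_hub (ho : o = 0 ∨ o = ⊤) (x : ℕ) :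
    CodesPath (hubNode P o x) (P x) := by
  intro n b
  rw [hasNeighbourOfDegree_hub]
  constructor
  · rintro ⟨j, hj, hd⟩
    obtain ⟨m, rfl | rfl⟩ := Nat.even_or_odd' j
    · rw [spokeSize_even] at hd
      have heq : bitDegree m (P x m) = bitDegree n b := by exact_mod_cast hd
      obtain ⟨rfl, h⟩ := bitDegree_inj.1 heq
      exact h
    · rw [spokeSize_odd] at hj hd
      rw [ho.resolve_left hj, top_add] at hd
      exact absurd hd (ENat.top_ne_natCast _)
  · rintro rfl
    refine ⟨2 * n, spokeSize_even_ne_zero _ o n, ?_⟩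
    rw [spokeSize_even, bitDegree]
    exact_mod_cast rfl

theorem exists_eq_hub {u : pathTree P o} {d d' : ℕ} (hd : 2 ≤ d) (hne : d ≠ d')
    (h : HasNeighbourOfDegree d u) (h' : HasNeighbourOfDegree d' u) :
    ∃ x, u = hubNode P o x := by
  obtain ⟨u, hu⟩ := u
  obtain ⟨v, hv, huv, hdv⟩ := hasNeighbourOfDegree_iff_treeDegree.1 h
  obtain ⟨v', hv', huv', hdv'⟩ := hasNeighbourOfDegree_iff_treeDegree.1 h'
  match u, hu with
  | [x], _ => exact ⟨x, rfl⟩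
  | [], _ =>
    rcases huv with ⟨x, rfl⟩ | ⟨_, h⟩
    · exact absurd ((treeDegree_pathTree_hub x).symm.trans hdv) (ENat.top_ne_natCast d)
    · cases h
  | [j, x], _ =>
    rcases huv with ⟨l, rfl⟩ | ⟨_, h⟩
    · have : 1 = d := by exact_mod_cast (treeDegree_leaf hv).symm.trans hdv
      omega
    · obtain ⟨rfl, rfl⟩ := List.cons.inj h
      exact absurd ((treeDegree_pathTree_hub x).symm.trans hdv) (ENat.top_ne_natCast d)
  | [l, j, x], _ =>
    rcases huv with ⟨_, rfl⟩ | ⟨_, h⟩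
    · exact hv.elim
    rcases huv' with ⟨_, rfl⟩ | ⟨_, h'⟩
    · exact hv'.elim
    obtain rfl : v = v' := (List.cons.inj h).2.symm.trans (List.cons.inj h').2
    exact absurd (by exact_mod_cast hdv.symm.trans hdv') hne

theorem exists_codesPath (ho : o = 0 ∨ o = ⊤) {u : pathTree P o} {n m : ℕ} {b c : Bool}
    (hne : n ≠ m) (h : HasNeighbourOfDegree (bitDegree n b) u)
    (h' : HasNeighbourOfDegree (bitDegree m c) u) : ∃ x, CodesPath u (P x) := by
  obtain ⟨x, rfl⟩ := exists_eq_hub (by simp only [bitDegree]; omega)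
    (fun heq => hne (bitDegree_inj.1 heq).1) h h'
  exact ⟨x, codesPath_hub ho x⟩

end CodesPath

section Transfer

variable {M N : Type} [Language.graph.Structure M] [Language.graph.Structure N]

theorem exists_forall_hasNeighbourOfDegree_iff (h : M ≅[Language.graph] N) (D : Finset ℕ) :
    (∃ x : M, ∀ d ∈ D, HasNeighbourOfDegree d x) ↔
      ∃ x : N, ∀ d ∈ D, HasNeighbourOfDegree d x := by
  have := exists_realize_iff_of_elementarilyEquivalent h (α := Unit)
    (Formula.iInf fun d : D => (noNeighbourOfDegree () d).not)
  simpa only [Formula.realize_iInf, Formula.realize_not, realize_noNeighbourOfDegree, not_not,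
    Subtype.forall, (Equiv.funUnique Unit _).exists_congr_left, Equiv.funUnique_symm_apply,
    uniqueElim_const] using this

theorem hasNeighbourOfDegree_map_iff (f : M ↪ₑ[Language.graph] N) {d : ℕ} {x : M} :
    HasNeighbourOfDegree d (f x) ↔ HasNeighbourOfDegree d x := by
  have := f.map_formula (noNeighbourOfDegree () d) fun _ => x
  rwa [realize_noNeighbourOfDegree, realize_noNeighbourOfDegree, not_iff_not] at this

theorem sameType_of_elementarilyEquivalent {M N : Type} [L.Structure M] [L.Structure N]
    (h : M ≅[L] N) (a : Fin 0 → M) (b : Fin 0 → N) : SameType (L := L) a b := fun φ => by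
  have := exists_realize_iff_of_elementarilyEquivalent h φ
  rwa [Unique.exists_iff, Unique.exists_iff, Subsingleton.elim default a,
    Subsingleton.elim default b] at this

theorem IsSaturatedModel.exists_sameType {M N : Type} [L.Structure M] [L.Structure N]
    [Nonempty N] [Countable N] (hM : IsSaturatedModel (L.completeTheory N) M) (c : N) :
    ∃ u : M, SameType (L := L) (Fin.snoc Fin.elim0 u : Fin 1 → M) (Fin.snoc Fin.elim0 c) := by
  have : M ⊨ L.completeTheory N := hM.1
  have hNM : N ≅[L] M := elementarilyEquivalent_of_model_completeTheory N M
  exact hM.2 0 Fin.elim0 (Theory.ModelType.of _ N) ‹_› Fin.elim0 c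
    (sameType_of_elementarilyEquivalent hNM.symm _ _)

theorem IsSaturatedModel.exists_codesPath {P : ℕ → ℕ → Bool}
    (hM : IsSaturatedModel (Language.graph.completeTheory (pathTree P ⊤)) M) (x : ℕ) :
    ∃ u : M, CodesPath u (P x) := by
  obtain ⟨u, hu⟩ := hM.exists_sameType (hubNode P ⊤ x)
  refine ⟨u, fun n b => ?_⟩
  have := hu.hasNeighbourOfDegree_iff (Fin.last 0) (bitDegree n b)
  rw [Fin.snoc_last, Fin.snoc_last] at this
  exact this.trans (codesPath_hub (Or.inr rfl) x n b)

end Transfer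

section DecidableModel

theorem CodesPath.eq_of_iff {M : Type} [Language.graph.Structure M] {x : M} {p q : ℕ → Bool}
    (hp : CodesPath x p) (hq : ∀ n, q n = true ↔ HasNeighbourOfDegree (bitDegree n true) x) :
    q = p :=
  funext fun n => Bool.eq_iff_iff.2 ((hq n).trans (hp n true))

theorem DecidableModel.exists_computable_hasNeighbourOfDegree_bitDegree {M : Type}
    [Language.graph.Structure M] (hM : DecidableModel (L := Language.graph) M) :
    ∃ (g : ℕ → M) (c : Bool → ℕ → ℕ → Bool), Function.Surjective g ∧ (∀ b, Computable₂ (c b)) ∧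
      ∀ b i n, c b i n = true ↔ HasNeighbourOfDegree (bitDegree n b) (g i) := by
  obtain ⟨g, h, hg, hh, hgh⟩ := hM.exists_computable_hasNeighbourOfDegree
  refine ⟨g, fun b i n => h i (bitDegree n b), hg, fun b => hh.comp Computable.fst ?_,
    fun b i n => hgh i (bitDegree n b)⟩
  exact (primrec_affine 2 (b.toNat + 3) Primrec.snd).to_comp

end DecidableModel

section PrimeModel

theorem exists_computable_of_forall_exists {q : ℕ → ℕ → Bool} (hq : Computable₂ q)
    (h : ∀ e, ∃ i, q e i = true) : ∃ f : ℕ → ℕ, Computable f ∧ ∀ e, q e (f e) = true := by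
  have search (e : ℕ) : ∃ i, i ∈ Nat.rfind fun i => (Part.some (q e i) : Part Bool) := by
    obtain ⟨i, hi⟩ := h e
    obtain ⟨j, hj, -⟩ := Nat.rfind_min' hi
    exact ⟨j, hj⟩
  choose f hf using search
  have hpart : Partrec fun e => Nat.rfind fun i => (Part.some (q e i) : Part Bool) :=
    Partrec.rfind (p := fun e i => (Part.some (q e i) : Part Bool)) hq
  exact ⟨f, hpart.of_eq fun e => Part.eq_some_iff.2 (hf e),
    fun e => (Part.mem_some_iff.1 (Nat.rfind_spec (hf e))).symm⟩

theorem exists_computable_hasFirstOne_iff {c : ℕ → ℕ → Bool} (hc : Computable₂ c) :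
    ∃ q : ℕ → ℕ → Bool, Computable₂ q ∧ ∀ e i, q e i = true ↔ HasFirstOne (c i) e := by
  let zeros (e i : ℕ) : Bool := e.rec true fun k b => b && !c i k
  have hzeros : Computable₂ zeros :=
    Computable.nat_rec (h := fun (a : ℕ × ℕ) (y : ℕ × Bool) => y.2 && !c a.2 y.1) Computable.fst
      (Computable.const true) (Primrec.and.to_comp.comp (Computable.snd.comp Computable.snd)
        (Primrec.not.to_comp.comp
          (hc.comp (Computable.snd.comp Computable.fst) (Computable.fst.comp Computable.snd))))
  have zeros_iff (e i : ℕ) : zeros e i = true ↔ ∀ k < e, c i k = false := by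
    induction e with
    | zero => simp [zeros]
    | succ e ih =>
      rw [Nat.forall_lt_succ_right, ← ih, ← Bool.not_eq_true', ← Bool.and_eq_true]
  refine ⟨fun e i => c i e && zeros e i, Primrec.and.to_comp.comp
    (hc.comp Computable.snd Computable.fst) hzeros, fun e i => ?_⟩
  rw [Bool.and_eq_true, zeros_iff, HasFirstOne]

variable {P : ℕ → ℕ → Bool} {M : Type} [Language.graph.Structure M]

theorem exists_codesPath_of_elementaryEmbedding (f : M ↪ₑ[Language.graph] pathTree P 0)
    {u : M} {n m : ℕ} {b c : Bool} (hne : n ≠ m) (h : HasNeighbourOfDegree (bitDegree n b) u)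
    (h' : HasNeighbourOfDegree (bitDegree m c) u) : ∃ x, CodesPath u (P x) := by
  obtain ⟨x, hx⟩ := exists_codesPath (Or.inl rfl) hne ((hasNeighbourOfDegree_map_iff f).2 h)
    ((hasNeighbourOfDegree_map_iff f).2 h')
  exact ⟨x, fun k d => (hasNeighbourOfDegree_map_iff f).symm.trans (hx k d)⟩

theorem exists_codesPath_initSeg_eq (f : M ↪ₑ[Language.graph] pathTree P 0) (x n : ℕ) :
    ∃ (u : M) (y : ℕ), CodesPath u (P y) ∧ initSeg (P y) n = initSeg (P x) n := by
  obtain ⟨u, hu⟩ := (exists_forall_hasNeighbourOfDegree_iff f.elementarilyEquivalent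
    ((Finset.range (n + 2)).image fun k => bitDegree k (P x k))).2
    ⟨hubNode P 0 x, Finset.forall_mem_image.2 fun k _ =>
      (codesPath_hub (Or.inl rfl) x k _).2 rfl⟩
  replace hu (k : ℕ) (hk : k < n + 2) : HasNeighbourOfDegree (bitDegree k (P x k)) u :=
    hu _ (Finset.mem_image_of_mem _ (Finset.mem_range.2 hk))
  obtain ⟨y, hy⟩ :=
    exists_codesPath_of_elementaryEmbedding f zero_ne_one (hu 0 (by omega)) (hu 1 (by omega))
  exact ⟨u, y, hy, initSeg_eq_initSeg_iff.2 fun k hk => (hy k _).1 (hu k (by omega))⟩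

theorem exists_codesPath_hasFirstOne (hP : Enumerates P (IsIsolatedPath Splits))
    (f : M ↪ₑ[Language.graph] pathTree P 0) (e : ℕ) :
    ∃ (u : M) (y : ℕ), CodesPath u (P y) ∧ HasFirstOne (P y) e := by
  have hp : IsPath Splits (branchOff (fun _ => false) e true) :=
    isPath_branchOff (IsPath.zero Splits) fun _ =>
      splits_initSeg_of_forall_eq_false fun _ _ => rfl
  obtain ⟨p, hp, hpe⟩ := hp.exists_isIsolatedPath (e + 1)
  obtain ⟨x, rfl⟩ := (hP.2 p hp).nonempty
  obtain ⟨u, y, hu, hye⟩ := exists_codesPath_initSeg_eq f x (e + 1)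
  have agree := initSeg_eq_initSeg_iff.1 (hye.trans hpe)
  refine ⟨u, y, hu, ?_, fun k hk => ?_⟩
  · rw [agree e e.lt_succ_self, branchOff_self]
  · rw [agree k (hk.trans e.lt_succ_self), branchOff_of_lt _ _ hk]

theorem not_decidableModel_of_elementaryEmbedding (hP : Enumerates P (IsIsolatedPath Splits))
    (f : M ↪ₑ[Language.graph] pathTree P 0) : ¬ DecidableModel (L := Language.graph) M := by
  intro hM
  obtain ⟨g, c, hg, hc, hgc⟩ := hM.exists_computable_hasNeighbourOfDegree_bitDegree
  obtain ⟨first, hfirst, first_iff⟩ := exists_computable_hasFirstOne_iff (hc true)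
  -- An element with neighbours of degrees `bitDegree e true` and `bitDegree (e + 1) b` is a hub.
  let isHub (e i : ℕ) : Bool := c false i (e + 1) || c true i (e + 1)
  have hisHub (b : Bool) : Computable₂ fun e i => c b i (e + 1) :=
    (hc b).comp Computable.snd (Computable.succ.comp Computable.fst)
  obtain ⟨idx, hidx, spec⟩ := exists_computable_of_forall_exists
    (q := fun e i => first e i && isHub e i)
    (Primrec.and.to_comp.comp hfirst (Primrec.or.to_comp.comp (hisHub false) (hisHub true)))
    fun e => by
      obtain ⟨u, y, hu, hy⟩ := exists_codesPath_hasFirstOne hP f e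
      obtain ⟨i, rfl⟩ := hg u
      refine ⟨i, Bool.and_eq_true_iff.2 ⟨(first_iff e i).2 (hu.eq_of_iff (hgc true i) ▸ hy), ?_⟩⟩
      have := (hgc (P y (e + 1)) i (e + 1)).2 ((hu _ _).2 rfl)
      cases hb : P y (e + 1) <;> simp_all [isHub]
  simp only [Bool.and_eq_true, first_iff, isHub, Bool.or_eq_true, hgc] at spec
  refine not_exists_computable_selector_isIsolatedPath ⟨fun e => c true (idx e),
    (hc true).comp (hidx.comp Computable.fst) Computable.snd, fun e => ⟨?_, (spec e).1⟩⟩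
  change IsIsolatedPath Splits (c true (idx e))
  have he := (hgc true (idx e) e).1 (spec e).1.1
  obtain ⟨x, hx⟩ : ∃ x, CodesPath (g (idx e)) (P x) := (spec e).2.elim
    (exists_codesPath_of_elementaryEmbedding f e.lt_succ_self.ne he)
    (exists_codesPath_of_elementaryEmbedding f e.lt_succ_self.ne he)
  exact hx.eq_of_iff (hgc true (idx e)) ▸ hP.1 x

end PrimeModel

section SaturatedModel

theorem not_decidableModel_of_isSaturatedModel {P : ℕ → ℕ → Bool} {M : Type}
    [Language.graph.Structure M] (hP : Enumerates P (IsPath Splits))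
    (hM : IsSaturatedModel (Language.graph.completeTheory (pathTree P ⊤)) M) :
    ¬ DecidableModel (L := Language.graph) M := by
  intro hdec
  obtain ⟨g, c, hg, hc, hgc⟩ := hdec.exists_computable_hasNeighbourOfDegree_bitDegree
  refine not_exists_computable_enumeration_isPath ⟨c true, hc true, fun p hp => ?_⟩
  obtain ⟨x, rfl⟩ := (hP.2 p hp).nonempty
  obtain ⟨u, hu⟩ := hM.exists_codesPath x
  obtain ⟨i, rfl⟩ := hg u
  exact ⟨i, hu.eq_of_iff (hgc true i)⟩

end SaturatedModel

/-- There is a decidable small theory of graphs, all of whose types are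
decidable, whose prime model is not decidable; consequently its saturated model is not
decidable either. -/
theorem decidable_graph_theory_with_undecidable_prime_model :
    ∃ T : FirstOrder.Language.graph.Theory,
      FirstOrder.Language.Theory.simpleGraph ⊆ T ∧ T.IsComplete ∧ IsSmall T ∧
      DecidableTheory T ∧
      (∀ (n : ℕ) (p : Set (FirstOrder.Language.graph.Formula (Fin n))),
        IsTypeOf T p → DecidableType p) ∧
      (∀ M : Mdl T, Countable M → IsPrimeModel T M →
        ¬ DecidableModel (L := FirstOrder.Language.graph) M) ∧
      (∀ M : Mdl T, Countable M → IsSaturatedModel T M →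
        ¬ DecidableModel (L := FirstOrder.Language.graph) M) := by
  obtain ⟨P, hP⟩ := exists_enumerates countable_setOf_isPath ⟨_, IsPath.zero Splits⟩
  obtain ⟨p, hp, -⟩ := (IsPath.zero Splits).exists_isIsolatedPath 0
  obtain ⟨P', hP'⟩ : ∃ P', Enumerates P' (IsIsolatedPath Splits) :=
    exists_enumerates (countable_setOf_isPath.mono fun _ hp => hp.1) ⟨p, hp⟩
  have hPc (x : ℕ) : Computable (P x) := (hP.1 x).computable
  have equiv : pathTree P ⊤ ≅[Language.graph] pathTree P' 0 :=
    elementarilyEquivalent_hubTree hP.codesTree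
      (hP'.codesTree_of_isIsolatedPath fun _ => IsPath.exists_isIsolatedPath)
  have : pathTree P' 0 ⊨ Language.graph.completeTheory (pathTree P ⊤) := equiv.theory_model
  refine ⟨Language.graph.completeTheory (pathTree P ⊤),
    simpleGraph_subset_completeTheory_treeGraph _, completeTheory.isComplete _ _, hP.isSmall,
    hP.decidableTheory primrecPred_splits hPc,
    fun _ _ hp => hP.decidableType primrecPred_splits hPc hp,
    fun M _ hM => ?_, fun M _ hM => not_decidableModel_of_isSaturatedModel hP hM⟩
  obtain ⟨f⟩ := hM.2 (.of _ (pathTree P' 0)) (inferInstanceAs (Countable (pathTree P' 0)))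
  exact not_decidableModel_of_elementaryEmbedding hP' f

end PaperAL
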